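/- arXiv:1410.1168 — 4 statements merged into one kernel-verified Lean document; each statement's English description precedes it below -/
import Mathlib

section
/- Let φ and ψ be automorphisms of the unit ball B_N. Then the commutator [C_ψ*, C_φ] is compact on the Dirichlet space D(B_N) if and only if φ∘ψ = ψ∘φ. -/
open Filter MeasureTheory Metric Set
open scoped ComplexInnerProductSpace Topology

noncomputable section

/-- Borel measurable structure on `ℂ^N`. -/
instance (N : ℕ) : MeasurableSpace (EuclideanSpace ℂ (Fin N)) := borel _

instance (N : ℕ) : BorelSpace (EuclideanSpace ℂ (Fin N)) := ⟨rfl⟩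

/-- The open unit ball `B_N` of `ℂ^N`. -/
abbrev Ball (N : ℕ) : Set (EuclideanSpace ℂ (Fin N)) := Metric.ball 0 1

/-- An abstract presentation of the Dirichlet space `𝒟(B_N)`: the reproducing-kernel Hilbert
space of holomorphic functions on `B_N` with kernel `K_w(z) = 1 + log (1/(1 - ⟨z,w⟩))`.
Injectivity of evaluation forces the kernels to be total, so such a structure determines the
space uniquely up to canonical unitary equivalence. -/
structure DirichletSpace (N : ℕ) where
  (H : Type)
  [grp : NormedAddCommGroup H]
  [ips : InnerProductSpace ℂ H]
  [cpl : CompleteSpace H]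
  eval : H → EuclideanSpace ℂ (Fin N) → ℂ
  eval_add : ∀ f g : H, ∀ z, eval (f + g) z = eval f z + eval g z
  eval_smul : ∀ (c : ℂ) (f : H) (z : EuclideanSpace ℂ (Fin N)), eval (c • f) z = c * eval f z
  holo : ∀ f : H, DifferentiableOn ℂ (eval f) (Ball N)
  eval_injective : ∀ f g : H, (∀ z ∈ Ball N, eval f z = eval g z) → f = g
  kernel : EuclideanSpace ℂ (Fin N) → H
  eval_kernel : ∀ w ∈ Ball N, ∀ z ∈ Ball N,
    eval (kernel w) z = 1 + Complex.log (1 - ⟪w, z⟫)⁻¹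
  reproducing : ∀ (f : H), ∀ w ∈ Ball N, ⟪kernel w, f⟫ = eval f w

attribute [instance] DirichletSpace.grp DirichletSpace.ips DirichletSpace.cpl

/-- `T` is the composition operator `C_φ : f ↦ f ∘ φ` on `S`. -/
def DirichletSpace.IsCompositionOperator {N : ℕ} (S : DirichletSpace N)
    (φ : EuclideanSpace ℂ (Fin N) → EuclideanSpace ℂ (Fin N)) (T : S.H →L[ℂ] S.H) : Prop :=
  ∀ f : S.H, ∀ z ∈ Ball N, S.eval (T f) z = S.eval f (φ z)

/-- `φ` is an automorphism (biholomorphic self-map) of the unit ball `B_N`. -/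
def IsBallAutomorphism (N : ℕ) (φ : EuclideanSpace ℂ (Fin N) → EuclideanSpace ℂ (Fin N)) : Prop :=
  DifferentiableOn ℂ φ (Ball N) ∧ Set.MapsTo φ (Ball N) (Ball N) ∧
    ∃ ψ : EuclideanSpace ℂ (Fin N) → EuclideanSpace ℂ (Fin N),
      DifferentiableOn ℂ ψ (Ball N) ∧ Set.MapsTo ψ (Ball N) (Ball N) ∧
      (∀ z ∈ Ball N, ψ (φ z) = z) ∧ (∀ z ∈ Ball N, φ (ψ z) = z)

/-- An automorphism of the ball fixing the origin preserves inner products. -/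
lemma inner_map_of_fix_zero {N : ℕ} {g : EuclideanSpace ℂ (Fin N) → EuclideanSpace ℂ (Fin N)}
    (hg : IsBallAutomorphism N g) (h0 : g 0 = 0) :
    ∀ z ∈ Ball N, ∀ w ∈ Ball N, ⟪g z, g w⟫ = ⟪z, w⟫ := by
  obtain ⟨hd, hm, k, hkd, hkm, hkg, hgk⟩ := hg
  have hz0 : (0 : EuclideanSpace ℂ (Fin N)) ∈ Ball N := by simp
  have hk0 : k 0 = 0 := by
    have := hkg 0 hz0
    rwa [h0] at this
  have hnorm : ∀ z ∈ Ball N, ‖g z‖ = ‖z‖ := by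
    intro z hz
    apply le_antisymm
    · exact Complex.norm_le_norm_of_mapsTo_ball hd (hm.mono_right ball_subset_closedBall) h0
        (by simpa using hz)
    · have := Complex.norm_le_norm_of_mapsTo_ball hkd (hkm.mono_right ball_subset_closedBall) hk0
        (z := g z) (by simpa using hm hz)
      rwa [hkg z hz] at this
  have hdiff0 : DifferentiableAt ℂ g 0 := hd.differentiableAt (isOpen_ball.mem_nhds hz0)
  have hlin : ∀ z ∈ Ball N, g z = fderiv ℂ g 0 z := by
    intro z hz
    by_cases hzz : z = 0
    · subst hzz; simp [h0]
    have hzpos : 0 < ‖z‖ := norm_pos_iff.2 hzz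
    have hzlt : ‖z‖ < 1 := by simpa using hz
    set f : ℂ → EuclideanSpace ℂ (Fin N) := fun t => g (t • z) with hf
    have hmap : MapsTo (fun t : ℂ => t • z) (ball 0 (1 / ‖z‖)) (Ball N) := by
      intro t ht
      rw [mem_ball_zero_iff] at ht ⊢
      rw [norm_smul]
      rwa [lt_div_iff₀ hzpos] at ht
    have hf0 : f 0 = 0 := by simp [hf, h0]
    have hfd : DifferentiableOn ℂ f (ball 0 (1 / ‖z‖)) :=
      hd.comp (by fun_prop) hmap
    have hfm : MapsTo f (ball 0 (1 / ‖z‖)) (closedBall (f 0) 1) := by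
      rw [hf0]
      exact (hm.mono_right ball_subset_closedBall).comp hmap
    have h1 : (1 : ℂ) ∈ ball (0 : ℂ) (1 / ‖z‖) := by
      rw [mem_ball_zero_iff, norm_one, lt_div_iff₀ hzpos]; simpa using hzlt
    have hds : dslope f 0 1 = g z := by
      rw [dslope_of_ne _ one_ne_zero, slope_def_module]
      simp [hf, h0]
    have haff := Complex.affine_of_mapsTo_ball_of_norm_dslope_eq_div hfd hfm h1
      (by rw [hds, hnorm z hz]; simp)
    rw [hds] at haff
    have hR : (0 : ℝ) < 1 / ‖z‖ := by positivity
    have hev : f =ᶠ[𝓝 0] fun t => t • g z := by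
      filter_upwards [ball_mem_nhds (0 : ℂ) hR] with t ht
      have := haff ht
      simpa [hf0] using this
    have hD1 : HasDerivAt f (g z) 0 := by
      have : HasDerivAt (fun t : ℂ => t • g z) ((1 : ℂ) • g z) 0 :=
        (hasDerivAt_id (0 : ℂ)).smul_const (g z)
      rw [one_smul] at this
      exact this.congr_of_eventuallyEq hev
    have hD2 : HasDerivAt f (fderiv ℂ g 0 z) 0 := by
      have h2 : HasDerivAt (fun t : ℂ => t • z) ((1 : ℂ) • z) 0 :=
        (hasDerivAt_id (0 : ℂ)).smul_const z
      rw [one_smul] at h2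
      have h3 : HasFDerivAt g (fderiv ℂ g 0) ((0 : ℂ) • z) := by
        rw [zero_smul]; exact hdiff0.hasFDerivAt
      exact h3.comp_hasDerivAt (0 : ℂ) h2
    exact hD1.unique hD2
  have hiso : ∀ z, ‖(fderiv ℂ g 0).toLinearMap z‖ = ‖z‖ := by
    intro z
    by_cases hzz : z = 0
    · subst hzz; simp
    have hzpos : 0 < ‖z‖ := norm_pos_iff.2 hzz
    have hmem : ((1 / (2 * ‖z‖) : ℝ) : ℂ) • z ∈ Ball N := by
      rw [mem_ball_zero_iff, norm_smul, Complex.norm_real, Real.norm_of_nonneg (by positivity)]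
      field_simp; norm_num
    have h := hnorm _ hmem
    rw [hlin _ hmem, map_smul, norm_smul, norm_smul, Complex.norm_real,
      Real.norm_of_nonneg (by positivity)] at h
    exact mul_left_cancel₀ (by positivity) h
  intro z hz w hw
  rw [hlin z hz, hlin w hw]
  exact LinearIsometry.inner_map_map ⟨(fderiv ℂ g 0).toLinearMap, hiso⟩ z w

/-- The Möbius involution of the ball exchanging `0` and `a`. -/
def mob {N : ℕ} (a z : EuclideanSpace ℂ (Fin N)) : EuclideanSpace ℂ (Fin N) :=
  (1 - ⟪a, z⟫)⁻¹ • (a - ((√(1 - ‖a‖ ^ 2) : ℝ) : ℂ) • z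
    - (⟪a, z⟫ / (1 + ((√(1 - ‖a‖ ^ 2) : ℝ) : ℂ))) • a)

lemma inner_norm_lt {N : ℕ} {a z : EuclideanSpace ℂ (Fin N)} (ha : a ∈ Ball N) (hz : z ∈ Ball N) :
    ‖⟪a, z⟫‖ < 1 := by
  rw [mem_ball_zero_iff] at ha hz
  have h1 := norm_inner_le_norm (𝕜 := ℂ) a z
  nlinarith [norm_nonneg a, norm_nonneg z]

lemma re_one_sub_pos {N : ℕ} {a z : EuclideanSpace ℂ (Fin N)} (ha : a ∈ Ball N) (hz : z ∈ Ball N) :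
    0 < (1 - ⟪a, z⟫).re := by
  have h1 := inner_norm_lt ha hz
  have h2 := Complex.re_le_norm ⟪a, z⟫
  simp only [Complex.sub_re, Complex.one_re]
  linarith

lemma one_sub_ne {N : ℕ} {a z : EuclideanSpace ℂ (Fin N)} (ha : a ∈ Ball N) (hz : z ∈ Ball N) :
    1 - ⟪a, z⟫ ≠ 0 := by
  intro h
  have := re_one_sub_pos ha hz
  rw [h] at this
  simp at this

lemma mob_sqrt {N : ℕ} {a : EuclideanSpace ℂ (Fin N)} (ha : a ∈ Ball N) :
    ∃ s : ℝ, 0 < s ∧ √(1 - ‖a‖ ^ 2) = s ∧ ⟪a, a⟫ = 1 - (s : ℂ) ^ 2 := by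
  rw [mem_ball_zero_iff] at ha
  have h : 0 < 1 - ‖a‖ ^ 2 := by nlinarith [norm_nonneg a]
  refine ⟨_, Real.sqrt_pos.2 h, rfl, ?_⟩
  rw [inner_self_eq_norm_sq_to_K, ← Complex.ofReal_pow, Real.sq_sqrt h.le]
  push_cast
  simp

lemma mob_inner {N : ℕ} {a : EuclideanSpace ℂ (Fin N)} (ha : a ∈ Ball N) :
    ∀ z ∈ Ball N, ∀ w ∈ Ball N,
      (1 - ⟪mob a w, mob a z⟫) * ((1 - ⟪w, a⟫) * (1 - ⟪a, z⟫)) =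
        ((1 - ‖a‖ ^ 2 : ℝ) : ℂ) * (1 - ⟪w, z⟫) := by
  intro z hz w hw
  obtain ⟨s, hs, hss, haa⟩ := mob_sqrt ha
  have hc : ((1 - ‖a‖ ^ 2 : ℝ) : ℂ) = (s : ℂ) ^ 2 := by
    have := inner_self_eq_norm_sq_to_K (𝕜 := ℂ) a
    rw [haa] at this
    push_cast
    have h2 : ((‖a‖ : ℂ)) ^ 2 = 1 - (s : ℂ) ^ 2 := by rw [this]; simp
    rw [h2]; ring
  have hz1 := one_sub_ne ha hz
  have hw1 := one_sub_ne hw ha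
  have hs1 : (1 : ℂ) + s ≠ 0 := by
    intro h
    have := congrArg Complex.re h
    simp at this
    linarith
  have hcw : (starRingEnd ℂ) ⟪a, w⟫ = ⟪w, a⟫ := inner_conj_symm _ _
  rw [hc]
  simp only [mob, hss, inner_smul_left, inner_smul_right, inner_sub_left, inner_sub_right, haa,
    map_inv₀, map_sub, map_one, map_div₀, map_add, Complex.conj_ofReal, hcw]
  field_simp
  ring

lemma mob_mapsTo {N : ℕ} {a : EuclideanSpace ℂ (Fin N)} (ha : a ∈ Ball N) :
    MapsTo (mob a) (Ball N) (Ball N) := by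
  intro z hz
  have h := mob_inner ha z hz z hz
  have h1 : (1 - ⟪z, a⟫) * (1 - ⟪a, z⟫) = ((‖1 - ⟪a, z⟫‖ ^ 2 : ℝ) : ℂ) := by
    have : (1 - ⟪z, a⟫) = (starRingEnd ℂ) (1 - ⟪a, z⟫) := by
      rw [map_sub, map_one, inner_conj_symm]
    rw [this, mul_comm, Complex.mul_conj, Complex.normSq_eq_norm_sq]
  rw [h1, inner_self_eq_norm_sq_to_K, inner_self_eq_norm_sq_to_K] at h
  have h2 : (1 - ‖mob a z‖ ^ 2) * ‖1 - ⟪a, z⟫‖ ^ 2 = (1 - ‖a‖ ^ 2) * (1 - ‖z‖ ^ 2) := by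
    apply Complex.ofReal_injective
    push_cast
    push_cast at h
    simpa using h
  have h3 : 0 < ‖1 - ⟪a, z⟫‖ ^ 2 := by
    have := norm_pos_iff.2 (one_sub_ne ha hz); positivity
  rw [mem_ball_zero_iff] at ha hz ⊢
  have h4 : 0 < (1 - ‖a‖ ^ 2) * (1 - ‖z‖ ^ 2) := by
    apply mul_pos <;> nlinarith [norm_nonneg a, norm_nonneg z]
  rw [← h2] at h4
  have h5 := (pos_iff_pos_of_mul_pos h4).2 h3
  nlinarith [norm_nonneg (mob a z)]

lemma mob_mob {N : ℕ} {a : EuclideanSpace ℂ (Fin N)} (ha : a ∈ Ball N) :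
    ∀ z ∈ Ball N, mob a (mob a z) = z := by
  intro z hz
  obtain ⟨s, hs, hss, haa⟩ := mob_sqrt ha
  have hz1 := one_sub_ne ha hz
  have hs1 : (1 : ℂ) + s ≠ 0 := by
    intro h
    have := congrArg Complex.re h
    simp at this
    linarith
  have hs0 : (s : ℂ) ≠ 0 := by exact_mod_cast hs.ne'
  have h1 : ⟪a, mob a z⟫ = (1 - (s : ℂ) ^ 2 - ⟪a, z⟫) / (1 - ⟪a, z⟫) := by
    simp only [mob, hss, inner_smul_right, inner_sub_right, haa]
    field_simp
    ring
  have h2 : 1 - ⟪a, mob a z⟫ = (s : ℂ) ^ 2 / (1 - ⟪a, z⟫) := by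
    rw [h1]; field_simp; ring
  have h3 : mob a (mob a z) = (1 - ⟪a, mob a z⟫)⁻¹ • (a - (s : ℂ) • mob a z
    - (⟪a, mob a z⟫ / (1 + (s : ℂ))) • a) := by
    conv_lhs => rw [mob]
    rw [hss]
  rw [h3, h2, h1]
  simp only [mob, hss]
  match_scalars
  · field_simp
    ring
  · field_simp

lemma mob_diff {N : ℕ} {a : EuclideanSpace ℂ (Fin N)} (ha : a ∈ Ball N) :
    DifferentiableOn ℂ (mob a) (Ball N) := by
  have hi : Differentiable ℂ (fun z : EuclideanSpace ℂ (Fin N) => ⟪a, z⟫) :=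
    (innerSL ℂ a).differentiable
  unfold mob
  apply DifferentiableOn.fun_smul
  · apply DifferentiableOn.fun_inv
    · exact (hi.const_sub 1).differentiableOn
    · exact fun z hz => one_sub_ne ha hz
  · apply Differentiable.differentiableOn
    apply Differentiable.fun_sub
    · fun_prop
    · simp only [div_eq_mul_inv]
      exact (hi.mul_const _).smul_const a

lemma mob_zero {N : ℕ} (a : EuclideanSpace ℂ (Fin N)) : mob a 0 = a := by simp [mob]

/-- The key transformation formula for automorphisms of the ball. -/
lemma automorphism_inner {N : ℕ} {φ : EuclideanSpace ℂ (Fin N) → EuclideanSpace ℂ (Fin N)}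
    (hφ : IsBallAutomorphism N φ) :
    ∃ a ∈ Ball N, ∃ c : ℝ, 0 < c ∧ ∀ z ∈ Ball N, ∀ w ∈ Ball N,
      (1 - ⟪φ w, φ z⟫) * ((1 - ⟪w, a⟫) * (1 - ⟪a, z⟫)) = (c : ℂ) * (1 - ⟪w, z⟫) := by
  obtain ⟨hd, hm, k, hkd, hkm, hkφ, hφk⟩ := hφ
  have hz0 : (0 : EuclideanSpace ℂ (Fin N)) ∈ Ball N := by simp
  have ha : k 0 ∈ Ball N := hkm hz0
  set a := k 0 with hadef
  have hg : IsBallAutomorphism N (φ ∘ mob a) := by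
    refine ⟨hd.comp (mob_diff ha) (mob_mapsTo ha), hm.comp (mob_mapsTo ha), mob a ∘ k,
      (mob_diff ha).comp hkd hkm, (mob_mapsTo ha).comp hkm, ?_, ?_⟩
    · intro z hz
      simp only [Function.comp_apply]
      rw [hkφ _ (mob_mapsTo ha hz), mob_mob ha z hz]
    · intro z hz
      simp only [Function.comp_apply]
      rw [mob_mob ha _ (hkm hz), hφk z hz]
  have hg0 : (φ ∘ mob a) 0 = 0 := by
    simp only [Function.comp_apply, mob_zero]
    exact hφk 0 hz0
  have hin := inner_map_of_fix_zero hg hg0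
  refine ⟨a, ha, 1 - ‖a‖ ^ 2, ?_, ?_⟩
  · rw [mem_ball_zero_iff] at ha
    nlinarith [norm_nonneg a]
  · intro z hz w hw
    have h := hin (mob a w) (mob_mapsTo ha hw) (mob a z) (mob_mapsTo ha hz)
    simp only [Function.comp_apply, mob_mob ha z hz, mob_mob ha w hw] at h
    rw [h]
    exact mob_inner ha z hz w hw

lemma log_mul_aux {X Y Z W : ℂ} {c : ℝ} (hc : 0 < c) (hX : 0 < X.re) (hY : 0 < Y.re)
    (hZ : 0 < Z.re) (hW : 0 < W.re) (h : X * (Y * Z) = (c : ℂ) * W) :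
    Complex.log X = (Real.log c : ℂ) + Complex.log W - Complex.log Y - Complex.log Z := by
  have ne : ∀ {V : ℂ}, 0 < V.re → V ≠ 0 := by
    intro V hV h0; rw [h0] at hV; simp at hV
  have harg : ∀ {V : ℂ}, 0 < V.re → |(Complex.log V).im| < Real.pi / 2 := by
    intro V hV
    rw [Complex.log_im]
    exact Complex.abs_arg_lt_pi_div_two_iff.2 (Or.inl hV)
  have hc0 : (c : ℂ) ≠ 0 := by exact_mod_cast hc.ne'
  have hexp : Complex.exp (Complex.log X) =
      Complex.exp ((Real.log c : ℂ) + Complex.log W - Complex.log Y - Complex.log Z) := by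
    rw [Complex.exp_sub, Complex.exp_sub, Complex.exp_add, Complex.exp_log (ne hX),
      Complex.exp_log (ne hY), Complex.exp_log (ne hZ), Complex.exp_log (ne hW),
      ← Complex.ofReal_exp, Real.exp_log hc]
    have h1 := ne hY
    have h2 := ne hZ
    field_simp
    rw [← h]; ring
  obtain ⟨n, hn⟩ := Complex.exp_eq_exp_iff_exists_int.1 hexp
  have him := congrArg Complex.im hn
  have h1 := abs_lt.1 (harg hX)
  have h2 := abs_lt.1 (harg hY)
  have h3 := abs_lt.1 (harg hZ)
  have h4 := abs_lt.1 (harg hW)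
  have him2 : (Complex.log X).im = (Complex.log W).im - (Complex.log Y).im - (Complex.log Z).im
      + n * (2 * Real.pi) := by
    rw [him]; simp
  have hpi := Real.pi_pos
  have hn1 : (n : ℝ) < 1 := by
    by_contra hcon
    push Not at hcon
    nlinarith
  have hn2 : (-1 : ℝ) < n := by
    by_contra hcon
    push Not at hcon
    nlinarith
  have hn0 : n = 0 := by
    have a1 : n < 1 := by exact_mod_cast hn1
    have a2 : -1 < n := by exact_mod_cast hn2
    omega
  rw [hn, hn0]; simp

section Space

variable {N : ℕ} (S : DirichletSpace N)

lemma eval_kernel' {w z : EuclideanSpace ℂ (Fin N)} (hw : w ∈ Ball N) (hz : z ∈ Ball N) :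
    S.eval (S.kernel w) z = 1 - Complex.log (1 - ⟪w, z⟫) := by
  rw [S.eval_kernel w hw z hz, Complex.log_inv]
  · ring
  intro h
  have h1 := Complex.abs_arg_lt_pi_div_two_iff.2 (Or.inl (re_one_sub_pos hw hz))
  rw [h, abs_of_pos Real.pi_pos] at h1
  linarith [Real.pi_pos]

/-- The kernel functions are total. -/
lemma kernel_total (V : Submodule ℂ S.H) (hV : IsClosed (V : Set S.H))
    (h : ∀ w ∈ Ball N, S.kernel w ∈ V) : ∀ f, f ∈ V := by
  have hbot : Vᗮ = ⊥ := by
    rw [Submodule.eq_bot_iff]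
    intro f hf
    apply S.eval_injective
    intro z hz
    rw [← S.reproducing f z hz, ← S.reproducing 0 z hz, inner_zero_right]
    exact (Submodule.mem_orthogonal V f).1 hf _ (h z hz)
  have : IsComplete (V : Set S.H) := hV.isComplete
  have : CompleteSpace V := this.completeSpace_coe
  have htop : V = ⊤ := Submodule.orthogonal_eq_bot_iff.1 hbot
  intro f
  rw [htop]; trivial

variable {φ : EuclideanSpace ℂ (Fin N) → EuclideanSpace ℂ (Fin N)} {C : S.H →L[ℂ] S.H}

lemma adjoint_kernel (hm : MapsTo φ (Ball N) (Ball N)) (hC : S.IsCompositionOperator φ C)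
    {w : EuclideanSpace ℂ (Fin N)} (hw : w ∈ Ball N) :
    ContinuousLinearMap.adjoint C (S.kernel w) = S.kernel (φ w) := by
  apply ext_inner_right ℂ
  intro f
  rw [ContinuousLinearMap.adjoint_inner_left, S.reproducing _ _ hw, S.reproducing _ _ (hm hw),
    hC f w hw]

/-- `C C* - I` has finite rank. -/
lemma exists_finite (hφ : IsBallAutomorphism N φ) (hC : S.IsCompositionOperator φ C) :
    ∃ V : Submodule ℂ S.H, FiniteDimensional ℂ V ∧
      ∀ f, C (ContinuousLinearMap.adjoint C f) - f ∈ V := by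
  obtain ⟨a, ha, c, hc, hform⟩ := automorphism_inner hφ
  have hm := hφ.2.1
  have hz0 : (0 : EuclideanSpace ℂ (Fin N)) ∈ Ball N := by simp
  set V : Submodule ℂ S.H := Submodule.span ℂ {S.kernel 0, S.kernel a} with hVdef
  have hfin : FiniteDimensional ℂ V := FiniteDimensional.span_of_finite ℂ (by simp)
  refine ⟨V, hfin, ?_⟩
  have hcl : IsClosed (V : Set S.H) := V.closed_of_finiteDimensional
  let F : S.H →L[ℂ] S.H := C.comp (ContinuousLinearMap.adjoint C) - ContinuousLinearMap.id ℂ S.H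
  suffices h : ∀ f, f ∈ V.comap F.toLinearMap from fun f => h f
  apply kernel_total
  · exact hcl.preimage F.continuous
  intro w hw
  change C (ContinuousLinearMap.adjoint C (S.kernel w)) - S.kernel w ∈ V
  rw [adjoint_kernel S hm hC hw]
  have key : C (S.kernel (φ w)) = S.kernel w +
      ((1 - (Real.log c : ℂ) + Complex.log (1 - ⟪w, a⟫)) • S.kernel 0 + (-1 : ℂ) • S.kernel a) := by
    apply S.eval_injective
    intro z hz
    rw [hC _ z hz, S.eval_add, S.eval_add, S.eval_smul, S.eval_smul,
      eval_kernel' S (hm hw) (hm hz), eval_kernel' S hw hz, eval_kernel' S hz0 hz,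
      eval_kernel' S ha hz,
      log_mul_aux hc (re_one_sub_pos (hm hw) (hm hz)) (re_one_sub_pos hw ha)
        (re_one_sub_pos ha hz) (re_one_sub_pos hw hz) (hform z hz w hw)]
    simp
    ring
  rw [key, add_sub_cancel_left]
  apply V.add_mem
  · exact V.smul_mem _ (Submodule.subset_span (by simp))
  · exact V.smul_mem _ (Submodule.subset_span (by simp))

lemma norm_kernel_sq {w : EuclideanSpace ℂ (Fin N)} (hw : w ∈ Ball N) :
    ‖S.kernel w‖ ^ 2 = 1 - Real.log (1 - ‖w‖ ^ 2) := by
  have h := S.reproducing (S.kernel w) w hw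
  rw [eval_kernel' S hw hw, inner_self_eq_norm_sq_to_K, inner_self_eq_norm_sq_to_K] at h
  have hw' : ‖w‖ < 1 := by simpa using hw
  apply Complex.ofReal_injective
  have h1 : 0 ≤ 1 - ‖w‖ ^ 2 := by nlinarith [norm_nonneg w]
  push_cast [Complex.ofReal_log h1]
  simpa using h

end Space

lemma compact_of_finite {H : Type*} [NormedAddCommGroup H] [NormedSpace ℂ H] (F : H →L[ℂ] H)
    (V : Submodule ℂ H) [FiniteDimensional ℂ V] (h : ∀ f, F f ∈ V) : IsCompactOperator F := by
  have h1 : IsCompactOperator (F.codRestrict V h) := by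
    have : ProperSpace V := FiniteDimensional.proper ℂ V
    exact isCompactOperator_of_locallyCompactSpace_dom _
  have h2 := h1.clm_comp V.subtypeL
  exact h2

/-- A compact operator sends bounded weakly null sequences to norm null sequences, here in
a weak form sufficient for us. -/
lemma compact_weak {H : Type*} [NormedAddCommGroup H] [InnerProductSpace ℂ H] [CompleteSpace H]
    (B : H →L[ℂ] H) (hB : IsCompactOperator B) (k : ℕ → H) (hk : ∀ n, ‖k n‖ ≤ 1)
    (hw : ∀ f, Tendsto (fun n => ⟪f, k n⟫) atTop (𝓝 0)) :
    ∃ m : ℕ → ℕ, StrictMono m ∧ Tendsto (fun n => B (k (m n))) atTop (𝓝 0) := by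
  obtain ⟨K, hK, hsub⟩ := IsCompactOperator.image_closedBall_subset_compact (f := B.toLinearMap) hB 1
  have hmem : ∀ n, B (k n) ∈ K := fun n => hsub ⟨k n, by simpa using hk n, rfl⟩
  obtain ⟨y, -, m, hm, hy⟩ := hK.tendsto_subseq hmem
  refine ⟨m, hm, ?_⟩
  suffices y = 0 by rw [← this]; exact hy
  have h1 : Tendsto (fun n => ⟪y, B (k (m n))⟫) atTop (𝓝 ⟪y, y⟫) :=
    tendsto_const_nhds.inner hy
  have h2 : Tendsto (fun n => ⟪y, B (k (m n))⟫) atTop (𝓝 0) := by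
    have := (hw (ContinuousLinearMap.adjoint B y)).comp hm.tendsto_atTop
    refine this.congr fun n => ?_
    simp [ContinuousLinearMap.adjoint_inner_left]
  exact inner_self_eq_zero.1 (tendsto_nhds_unique h1 h2)

lemma norm_log_le {ζ : ℂ} {δ : ℝ} (hδ : 0 < δ) (h1 : δ ≤ ‖ζ‖) (h2 : ‖ζ‖ ≤ 2) :
    ‖Complex.log ζ‖ ≤ |Real.log δ| + Real.log 2 + Real.pi := by
  have h3 := Complex.norm_le_abs_re_add_abs_im (Complex.log ζ)
  rw [Complex.log_re, Complex.log_im] at h3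
  have h4 := Complex.abs_arg_le_pi ζ
  have h5 : Real.log δ ≤ Real.log ‖ζ‖ := Real.log_le_log hδ h1
  have h6 : Real.log ‖ζ‖ ≤ Real.log 2 := Real.log_le_log (hδ.trans_le h1) h2
  have h7 : |Real.log ‖ζ‖| ≤ |Real.log δ| + Real.log 2 := by
    rw [abs_le]
    have h8 : 0 ≤ Real.log 2 := Real.log_nonneg (by norm_num)
    constructor
    · linarith [neg_abs_le (Real.log δ)]
    · linarith [abs_nonneg (Real.log δ)]
  linarith

lemma weak_null {N : ℕ} (S : DirichletSpace N) (u : ℕ → EuclideanSpace ℂ (Fin N))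
    (hu : ∀ n, u n ∈ Ball N) (hK : Tendsto (fun n => ‖S.kernel (u n)‖) atTop atTop) (f : S.H) :
    Tendsto (fun n => ⟪f, ((‖S.kernel (u n)‖⁻¹ : ℝ) : ℂ) • S.kernel (u n)⟫) atTop (𝓝 0) := by
  set k : ℕ → S.H := fun n => ((‖S.kernel (u n)‖⁻¹ : ℝ) : ℂ) • S.kernel (u n) with hkdef
  have hk : ∀ n, ‖k n‖ ≤ 1 := by
    intro n
    rw [hkdef]
    simp only [norm_smul, Complex.norm_real, norm_inv, norm_norm]
    exact inv_mul_le_one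
  let W : Submodule ℂ S.H :=
    { carrier := {f | Tendsto (fun n => ⟪f, k n⟫) atTop (𝓝 0)}
      add_mem' := by
        intro f g hf hg
        have h := Tendsto.add hf hg
        simpa [inner_add_left] using h
      zero_mem' := by simp
      smul_mem' := by
        intro c f hf
        have h := Tendsto.const_mul ((starRingEnd ℂ) c) hf
        simpa [inner_smul_left, mul_comm] using h }
  have hW : IsClosed (W : Set S.H) := by
    rw [← closure_subset_iff_isClosed]
    intro f hf
    change Tendsto (fun n => ⟪f, k n⟫) atTop (𝓝 0)
    rw [Metric.tendsto_atTop]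
    intro ε hε
    obtain ⟨g, hg, hfg⟩ := Metric.mem_closure_iff.1 hf (ε / 2) (by linarith)
    have hg' : Tendsto (fun n => ⟪g, k n⟫) atTop (𝓝 0) := hg
    obtain ⟨n0, hn0⟩ := Metric.tendsto_atTop.1 hg' (ε / 2) (by linarith)
    refine ⟨n0, fun n hn => ?_⟩
    have h1 := hn0 n hn
    rw [dist_zero_right] at h1 ⊢
    have h2 : ⟪f, k n⟫ = ⟪f - g, k n⟫ + ⟪g, k n⟫ := by rw [← inner_add_left]; simp
    have h3 : ‖⟪f - g, k n⟫‖ ≤ ‖f - g‖ := by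
      refine (norm_inner_le_norm _ _).trans ?_
      exact mul_le_of_le_one_right (norm_nonneg _) (hk n)
    rw [dist_eq_norm] at hfg
    rw [h2]
    have h4 := norm_add_le ⟪f - g, k n⟫ ⟪g, k n⟫
    linarith
  refine kernel_total S W hW ?_ f
  intro w hw
  change Tendsto (fun n => ⟪S.kernel w, k n⟫) atTop (𝓝 0)
  have hw' : ‖w‖ < 1 := by simpa using hw
  set D : ℝ := 1 + (|Real.log (1 - ‖w‖)| + Real.log 2 + Real.pi) with hD
  have hlim : Tendsto (fun n => ‖S.kernel (u n)‖⁻¹ * D) atTop (𝓝 0) := by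
    have := (tendsto_inv_atTop_zero.comp hK).mul_const D
    simpa using this
  refine squeeze_zero_norm (fun n => ?_) hlim
  rw [hkdef]
  simp only [inner_smul_right]
  rw [S.reproducing _ _ hw, eval_kernel' S (hu n) hw, norm_mul, Complex.norm_real, norm_inv,
    norm_norm]
  have hun : ‖u n‖ < 1 := by simpa using hu n
  have hin : ‖⟪u n, w⟫‖ ≤ ‖w‖ := by
    refine (norm_inner_le_norm _ _).trans ?_
    exact mul_le_of_le_one_left (norm_nonneg _) hun.le
  have hlog : ‖Complex.log (1 - ⟪u n, w⟫)‖ ≤ |Real.log (1 - ‖w‖)| + Real.log 2 + Real.pi := by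
    apply norm_log_le (by linarith)
    · have := norm_sub_norm_le (1 : ℂ) ⟪u n, w⟫
      rw [norm_one] at this
      linarith
    · have := norm_sub_le (1 : ℂ) ⟪u n, w⟫
      rw [norm_one] at this
      linarith
  gcongr
  have := norm_sub_le (1 : ℂ) (Complex.log (1 - ⟪u n, w⟫))
  rw [norm_one] at this
  linarith

/-- If a holomorphic map on the ball is nonzero at a point, then it stays away from zero along
some sequence tending to the boundary. -/
lemma exists_seq {N : ℕ} {f : EuclideanSpace ℂ (Fin N) → EuclideanSpace ℂ (Fin N)}
    (hf : DifferentiableOn ℂ f (Ball N)) {u0 : EuclideanSpace ℂ (Fin N)} (hu0 : u0 ∈ Ball N)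
    (hne : f u0 ≠ 0) :
    ∃ u : ℕ → EuclideanSpace ℂ (Fin N), (∀ n, u n ∈ Ball N) ∧ (∀ n, ‖f u0‖ ≤ ‖f (u n)‖) ∧
      Tendsto (fun n => ‖u n‖) atTop (𝓝 1) := by
  have hu0' : ‖u0‖ < 1 := by simpa using hu0
  have : Nontrivial (EuclideanSpace ℂ (Fin N)) := ⟨f u0, 0, hne⟩
  have hex : ∀ n : ℕ, ∃ u : EuclideanSpace ℂ (Fin N), u ∈ Ball N ∧ ‖f u0‖ ≤ ‖f u‖ ∧
      ‖u‖ = 1 - (1 - ‖u0‖) / 2 * (1 / ((n : ℝ) + 1)) := by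
    intro n
    set r : ℝ := 1 - (1 - ‖u0‖) / 2 * (1 / ((n : ℝ) + 1)) with hr
    have hp : 0 < 1 / ((n : ℝ) + 1) := by positivity
    have hp1 : 1 / ((n : ℝ) + 1) ≤ 1 := by
      rw [div_le_one (by positivity)]; linarith [(Nat.cast_nonneg n : (0 : ℝ) ≤ n)]
    have hr1 : r < 1 := by rw [hr]; nlinarith
    have hr0 : ‖u0‖ < r := by rw [hr]; nlinarith
    have hrpos : 0 < r := (norm_nonneg u0).trans_lt hr0
    have hd : DiffContOnCl ℂ f (ball 0 r) := by
      apply DifferentiableOn.diffContOnCl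
      rw [closure_ball _ hrpos.ne']
      exact hf.mono (closedBall_subset_ball hr1)
    obtain ⟨z, hz, hmax⟩ := Complex.exists_mem_frontier_isMaxOn_norm isBounded_ball
      ⟨0, mem_ball_self hrpos⟩ hd
    rw [frontier_ball _ hrpos.ne', mem_sphere_zero_iff_norm] at hz
    refine ⟨z, by rw [mem_ball_zero_iff, hz]; exact hr1, ?_, hz⟩
    exact hmax (subset_closure (by rwa [mem_ball_zero_iff]))
  choose u h1 h2 h3 using hex
  refine ⟨u, h1, h2, ?_⟩
  simp only [h3]
  have := (tendsto_one_div_add_atTop_nhds_zero_nat (𝕜 := ℝ)).const_mul ((1 - ‖u0‖) / 2)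
  simpa using this.const_sub 1

lemma norm_kernel_tendsto {N : ℕ} (S : DirichletSpace N) (u : ℕ → EuclideanSpace ℂ (Fin N))
    (hu : ∀ n, u n ∈ Ball N) (h1 : Tendsto (fun n => ‖u n‖) atTop (𝓝 1)) :
    Tendsto (fun n => ‖S.kernel (u n)‖) atTop atTop := by
  have h2 : Tendsto (fun n => 1 - ‖u n‖ ^ 2) atTop (𝓝[>] 0) := by
    apply tendsto_nhdsWithin_of_tendsto_nhds_of_eventually_within
    · simpa using (h1.pow 2).const_sub 1
    · refine Eventually.of_forall fun n => ?_
      have : ‖u n‖ < 1 := by simpa using hu n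
      simp only [mem_Ioi]
      nlinarith [norm_nonneg (u n)]
  have h3 := Real.tendsto_log_nhdsGT_zero.comp h2
  have h4 : Tendsto (fun n => ‖S.kernel (u n)‖ ^ 2) atTop atTop := by
    have h5 := tendsto_atTop_add_const_left atTop 1 (tendsto_neg_atBot_atTop.comp h3)
    refine h5.congr fun n => ?_
    rw [norm_kernel_sq S (hu n)]
    simp [sub_eq_add_neg]
  have h6 := Real.tendsto_sqrt_atTop.comp h4
  refine h6.congr fun n => ?_
  simp [Real.sqrt_sq]

lemma commute_of_compact {N : ℕ} (S : DirichletSpace N)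
    (φ ψ : EuclideanSpace ℂ (Fin N) → EuclideanSpace ℂ (Fin N))
    (hφ : IsBallAutomorphism N φ) (hψ : IsBallAutomorphism N ψ)
    (C T : S.H →L[ℂ] S.H)
    (hC : S.IsCompositionOperator φ C) (hT : S.IsCompositionOperator ψ T)
    (hB : IsCompactOperator (ContinuousLinearMap.id ℂ S.H - T.comp (C.comp
      ((ContinuousLinearMap.adjoint T).comp (ContinuousLinearMap.adjoint C))))) :
    ∀ z ∈ Ball N, φ (ψ z) = ψ (φ z) := by
  by_contra hcon
  push Not at hcon
  obtain ⟨u0, hu0, hne⟩ := hcon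
  have hmφ := hφ.2.1
  have hmψ := hψ.2.1
  have hdf : DifferentiableOn ℂ (fun z => φ (ψ z) - ψ (φ z)) (Ball N) :=
    (hφ.1.comp hψ.1 hmψ).sub (hψ.1.comp hφ.1 hmφ)
  obtain ⟨u, hu, hM, hlim⟩ := exists_seq hdf hu0 (sub_ne_zero.2 hne)
  set M := ‖φ (ψ u0) - ψ (φ u0)‖ with hMdef
  have hMpos : 0 < M := norm_pos_iff.2 (sub_ne_zero.2 hne)
  have hK := norm_kernel_tendsto S u hu hlim
  set B := ContinuousLinearMap.id ℂ S.H - T.comp (C.comp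
      ((ContinuousLinearMap.adjoint T).comp (ContinuousLinearMap.adjoint C))) with hBdef
  set k : ℕ → S.H := fun n => ((‖S.kernel (u n)‖⁻¹ : ℝ) : ℂ) • S.kernel (u n) with hkdef
  have hk : ∀ n, ‖k n‖ ≤ 1 := by
    intro n
    rw [hkdef]
    simp only [norm_smul, Complex.norm_real, norm_inv, norm_norm]
    exact inv_mul_le_one
  obtain ⟨m, hm, hBk⟩ := compact_weak B hB k hk (weak_null S u hu hK)
  set D : ℝ := 1 + (|Real.log (M ^ 2 / 2)| + Real.log 2 + Real.pi) with hD
  -- the kernel computation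
  have hcomp : ∀ n, ‖S.kernel (u n)‖ ^ 2 - D ≤ ‖⟪S.kernel (u n), B (S.kernel (u n))⟫‖ := by
    intro n
    set x := φ (ψ (u n)) with hx
    set y := ψ (φ (u n)) with hy
    have hxB : x ∈ Ball N := hmφ (hmψ (hu n))
    have hyB : y ∈ Ball N := hmψ (hmφ (hu n))
    have hval : ⟪S.kernel (u n), B (S.kernel (u n))⟫ =
        ((‖S.kernel (u n)‖ ^ 2 : ℝ) : ℂ) - (1 - Complex.log (1 - ⟪y, x⟫)) := by
      rw [hBdef]
      simp only [sub_apply, ContinuousLinearMap.comp_apply,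
        ContinuousLinearMap.id_apply, inner_sub_right]
      rw [adjoint_kernel S hmφ hC (hu n), adjoint_kernel S hmψ hT (hmφ (hu n)),
        S.reproducing (T _) _ (hu n), hT _ _ (hu n), hC _ _ (hmψ (hu n)),
        eval_kernel' S hyB hxB, inner_self_eq_norm_sq_to_K]
      push_cast
      simp
    have hin := inner_norm_lt hyB hxB
    have hlow : M ^ 2 / 2 ≤ ‖1 - ⟪y, x⟫‖ := by
      have h1 : M ≤ ‖y - x‖ := by rw [norm_sub_rev]; exact hM n
      have h2 := norm_sub_sq (𝕜 := ℂ) y x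
      have h3 := Complex.re_le_norm (1 - ⟪y, x⟫)
      have hx1 : ‖x‖ < 1 := by simpa using hxB
      have hy1 : ‖y‖ < 1 := by simpa using hyB
      have h4 : M ^ 2 ≤ ‖y - x‖ ^ 2 := by gcongr
      simp only [Complex.sub_re, Complex.one_re, RCLike.re_to_complex] at h2 h3
      nlinarith [norm_nonneg x, norm_nonneg y]
    have hup : ‖1 - ⟪y, x⟫‖ ≤ 2 := by
      have := norm_sub_le (1 : ℂ) ⟪y, x⟫
      rw [norm_one] at this
      linarith
    have hlog := norm_log_le (by positivity) hlow hup
    rw [hval]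
    have h5 := norm_sub_norm_le ((‖S.kernel (u n)‖ ^ 2 : ℝ) : ℂ) (1 - Complex.log (1 - ⟪y, x⟫))
    rw [Complex.norm_real, Real.norm_of_nonneg (by positivity)] at h5
    have h6 := norm_sub_le (1 : ℂ) (Complex.log (1 - ⟪y, x⟫))
    rw [norm_one] at h6
    linarith
  have hcomp2 : ∀ n, 0 < ‖S.kernel (u n)‖ → 1 - D * (‖S.kernel (u n)‖⁻¹ ^ 2) ≤ ‖B (k n)‖ := by
    intro n hpos
    have h1 : ‖⟪S.kernel (u n), B (S.kernel (u n))⟫‖ ≤ ‖S.kernel (u n)‖ * ‖B (S.kernel (u n))‖ :=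
      norm_inner_le_norm _ _
    have h2 := (hcomp n).trans h1
    have h3 : ‖B (k n)‖ = ‖S.kernel (u n)‖⁻¹ * ‖B (S.kernel (u n))‖ := by
      rw [hkdef]
      simp only [map_smul, norm_smul, Complex.norm_real, norm_inv, norm_norm]
    rw [h3]
    have h4 := mul_le_mul_of_nonneg_left h2 (by positivity : 0 ≤ ‖S.kernel (u n)‖⁻¹ ^ 2)
    have h5 : ‖S.kernel (u n)‖⁻¹ ^ 2 * (‖S.kernel (u n)‖ ^ 2 - D) =
        1 - D * (‖S.kernel (u n)‖⁻¹ ^ 2) := by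
      field_simp
    have h6 : ‖S.kernel (u n)‖⁻¹ ^ 2 * (‖S.kernel (u n)‖ * ‖B (S.kernel (u n))‖) =
        ‖S.kernel (u n)‖⁻¹ * ‖B (S.kernel (u n))‖ := by
      field_simp
    rw [h5, h6] at h4
    exact h4
  have hKm := hK.comp hm.tendsto_atTop
  have hl1 : Tendsto (fun n => 1 - D * (‖S.kernel (u (m n))‖⁻¹ ^ 2)) atTop (𝓝 1) := by
    have := (((tendsto_inv_atTop_zero.comp hKm).pow 2).const_mul D).const_sub 1
    simpa using this
  have hl2 : Tendsto (fun n => ‖B (k (m n))‖) atTop (𝓝 0) := by simpa using hBk.norm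
  have := le_of_tendsto_of_tendsto hl1 hl2 (by
    filter_upwards [hKm.eventually_gt_atTop 0] with n hn
    exact hcomp2 (m n) hn)
  linarith

/-- Let `φ, ψ` be automorphisms of `B_N`.  The commutator `[C_ψ*, C_φ]` is
compact on the Dirichlet space `𝒟(B_N)` if and only if `φ ∘ ψ = ψ ∘ φ`. -/
theorem dirichlet_commutator_compact_iff_commute
    (N : ℕ) (S : DirichletSpace N)
    (φ ψ : EuclideanSpace ℂ (Fin N) → EuclideanSpace ℂ (Fin N))
    (hφ : IsBallAutomorphism N φ) (hψ : IsBallAutomorphism N ψ)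
    (Cφ Cψ : S.H →L[ℂ] S.H)
    (hCφ : S.IsCompositionOperator φ Cφ) (hCψ : S.IsCompositionOperator ψ Cψ) :
    IsCompactOperator
        ⇑((ContinuousLinearMap.adjoint Cψ).comp Cφ -
          Cφ.comp (ContinuousLinearMap.adjoint Cψ)) ↔
      ∀ z ∈ Ball N, φ (ψ z) = ψ (φ z) := by
  obtain ⟨V1, hV1, hF1⟩ := exists_finite S hψ hCψ
  obtain ⟨V2, hV2, hF2⟩ := exists_finite S hφ hCφ
  constructor
  · intro hK
    apply commute_of_compact S φ ψ hφ hψ Cφ Cψ hCφ hCψ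
    set Aφ := ContinuousLinearMap.adjoint Cφ
    set Aψ := ContinuousLinearMap.adjoint Cψ
    set F1 : S.H →L[ℂ] S.H := Cψ.comp Aψ - ContinuousLinearMap.id ℂ S.H with hF1def
    set F2 : S.H →L[ℂ] S.H := Cφ.comp Aφ - ContinuousLinearMap.id ℂ S.H with hF2def
    have c1 : IsCompactOperator F1 := compact_of_finite F1 V1 hF1
    have c2 : IsCompactOperator F2 := compact_of_finite F2 V2 hF2
    have c3 := (hK.comp_clm Aφ).clm_comp Cψ
    have c4 := c1.comp_clm (Cφ.comp Aφ)
    have c5 := (c3.sub c4).sub c2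
    have heq : ⇑(ContinuousLinearMap.id ℂ S.H - Cψ.comp (Cφ.comp (Aψ.comp Aφ))) =
        ⇑Cψ ∘ ⇑(Aψ.comp Cφ - Cφ.comp Aψ) ∘ ⇑Aφ - ⇑F1 ∘ ⇑(Cφ.comp Aφ) - ⇑F2 := by
      funext f
      simp [hF1def, hF2def]
    rw [heq]
    exact c5
  · intro hcomm
    have hCC : ∀ f, Cφ (Cψ f) = Cψ (Cφ f) := by
      intro f
      apply S.eval_injective
      intro z hz
      rw [hCφ _ z hz, hCψ _ _ (hφ.2.1 hz), hCψ _ z hz, hCφ _ _ (hψ.2.1 hz), hcomm z hz]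
    have hinj : Function.Injective Cψ := by
      intro f g hfg
      apply S.eval_injective
      intro z hz
      obtain ⟨k, -, hkm, -, hk⟩ := hψ.2.2
      rw [← hk z hz, ← hCψ _ _ (hkm hz), ← hCψ _ _ (hkm hz), hfg]
    set W : Submodule ℂ S.H := V1 ⊔ V1.map Cφ.toLinearMap
    have hW : FiniteDimensional ℂ W := inferInstance
    have hW2 : FiniteDimensional ℂ (W.comap Cψ.toLinearMap) := by
      have hr : ∀ x : W.comap Cψ.toLinearMap, Cψ.toLinearMap x ∈ W := fun x => x.2
      refine FiniteDimensional.of_injective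
        (LinearMap.codRestrict W (Cψ.toLinearMap.comp (W.comap Cψ.toLinearMap).subtype) hr) ?_
      intro x y hxy
      apply Subtype.ext
      apply hinj
      exact congrArg Subtype.val hxy
    apply compact_of_finite _ (W.comap Cψ.toLinearMap)
    intro f
    change Cψ (ContinuousLinearMap.adjoint Cψ (Cφ f) - Cφ (ContinuousLinearMap.adjoint Cψ f)) ∈ W
    rw [map_sub, ← hCC]
    have h1 := hF1 (Cφ f)
    have h2 := hF1 f
    have h3 : Cψ (ContinuousLinearMap.adjoint Cψ (Cφ f)) -
        Cφ (Cψ (ContinuousLinearMap.adjoint Cψ f)) =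
        (Cψ (ContinuousLinearMap.adjoint Cψ (Cφ f)) - Cφ f) -
        Cφ (Cψ (ContinuousLinearMap.adjoint Cψ f) - f) := by
      rw [map_sub]; abel
    rw [h3]
    apply W.sub_mem
    · exact Submodule.mem_sup_left h1
    · exact Submodule.mem_sup_right ⟨_, h2, rfl⟩
end
end

section
/- Let φ and ψ be automorphisms of the unit disk D, let ω ∈ ∂D, and set ζ_1 = φ^{-1}(ω), ζ_2 = ψ^{-1}(ω) (so φ(ζ_1) = ψ(ζ_2) = ω). On H^2(D), if φ^{-1}(ζ_2) = ψ^{-1}(ζ_1) then lim_{r→1⁻} ⟨C_φ k_{rζ_2}, C_ψ k_{rζ_1}⟩ = 2 |(φ^{-1})'(ζ_2)| · |(ψ^{-1})'(ζ_1)| / ( |(ψ^{-1})'(ζ_1)| + |(φ^{-1})'(ζ_2)| ), while if φ^{-1}(ζ_2) ≠ ψ^{-1}(ζ_1) then lim_{r→1⁻} ⟨C_φ k_{rζ_2}, C_ψ k_{rζ_1}⟩ = 0. -/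
open Filter MeasureTheory Metric Set
open scoped ComplexInnerProductSpace Topology

noncomputable section

/-- The open unit disk `D` in `ℂ`. -/
abbrev Disk : Set ℂ := Metric.ball 0 1

/-- An abstract presentation of a reproducing-kernel Hilbert space of holomorphic functions
on the unit disk `D` with reproducing kernel `K_w(z) = (1 - z·conj w)^{-t}`.  For `t = 1`
this is the Hardy space `H²(D)`; for `t = s + 2` (`s > -1`) it is the weighted Bergman space
`A²_s(D)`.  Injectivity of evaluation forces the kernels to be total, so such a structure
determines the space uniquely up to canonical unitary equivalence. -/
structure DiskKernelSpace (t : ℝ) where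
  (H : Type)
  [grp : NormedAddCommGroup H]
  [ips : InnerProductSpace ℂ H]
  [cpl : CompleteSpace H]
  eval : H → ℂ → ℂ
  eval_add : ∀ f g : H, ∀ z, eval (f + g) z = eval f z + eval g z
  eval_smul : ∀ (c : ℂ) (f : H) (z : ℂ), eval (c • f) z = c * eval f z
  holo : ∀ f : H, DifferentiableOn ℂ (eval f) Disk
  eval_injective : ∀ f g : H, (∀ z ∈ Disk, eval f z = eval g z) → f = g
  kernel : ℂ → H
  eval_kernel : ∀ w ∈ Disk, ∀ z ∈ Disk,
    eval (kernel w) z = (1 - z * (starRingEnd ℂ) w) ^ (-(t : ℂ))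
  reproducing : ∀ (f : H), ∀ w ∈ Disk, ⟪kernel w, f⟫ = eval f w

attribute [instance] DiskKernelSpace.grp DiskKernelSpace.ips DiskKernelSpace.cpl

/-- `T` is the composition operator `C_φ : f ↦ f ∘ φ` on `S`. -/
def DiskKernelSpace.IsCompositionOperator {t : ℝ} (S : DiskKernelSpace t)
    (φ : ℂ → ℂ) (T : S.H →L[ℂ] S.H) : Prop :=
  ∀ f : S.H, ∀ z ∈ Disk, S.eval (T f) z = S.eval f (φ z)

open ComplexConjugate in
lemma aut_rel (a b c d : ℂ) (h : ∀ z : ℂ, ‖z‖ = 1 → ‖a * z + b‖ = ‖c * z + d‖)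
    (hb : ‖b‖ < ‖d‖) : ∃ Δ : ℝ, 0 < Δ ∧ a * conj b = c * conj d ∧ b * conj a = d * conj c ∧
      a * conj a - c * conj c = Δ ∧ d * conj d - b * conj b = Δ := by
  have key : ∀ z : ℂ, ‖z‖ = 1 → Complex.normSq (a * z + b) = Complex.normSq (c * z + d) := by
    intro z hz
    rw [Complex.normSq_eq_norm_sq, Complex.normSq_eq_norm_sq, h z hz]
  have h1 := key 1 (by simp)
  have h2 := key (-1) (by simp)
  have h3 := key Complex.I (by simp)
  have h4 := key (-Complex.I) (by simp)
  have hb' : Complex.normSq b < Complex.normSq d := by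
    rw [Complex.normSq_eq_norm_sq, Complex.normSq_eq_norm_sq]
    have := norm_nonneg b
    gcongr
  simp [Complex.normSq_apply] at h1 h2 h3 h4 hb'
  refine ⟨d.re * d.re + d.im * d.im - (b.re * b.re + b.im * b.im), by linarith, ?_, ?_, ?_, ?_⟩
  all_goals
    apply Complex.ext <;> simp [Complex.mul_re, Complex.mul_im] <;> linarith

open ComplexConjugate in
/-- The kernel identity. -/
lemma aut_kernel {a b c d : ℂ} {Δ : ℝ}
    (r1 : a * conj b = c * conj d) (r2 : b * conj a = d * conj c)
    (r3 : a * conj a - c * conj c = Δ) (r4 : d * conj d - b * conj b = Δ)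
    (z q : ℂ) (hz : c * z + d ≠ 0) (hq : c * q + d ≠ 0) :
    1 - (a * z + b) / (c * z + d) * conj ((a * q + b) / (c * q + d)) =
      Δ * (1 - z * conj q) / ((c * z + d) * conj (c * q + d)) := by
  have hq' : conj (c * q + d) ≠ 0 := (map_ne_zero _).2 hq
  rw [map_div₀, div_mul_div_comm, eq_div_iff (mul_ne_zero hz hq'), sub_mul,
    div_mul_cancel₀ _ (mul_ne_zero hz hq')]
  simp only [map_add, map_mul]
  linear_combination (-z) * r1 - conj q * r2 - z * conj q * r3 + r4

open ComplexConjugate in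
lemma aut_norm {a b c d : ℂ} {Δ : ℝ}
    (r1 : a * conj b = c * conj d) (r2 : b * conj a = d * conj c)
    (r3 : a * conj a - c * conj c = Δ) (r4 : d * conj d - b * conj b = Δ)
    (q : ℂ) (hq : c * q + d ≠ 0) :
    1 - ‖(a * q + b) / (c * q + d)‖ ^ 2 = Δ * (1 - ‖q‖ ^ 2) / ‖c * q + d‖ ^ 2 := by
  have := aut_kernel r1 r2 r3 r4 q q hq hq
  simp only [Complex.mul_conj'] at this
  exact_mod_cast this

open ComplexConjugate in
lemma aut_bdry {a b c d : ℂ} {Δ : ℝ}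
    (r1 : a * conj b = c * conj d) (r2 : b * conj a = d * conj c)
    (r3 : a * conj a - c * conj c = Δ) (r4 : d * conj d - b * conj b = Δ)
    (q : ℂ) (hq : c * q + d ≠ 0) (hq1 : ‖q‖ = 1) :
    q * ((a * d - b * c) / (c * q + d) ^ 2) * conj ((a * q + b) / (c * q + d)) =
      ((Δ / ‖c * q + d‖ ^ 2 : ℝ) : ℂ) := by
  have hq' : conj (c * q + d) ≠ 0 := (map_ne_zero _).2 hq
  have hqq : q * conj q = 1 := by rw [Complex.mul_conj', hq1]; simp
  push_cast
  rw [← Complex.mul_conj', map_div₀, ← mul_div_assoc q, div_mul_div_comm,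
    div_eq_div_iff (mul_ne_zero (pow_ne_zero 2 hq) hq') (mul_ne_zero hq hq')]
  simp only [map_add, map_mul] at hq' ⊢
  have : q * (a * d - b * c) * (conj a * conj q + conj b) = Δ * (c * q + d) := by
    linear_combination (a * d - b * c) * conj a * hqq + d * r3 - c * r2  + q * d * r1 + q * c * r4
  rw [this]; ring

lemma mob_deriv (a b c d z : ℂ) (h : c * z + d ≠ 0) :
    HasDerivAt (fun z => (a * z + b) / (c * z + d)) ((a * d - b * c) / (c * z + d) ^ 2) z := by
  have h1 : HasDerivAt (fun z => a * z + b) a z := by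
    simpa using ((hasDerivAt_id z).const_mul a).add_const b
  have h2 : HasDerivAt (fun z => c * z + d) c z := by
    simpa using ((hasDerivAt_id z).const_mul c).add_const d
  have h3 := h1.div h2 h
  have e : (a * d - b * c) / (c * z + d) ^ 2 =
      (a * (c * z + d) - (a * z + b) * c) / (c * z + d) ^ 2 := by ring
  rw [e]
  exact h3

lemma mob_inv_den (a b c d z : ℂ) (h : -c * z + a ≠ 0) :
    c * ((d * z - b) / (-c * z + a)) + d = (a * d - b * c) / (-c * z + a) := by
  rw [eq_div_iff h, add_mul, mul_assoc, div_mul_cancel₀ _ h]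
  ring

lemma mob_inv_deriv (a b c d z : ℂ) (hdet : a * d - b * c ≠ 0) (h : -c * z + a ≠ 0) :
    HasDerivAt (fun z => (d * z - b) / (-c * z + a))
      (((a * d - b * c) / (c * ((d * z - b) / (-c * z + a)) + d) ^ 2)⁻¹) z := by
  have := mob_deriv d (-b) (-c) a z h
  rw [mob_inv_den _ _ _ _ _ h]
  have e : ((a * d - b * c) / ((a * d - b * c) / (-c * z + a)) ^ 2)⁻¹ =
      (d * a - -b * -c) / (-c * z + a) ^ 2 := by
    have e2 : d * a - -b * -c = a * d - b * c := by ring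
    rw [e2]
    generalize a * d - b * c = D at *
    generalize -c * z + a = E at *
    field_simp
  rw [e]
  simpa only [sub_eq_add_neg] using this

lemma slope_lim (h : ℝ → ℂ) (h' : ℂ) (hd : HasDerivAt h h' 1) (h0 : h 1 = 0) (hne : h' ≠ 0) :
    Tendsto (fun r : ℝ => ((1 - r ^ 2 : ℝ) : ℂ) * (h r)⁻¹) (𝓝[<] 1) (𝓝 (-2 / h')) := by
  have hs := (hasDerivAt_iff_tendsto_slope.1 hd).mono_left
    (nhdsWithin_mono 1 (fun x (hx : x < 1) => ne_of_lt hx) : 𝓝[<] (1 : ℝ) ≤ 𝓝[≠] 1)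
  have hc : Tendsto (fun r : ℝ => -((1 : ℂ) + r)) (𝓝[<] 1) (𝓝 (-2)) := by
    have : Continuous (fun r : ℝ => -((1 : ℂ) + r)) := by fun_prop
    convert (this.tendsto 1).mono_left nhdsWithin_le_nhds using 2
    norm_num
  have := hc.mul (hs.inv₀ hne)
  rw [div_eq_mul_inv]
  refine this.congr' ?_
  filter_upwards [self_mem_nhdsWithin] with r hr
  have hr1 : ((r : ℂ) - 1) ≠ 0 := by
    rw [sub_ne_zero]; exact_mod_cast (ne_of_lt hr)
  simp only [slope, vsub_eq_sub, h0, sub_zero, Complex.real_smul]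
  push_cast
  rw [mul_inv, inv_inv]
  ring

lemma S_eval_kernel (S : DiskKernelSpace 1) (w z : ℂ) (hw : w ∈ Disk) (hz : z ∈ Disk) :
    S.eval (S.kernel w) z = (1 - z * (starRingEnd ℂ) w)⁻¹ := by
  rw [S.eval_kernel w hw z hz]
  push_cast
  exact Complex.cpow_neg_one _

lemma S_norm_kernel (S : DiskKernelSpace 1) (w : ℂ) (hw : w ∈ Disk) :
    ‖S.kernel w‖ ^ 2 = (1 - ‖w‖ ^ 2)⁻¹ := by
  have := S.reproducing (S.kernel w) w hw
  rw [S_eval_kernel S w w hw hw, inner_self_eq_norm_sq_to_K, Complex.mul_conj'] at this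
  have h2 : (((‖S.kernel w‖ ^ 2 : ℝ)) : ℂ) = (((1 - ‖w‖ ^ 2)⁻¹ : ℝ) : ℂ) := by
    push_cast
    exact this
  exact Complex.ofReal_injective h2

open ComplexConjugate in
lemma S_comp_kernel (S : DiskKernelSpace 1) {a b c d : ℂ} {Δ : ℝ} (hΔ : 0 < Δ)
    (r1 : a * conj b = c * conj d) (r2 : b * conj a = d * conj c)
    (r3 : a * conj a - c * conj c = Δ) (r4 : d * conj d - b * conj b = Δ)
    (hden : ∀ z ∈ Metric.closedBall (0 : ℂ) 1, c * z + d ≠ 0)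
    (ψ : ℂ → ℂ) (hψ : ∀ z, ψ z = (a * z + b) / (c * z + d)) (hmap : Set.MapsTo ψ Disk Disk)
    (C : S.H →L[ℂ] S.H) (hC : S.IsCompositionOperator ψ C) (q : ℂ) (hq : q ∈ Disk) (hq0 : q ≠ 0) :
    C (S.kernel (ψ q)) = (-(conj (c * q + d) / Δ * (c / conj q))) • S.kernel 0 +
      (conj (c * q + d) / Δ * (d + c / conj q)) • S.kernel q := by
  apply S.eval_injective
  intro z hz
  have hcz := hden z (ball_subset_closedBall hz)
  have hcq := hden q (ball_subset_closedBall hq)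
  have hcq' : conj (c * q + d) ≠ 0 := (map_ne_zero _).2 hcq
  have hq0' : conj q ≠ 0 := by simpa using hq0
  have hΔ' : (Δ : ℂ) ≠ 0 := by exact_mod_cast hΔ.ne'
  have h0 : (0 : ℂ) ∈ Disk := by simp
  have hne : 1 - z * conj q ≠ 0 := by
    intro h
    have h1 : z * conj q = 1 := (sub_eq_zero.1 h).symm
    have h2 : ‖z‖ * ‖q‖ = 1 := by simpa using congrArg norm h1
    have hz' : ‖z‖ < 1 := by simpa using hz
    have hq' : ‖q‖ < 1 := by simpa using hq
    nlinarith [norm_nonneg z, norm_nonneg q]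
  rw [hC _ z hz, S_eval_kernel S _ _ (hmap hq) (hmap hz), S.eval_add, S.eval_smul, S.eval_smul,
    S_eval_kernel S _ _ h0 hz, S_eval_kernel S _ _ hq hz, hψ, hψ,
    aut_kernel r1 r2 r3 r4 z q hcz hcq]
  generalize conj (c * q + d) = e at *
  generalize conj q = p at *
  simp only [map_zero, mul_zero, sub_zero, inv_one, mul_one]
  field_simp
  ring

open ComplexConjugate in
/-- Let `φ, ψ` be automorphisms of the unit disk `D` (linear fractional
maps extending to the closed disk, with inverses `φinv`, `ψinv`), let `ω ∈ ∂D`, and set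
`ζ₁ = φ⁻¹(ω)`, `ζ₂ = ψ⁻¹(ω)`.  On `H²(D)` (with normalized reproducing kernels `k_w`):
if `φ⁻¹(ζ₂) = ψ⁻¹(ζ₁)` then
`lim_{r→1⁻} ⟨C_φ k_{rζ₂}, C_ψ k_{rζ₁}⟩
  = 2|(φ⁻¹)'(ζ₂)|·|(ψ⁻¹)'(ζ₁)| / (|(ψ⁻¹)'(ζ₁)| + |(φ⁻¹)'(ζ₂)|)`,
while if `φ⁻¹(ζ₂) ≠ ψ⁻¹(ζ₁)` the limit is `0`. -/
theorem hardy_disk_composition_kernel_limit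
    (S : DiskKernelSpace 1)
    (a₁ b₁ c₁ d₁ a₂ b₂ c₂ d₂ : ℂ)
    (hdet₁ : a₁ * d₁ - b₁ * c₁ ≠ 0) (hdet₂ : a₂ * d₂ - b₂ * c₂ ≠ 0)
    (φ φinv ψ ψinv : ℂ → ℂ)
    (hφdef : ∀ z, φ z = (a₁ * z + b₁) / (c₁ * z + d₁))
    (hφinvdef : ∀ z, φinv z = (d₁ * z - b₁) / (-c₁ * z + a₁))
    (hψdef : ∀ z, ψ z = (a₂ * z + b₂) / (c₂ * z + d₂))
    (hψinvdef : ∀ z, ψinv z = (d₂ * z - b₂) / (-c₂ * z + a₂))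
    (hφden : ∀ z ∈ Metric.closedBall (0 : ℂ) 1, c₁ * z + d₁ ≠ 0 ∧ -c₁ * z + a₁ ≠ 0)
    (hψden : ∀ z ∈ Metric.closedBall (0 : ℂ) 1, c₂ * z + d₂ ≠ 0 ∧ -c₂ * z + a₂ ≠ 0)
    (hφbij : Set.BijOn φ Disk Disk) (hψbij : Set.BijOn ψ Disk Disk)
    (hφsph : Set.MapsTo φ (Metric.sphere (0 : ℂ) 1) (Metric.sphere (0 : ℂ) 1))
    (hψsph : Set.MapsTo ψ (Metric.sphere (0 : ℂ) 1) (Metric.sphere (0 : ℂ) 1))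
    (hφinv : ∀ z ∈ Metric.closedBall (0 : ℂ) 1, φinv (φ z) = z ∧ φ (φinv z) = z)
    (hψinv : ∀ z ∈ Metric.closedBall (0 : ℂ) 1, ψinv (ψ z) = z ∧ ψ (ψinv z) = z)
    (ω : ℂ) (hω : ‖ω‖ = 1)
    (Cφ Cψ : S.H →L[ℂ] S.H)
    (hCφ : S.IsCompositionOperator φ Cφ) (hCψ : S.IsCompositionOperator ψ Cψ) :
    (φinv (ψinv ω) = ψinv (φinv ω) →
      Tendsto
        (fun r : ℝ =>
          ⟪Cψ ((‖S.kernel ((r : ℂ) * φinv ω)‖ : ℂ)⁻¹ • S.kernel ((r : ℂ) * φinv ω)),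
            Cφ ((‖S.kernel ((r : ℂ) * ψinv ω)‖ : ℂ)⁻¹ • S.kernel ((r : ℂ) * ψinv ω))⟫)
        (𝓝[<] (1 : ℝ))
        (𝓝 (((2 * ‖deriv φinv (ψinv ω)‖ * ‖deriv ψinv (φinv ω)‖ /
          (‖deriv ψinv (φinv ω)‖ + ‖deriv φinv (ψinv ω)‖) : ℝ) : ℂ)))) ∧
    (φinv (ψinv ω) ≠ ψinv (φinv ω) →
      Tendsto
        (fun r : ℝ =>
          ⟪Cψ ((‖S.kernel ((r : ℂ) * φinv ω)‖ : ℂ)⁻¹ • S.kernel ((r : ℂ) * φinv ω)),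
            Cφ ((‖S.kernel ((r : ℂ) * ψinv ω)‖ : ℂ)⁻¹ • S.kernel ((r : ℂ) * ψinv ω))⟫)
        (𝓝[<] (1 : ℝ)) (𝓝 0)) := by
  have z0 : (0 : ℂ) ∈ Disk := by simp
  -- relations for a single automorphism
  have rel : ∀ (a b c d : ℂ) (f : ℂ → ℂ), (∀ z, f z = (a * z + b) / (c * z + d)) →
      (∀ z ∈ Metric.closedBall (0 : ℂ) 1, c * z + d ≠ 0 ∧ -c * z + a ≠ 0) →
      Set.MapsTo f Disk Disk →
      Set.MapsTo f (Metric.sphere (0 : ℂ) 1) (Metric.sphere (0 : ℂ) 1) →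
      ∃ Δ : ℝ, 0 < Δ ∧ a * conj b = c * conj d ∧ b * conj a = d * conj c ∧
      a * conj a - c * conj c = Δ ∧ d * conj d - b * conj b = Δ := by
    intro a b c d f hf hden hm hs
    apply aut_rel
    · intro z hz
      have h1 := hs (show z ∈ Metric.sphere (0 : ℂ) 1 by simpa using hz)
      have h2 := (hden z (by simp [hz])).1
      rw [mem_sphere_zero_iff_norm, hf, norm_div, div_eq_one_iff_eq (by simpa using h2)] at h1
      exact h1
    · have h1 := hm z0
      have h2 := (hden 0 (by simp)).1
      rw [mem_ball_zero_iff, hf] at h1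
      simp only [mul_zero, zero_add, norm_div] at h1 h2
      rwa [div_lt_one (by simpa using h2)] at h1
  obtain ⟨Δ₁, hΔ₁, p1, p2, p3, p4⟩ := rel a₁ b₁ c₁ d₁ φ hφdef hφden hφbij.mapsTo hφsph
  obtain ⟨Δ₂, hΔ₂, s1, s2, s3, s4⟩ := rel a₂ b₂ c₂ d₂ ψ hψdef hψden hψbij.mapsTo hψsph
  clear rel
  -- the inverses preserve the sphere
  have sph : ∀ (a b c d : ℂ) (f g : ℂ → ℂ) (Δ : ℝ), 0 < Δ →
      a * d - b * c ≠ 0 →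
      a * conj b = c * conj d → b * conj a = d * conj c →
      a * conj a - c * conj c = Δ → d * conj d - b * conj b = Δ →
      (∀ z, f z = (a * z + b) / (c * z + d)) → (∀ z, g z = (d * z - b) / (-c * z + a)) →
      (∀ z ∈ Metric.closedBall (0 : ℂ) 1, c * z + d ≠ 0 ∧ -c * z + a ≠ 0) →
      (∀ z ∈ Metric.closedBall (0 : ℂ) 1, g (f z) = z ∧ f (g z) = z) →
      (∀ z, ‖z‖ ≤ 1 → c * g z + d ≠ 0 ∧
        1 - ‖z‖ ^ 2 = Δ * (1 - ‖g z‖ ^ 2) / ‖c * g z + d‖ ^ 2) := by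
    intro a b c d f g Δ hΔ hdet r1 r2 r3 r4 hf hg hden hinv z hz
    have hz' : z ∈ Metric.closedBall (0 : ℂ) 1 := by simpa using hz
    have h1 : c * g z + d ≠ 0 := by
      rw [hg, mob_inv_den _ _ _ _ _ (hden z hz').2]
      exact div_ne_zero hdet (hden z hz').2
    refine ⟨h1, ?_⟩
    rw [← aut_norm r1 r2 r3 r4 (g z) h1, ← hf, (hinv z hz').2]
  have sφ := sph a₁ b₁ c₁ d₁ φ φinv Δ₁ hΔ₁ hdet₁ p1 p2 p3 p4 hφdef hφinvdef hφden hφinv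
  have sψ := sph a₂ b₂ c₂ d₂ ψ ψinv Δ₂ hΔ₂ hdet₂ s1 s2 s3 s4 hψdef hψinvdef hψden hψinv
  clear sph
  have unit : ∀ (Δ x y : ℝ) (e : ℂ), 0 < Δ → x = 1 → 0 ≤ y → e ≠ 0 →
      1 - x ^ 2 = Δ * (1 - y ^ 2) / ‖e‖ ^ 2 → y = 1 := by
    intro Δ x y e hΔ hx hy he h
    rw [hx, one_pow, sub_self, eq_comm, div_eq_zero_iff] at h
    have : ‖e‖ ^ 2 ≠ 0 := by simpa using he
    have h3 : 1 - y ^ 2 = 0 := by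
      rcases h with h | h
      · exact (mul_eq_zero.1 h).resolve_left hΔ.ne'
      · exact absurd h this
    nlinarith
  have uφ : ∀ z, ‖z‖ = 1 → ‖φinv z‖ = 1 := fun z hz =>
    unit Δ₁ ‖z‖ _ _ hΔ₁ hz (norm_nonneg _) (sφ z hz.le).1 (sφ z hz.le).2
  have uψ : ∀ z, ‖z‖ = 1 → ‖ψinv z‖ = 1 := fun z hz =>
    unit Δ₂ ‖z‖ _ _ hΔ₂ hz (norm_nonneg _) (sψ z hz.le).1 (sψ z hz.le).2
  have dψ : ∀ z, ‖z‖ < 1 → ‖ψinv z‖ < 1 := by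
    intro z hz
    obtain ⟨h1, h2⟩ := sψ z hz.le
    by_contra hcon
    push Not at hcon
    have h3 : Δ₂ * (1 - ‖ψinv z‖ ^ 2) / ‖c₂ * ψinv z + d₂‖ ^ 2 ≤ 0 := by
      apply div_nonpos_of_nonpos_of_nonneg _ (by positivity)
      exact mul_nonpos_of_nonneg_of_nonpos hΔ₂.le (by nlinarith)
    nlinarith [norm_nonneg z]
  set ζ₁ := φinv ω with hζ₁
  set ζ₂ := ψinv ω with hζ₂
  have n1 : ‖ζ₁‖ = 1 := uφ ω hω
  have n2 : ‖ζ₂‖ = 1 := uψ ω hω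
  set q₁ := ψinv ζ₁ with hq₁
  have nq : ‖q₁‖ = 1 := uψ ζ₁ n1
  have q₁0 : q₁ ≠ 0 := by intro h; rw [h] at nq; simp at nq
  have hψq : ψ q₁ = ζ₁ := (hψinv ζ₁ (by simp [n1])).2
  have e1 : c₁ * q₁ + d₁ ≠ 0 := (hφden q₁ (by simp [nq])).1
  have e2 : c₂ * q₁ + d₂ ≠ 0 := (hψden q₁ (by simp [nq])).1
  -- curve q(r)
  have hψinvd : HasDerivAt ψinv (((a₂ * d₂ - b₂ * c₂) / (c₂ * q₁ + d₂) ^ 2)⁻¹) ζ₁ := by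
    have := mob_inv_deriv a₂ b₂ c₂ d₂ ζ₁ hdet₂ (hψden ζ₁ (by simp [n1])).2
    rw [← hψinvdef] at this
    exact this.congr_of_eventuallyEq (Eventually.of_forall hψinvdef)
  have hφd : HasDerivAt φ ((a₁ * d₁ - b₁ * c₁) / (c₁ * q₁ + d₁) ^ 2) q₁ :=
    (mob_deriv a₁ b₁ c₁ d₁ q₁ e1).congr_of_eventuallyEq (Eventually.of_forall hφdef)
  have hlin : ∀ ζ : ℂ, HasDerivAt (fun r : ℝ => (r : ℂ) * ζ) ζ 1 := by
    intro ζ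
    simpa using (Complex.ofRealCLM.hasDerivAt (x := (1 : ℝ))).mul_const ζ
  set D₁ := (a₁ * d₁ - b₁ * c₁) / (c₁ * q₁ + d₁) ^ 2 with hD₁
  set D₂ := (a₂ * d₂ - b₂ * c₂) / (c₂ * q₁ + d₂) ^ 2 with hD₂
  have hqd : HasDerivAt (fun r : ℝ => ψinv ((r : ℂ) * ζ₁)) (D₂⁻¹ * ζ₁) 1 := by
    refine HasDerivAt.comp (h₂ := ψinv) (h := fun r : ℝ => (r : ℂ) * ζ₁) 1 ?_ (hlin ζ₁)
    simpa using hψinvd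
  have hφqd : HasDerivAt (fun r : ℝ => φ (ψinv ((r : ℂ) * ζ₁))) (D₁ * (D₂⁻¹ * ζ₁)) 1 := by
    refine HasDerivAt.comp (h₂ := φ) (h := fun r : ℝ => ψinv ((r : ℂ) * ζ₁)) 1 ?_ hqd
    simpa using hφd
  set h : ℝ → ℂ := fun r => 1 - φ (ψinv ((r : ℂ) * ζ₁)) * ((r : ℂ) * conj ζ₂) with hh
  have hhd : HasDerivAt h (-(D₁ * (D₂⁻¹ * ζ₁) * conj ζ₂ + φ q₁ * conj ζ₂)) 1 := by
    have := (hφqd.mul (hlin (conj ζ₂))).const_sub 1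
    simpa using this
  have h1v : h 1 = 1 - φ q₁ * conj ζ₂ := by simp [hh, hq₁]
  -- explicit form
  set A : ℝ → ℂ := fun r => conj (-(conj (c₂ * ψinv ((r : ℂ) * ζ₁) + d₂) / Δ₂ *
    (c₂ / conj (ψinv ((r : ℂ) * ζ₁))))) with hA
  set B : ℝ → ℂ := fun r => conj (conj (c₂ * ψinv ((r : ℂ) * ζ₁) + d₂) / Δ₂ *
    (d₂ + c₂ / conj (ψinv ((r : ℂ) * ζ₁)))) with hB
  set G : ℝ → ℂ := fun r => 1 - φ 0 * ((r : ℂ) * conj ζ₂) with hG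
  have hqc : Tendsto (fun r : ℝ => ψinv ((r : ℂ) * ζ₁)) (𝓝[<] 1) (𝓝 q₁) := by
    have := hqd.continuousAt.tendsto.mono_left (nhdsWithin_le_nhds (s := Set.Iio 1))
    simpa using this
  have star : ∀ {f : ℝ → ℂ} {x : ℂ}, Tendsto f (𝓝[<] 1) (𝓝 x) →
      Tendsto (fun r => conj (f r)) (𝓝[<] 1) (𝓝 (conj x)) := fun hf =>
    (Complex.continuous_conj.tendsto _).comp hf
  have cq₁0 : conj q₁ ≠ 0 := (map_ne_zero _).2 q₁0
  have hAl : Tendsto A (𝓝[<] 1) (𝓝 (conj (-(conj (c₂ * q₁ + d₂) / Δ₂ * (c₂ / conj q₁))))) := by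
    apply star
    exact (((star ((hqc.const_mul c₂).add_const d₂)).div_const _).mul
      (tendsto_const_nhds.div (star hqc) cq₁0)).neg
  have hBl : Tendsto B (𝓝[<] 1) (𝓝 (conj (conj (c₂ * q₁ + d₂) / Δ₂ * (d₂ + c₂ / conj q₁)))) := by
    apply star
    exact (((star ((hqc.const_mul c₂).add_const d₂)).div_const _).mul
      ((tendsto_const_nhds.div (star hqc) cq₁0).const_add d₂))
  have hGl : Tendsto G (𝓝[<] 1) (𝓝 (1 - φ 0 * conj ζ₂)) := by
    have : Continuous G := by fun_prop
    have := (this.tendsto 1).mono_left (nhdsWithin_le_nhds (s := Set.Iio 1))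
    simpa [hG] using this
  have hG0 : 1 - φ 0 * conj ζ₂ ≠ 0 := by
    intro hc
    have h1 : φ 0 * conj ζ₂ = 1 := (sub_eq_zero.1 hc).symm
    have h2 : ‖φ 0‖ * ‖ζ₂‖ = 1 := by simpa using congrArg norm h1
    have h3 : ‖φ 0‖ < 1 := by simpa using hφbij.mapsTo z0
    rw [n2, mul_one] at h2
    exact h3.ne h2
  have hrl : Tendsto (fun r : ℝ => ((1 - r ^ 2 : ℝ) : ℂ)) (𝓝[<] 1) (𝓝 0) := by
    have : Continuous (fun r : ℝ => ((1 - r ^ 2 : ℝ) : ℂ)) := by fun_prop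
    have := (this.tendsto 1).mono_left (nhdsWithin_le_nhds (s := Set.Iio 1))
    simpa using this
  have hform : ∀ᶠ r : ℝ in 𝓝[<] 1,
      ((1 - r ^ 2 : ℝ) : ℂ) * (G r)⁻¹ * A r + ((1 - r ^ 2 : ℝ) : ℂ) * (h r)⁻¹ * B r =
      ⟪Cψ ((‖S.kernel ((r : ℂ) * ζ₁)‖ : ℂ)⁻¹ • S.kernel ((r : ℂ) * ζ₁)),
            Cφ ((‖S.kernel ((r : ℂ) * ζ₂)‖ : ℂ)⁻¹ • S.kernel ((r : ℂ) * ζ₂))⟫ := by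
    have ev1 : ∀ᶠ r : ℝ in 𝓝[<] 1, ψinv ((r : ℂ) * ζ₁) ≠ 0 :=
      hqc.eventually_ne q₁0
    have ev2 : ∀ᶠ r : ℝ in 𝓝[<] 1, 0 < r :=
      nhdsWithin_le_nhds (lt_mem_nhds one_pos)
    filter_upwards [ev1, ev2, self_mem_nhdsWithin] with r hq0 hr0 hr1
    have hr1 : r < 1 := hr1
    have m1 : ‖(r : ℂ) * ζ₁‖ = r := by simp [n1, abs_of_pos hr0]
    have m2 : ‖(r : ℂ) * ζ₂‖ = r := by simp [n2, abs_of_pos hr0]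
    have w1 : (r : ℂ) * ζ₁ ∈ Disk := by rw [mem_ball_zero_iff, m1]; exact hr1
    have w2 : (r : ℂ) * ζ₂ ∈ Disk := by rw [mem_ball_zero_iff, m2]; exact hr1
    have hqD : ψinv ((r : ℂ) * ζ₁) ∈ Disk := by
      rw [mem_ball_zero_iff]; exact dψ _ (by rw [m1]; exact hr1)
    have k1 := S_norm_kernel S _ w1
    have k2 := S_norm_kernel S _ w2
    rw [m1] at k1
    rw [m2] at k2
    have k12 : ‖S.kernel ((r : ℂ) * ζ₁)‖ = ‖S.kernel ((r : ℂ) * ζ₂)‖ := by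
      rw [← sq_eq_sq₀ (norm_nonneg _) (norm_nonneg _), k1, k2]
    have kk : ((‖S.kernel ((r : ℂ) * ζ₂)‖ : ℂ)⁻¹) * ((‖S.kernel ((r : ℂ) * ζ₂)‖ : ℂ)⁻¹) =
        ((1 - r ^ 2 : ℝ) : ℂ) := by
      rw [← mul_inv, ← sq, ← Complex.ofReal_pow, k2, Complex.ofReal_inv, inv_inv]
    have hexp := S_comp_kernel S hΔ₂ s1 s2 s3 s4 (fun z hz => (hψden z hz).1) ψ hψdef
      hψbij.mapsTo Cψ hCψ _ hqD hq0
    rw [(hψinv _ (ball_subset_closedBall w1)).2] at hexp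
    rw [map_smul, map_smul, inner_smul_left, inner_smul_right, hexp, inner_add_left,
      inner_smul_left, inner_smul_left, S.reproducing _ _ z0, S.reproducing _ _ hqD,
      hCφ _ _ z0, hCφ _ _ hqD, S_eval_kernel S _ _ w2 (hφbij.mapsTo z0),
      S_eval_kernel S _ _ w2 (hφbij.mapsTo hqD), k12, ← mul_assoc, map_inv₀, Complex.conj_ofReal,
      kk, map_mul (starRingEnd ℂ) (r : ℂ) ζ₂, Complex.conj_ofReal]
    simp only [hA, hB, hG, hh]
    ring
  have red : ∀ L : ℂ, Tendsto (fun r : ℝ => ((1 - r ^ 2 : ℝ) : ℂ) * (h r)⁻¹) (𝓝[<] 1) (𝓝 L) →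
      Tendsto (fun r : ℝ =>
        ⟪Cψ ((‖S.kernel ((r : ℂ) * ζ₁)‖ : ℂ)⁻¹ • S.kernel ((r : ℂ) * ζ₁)),
            Cφ ((‖S.kernel ((r : ℂ) * ζ₂)‖ : ℂ)⁻¹ • S.kernel ((r : ℂ) * ζ₂))⟫) (𝓝[<] 1)
        (𝓝 (L * conj (conj (c₂ * q₁ + d₂) / Δ₂ * (d₂ + c₂ / conj q₁)))) := by
    intro L hL
    have := ((hrl.mul (hGl.inv₀ hG0)).mul hAl).add (hL.mul hBl)
    rw [zero_mul, zero_mul, zero_add] at this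
    exact this.congr' hform
  constructor
  · intro heq
    have hφq : φ q₁ = ζ₂ := by rw [← heq]; exact (hφinv ζ₂ (by simp [n2])).2
    have b1 := aut_bdry p1 p2 p3 p4 q₁ e1 nq
    have b2 := aut_bdry s1 s2 s3 s4 q₁ e2 nq
    rw [← hφdef, hφq, ← hD₁] at b1
    rw [← hψdef, hψq, ← hD₂] at b2
    have c1 : ζ₁ * conj ζ₁ = 1 := by rw [Complex.mul_conj', n1]; simp
    have c2 : ζ₂ * conj ζ₂ = 1 := by rw [Complex.mul_conj', n2]; simp
    have cq : q₁ * conj q₁ = 1 := by rw [Complex.mul_conj', nq]; simp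
    have hx : 0 < Δ₁ / ‖c₁ * q₁ + d₁‖ ^ 2 := div_pos hΔ₁ (pow_pos (norm_pos_iff.2 e1) 2)
    have hy : 0 < Δ₂ / ‖c₂ * q₁ + d₂‖ ^ 2 := div_pos hΔ₂ (pow_pos (norm_pos_iff.2 e2) 2)
    have hB1 : conj (conj (c₂ * q₁ + d₂) / Δ₂ * (d₂ + c₂ / conj q₁)) =
        ((Δ₂ / ‖c₂ * q₁ + d₂‖ ^ 2 : ℝ) : ℂ)⁻¹ := by
      have : c₂ / conj q₁ = c₂ * q₁ := by
        rw [div_eq_iff cq₁0, mul_assoc, cq, mul_one]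
      rw [this]
      push_cast
      rw [← Complex.mul_conj', map_mul, map_div₀, Complex.conj_conj, Complex.conj_ofReal,
        add_comm d₂, inv_div]
      ring
    have hdφ : deriv φinv ζ₂ = D₁⁻¹ := by
      have := mob_inv_deriv a₁ b₁ c₁ d₁ ζ₂ hdet₁ (hφden ζ₂ (by simp [n2])).2
      rw [← hφinvdef, heq] at this
      exact (this.congr_of_eventuallyEq (Eventually.of_forall hφinvdef)).deriv
    rw [hdφ, hψinvd.deriv]
    set x := Δ₁ / ‖c₁ * q₁ + d₁‖ ^ 2
    set y := Δ₂ / ‖c₂ * q₁ + d₂‖ ^ 2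
    have nD1 : ‖D₁‖ = x := by
      have := congrArg norm b1
      simpa [nq, n2, abs_of_pos hx] using this
    have nD2 : ‖D₂‖ = y := by
      have := congrArg norm b2
      simpa [nq, n1, abs_of_pos hy] using this
    have hD20 : D₂ ≠ 0 := by rw [← norm_pos_iff, nD2]; exact hy
    have hyC : (y : ℂ) ≠ 0 := by exact_mod_cast hy.ne'
    have hxyC : (x : ℂ) + y ≠ 0 := by exact_mod_cast (add_pos hx hy).ne'
    have hκ : D₁ * (D₂⁻¹ * ζ₁) * conj ζ₂ = x / y := by
      rw [eq_div_iff hyC, ← b1, ← b2]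
      have : D₂⁻¹ * D₂ = 1 := inv_mul_cancel₀ hD20
      linear_combination (D₁ * conj ζ₂ * q₁) * (ζ₁ * conj ζ₁ * this + c1)
    rw [hκ, hφq, c2] at hhd
    have hne : -((x : ℂ) / y + 1) ≠ 0 := by
      rw [neg_ne_zero]
      have : (x : ℂ) / y + 1 = (x + y) / y := by field_simp
      rw [this]
      exact div_ne_zero hxyC hyC
    have lim := red _ (slope_lim h _ hhd (by rw [h1v, hφq, c2, sub_self]) hne)
    rw [hB1] at lim
    convert lim using 2
    rw [norm_inv, norm_inv, nD1, nD2]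
    have hR : 2 * x⁻¹ * y⁻¹ / (y⁻¹ + x⁻¹) = 2 / (x + y) := by
      have := (add_pos hx hy).ne'
      field_simp
    rw [hR]
    push_cast
    rw [neg_div_neg_eq]
    have : (x : ℂ) / y + 1 = (x + y) / y := by field_simp
    rw [this]
    field_simp
  · intro hne
    have hφq : φ q₁ ≠ ζ₂ := by
      intro hc
      apply hne
      rw [← hc]
      exact (hφinv q₁ (by simp [nq])).1
    have hh0 : h 1 ≠ 0 := by
      rw [h1v]
      intro hc
      apply hφq
      have c2 : ζ₂ * conj ζ₂ = 1 := by rw [Complex.mul_conj', n2]; simp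
      linear_combination (-ζ₂) * hc - φ q₁ * c2
    have hl := hhd.continuousAt.tendsto.mono_left (nhdsWithin_le_nhds (s := Set.Iio 1))
    have := red _ (hrl.mul (hl.inv₀ hh0))
    simpa using this
end
end

section
/- Let φ and ψ be automorphisms of the unit disk D, neither the identity, and suppose the commutator [C_ψ*, C_φ] is compact on H^2(D). Then for every ω ∈ ∂D, setting ζ_1 = φ^{-1}(ω) and ζ_2 = ψ^{-1}(ω), one has φ^{-1}(ζ_2) = ψ^{-1}(ζ_1) (hence φ∘ψ = ψ∘φ) and |(ψ^{-1})'(ζ_1)| · |ψ'(ζ_2)| = 1. -/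
open Filter MeasureTheory Metric Set
open scoped ComplexInnerProductSpace Topology

noncomputable section

local notation "cj" => starRingEnd ℂ

/-- Data of a Möbius automorphism of the disk. -/
structure Mob (a b c d : ℂ) (l : ℝ) (φ : ℂ → ℂ) : Prop where
  df : ∀ z, φ z = (a * z + b) / (c * z + d)
  den : ∀ z ∈ Metric.closedBall (0 : ℂ) 1, c * z + d ≠ 0
  ball : ∀ z, ‖z‖ < 1 → ‖φ z‖ < 1
  sph : ∀ z, ‖z‖ = 1 → ‖φ z‖ = 1
  pos : 0 < l
  key : ∀ z w, (c * z + d) * cj (c * w + d) - (a * z + b) * cj (a * w + b) = l * (1 - z * cj w)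

lemma cj_mul_self (z : ℂ) : z * cj z = ((‖z‖ ^ 2 : ℝ) : ℂ) := by
  rw [Complex.mul_conj, Complex.normSq_eq_norm_sq]

lemma mob_of {a b c d : ℂ} {φ : ℂ → ℂ}
    (df : ∀ z, φ z = (a * z + b) / (c * z + d))
    (den : ∀ z ∈ Metric.closedBall (0 : ℂ) 1, c * z + d ≠ 0)
    (ball : ∀ z, ‖z‖ < 1 → ‖φ z‖ < 1)
    (sph : ∀ z, ‖z‖ = 1 → ‖φ z‖ = 1) : ∃ l, Mob a b c d l φ := by
  have hs : ∀ z : ℂ, ‖z‖ = 1 → (c * z + d) * cj (c * z + d) - (a * z + b) * cj (a * z + b) = 0 := by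
    intro z hz
    have h1 := sph z hz
    have h2 := den z (by simp [hz])
    rw [df, norm_div, div_eq_one_iff_eq (by simpa using h2)] at h1
    rw [cj_mul_self, cj_mul_self, h1, sub_self]
  have e1 := hs 1 (by simp)
  have e2 := hs (-1) (by simp)
  have e3 := hs Complex.I (by simp)
  have e4 := hs (-Complex.I) (by simp)
  simp only [map_add, map_mul, map_neg, map_one, Complex.conj_I] at e1 e2 e3 e4
  have I2 := Complex.I_sq
  have hX : c * cj c + d * cj d - a * cj a - b * cj b = 0 := by
    linear_combination (e1 + e2) / 2
  have hYr : (c * cj d - a * cj b) + (cj c * d - cj a * b) = 0 := by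
    linear_combination (e1 - e2) / 2
  have hYi : (c * cj d - a * cj b) - (cj c * d - cj a * b) = 0 := by
    linear_combination -Complex.I * (e3 - e4) / 2 +
      ((c * cj d - a * cj b) - (cj c * d - cj a * b)) * I2
  have hY : c * cj d - a * cj b = 0 := by linear_combination (hYr + hYi) / 2
  have hY' : cj c * d - cj a * b = 0 := by linear_combination (hYr - hYi) / 2
  refine ⟨‖d‖ ^ 2 - ‖b‖ ^ 2, df, den, ball, sph, ?_, ?_⟩
  · have h1 := ball 0 (by simp)
    have h2 := den 0 (by simp)
    rw [df] at h1
    simp only [mul_zero, zero_add] at h1 h2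
    rw [norm_div, div_lt_one (by simpa using h2)] at h1
    have := norm_nonneg b
    nlinarith
  · intro z w
    have hl : ((‖d‖ ^ 2 - ‖b‖ ^ 2 : ℝ) : ℂ) = d * cj d - b * cj b := by
      rw [cj_mul_self, cj_mul_self]; push_cast; ring
    rw [hl]
    simp only [map_add, map_mul]
    linear_combination (z * cj w) * hX + z * hY + cj w * hY'

namespace Mob
variable {a b c d : ℂ} {l : ℝ} {φ : ℂ → ℂ}

lemma kernel_eq (h : Mob a b c d l φ) {z w : ℂ} (hz : c * z + d ≠ 0) (hw : c * w + d ≠ 0) :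
    1 - φ z * cj (φ w) = l * (1 - z * cj w) / ((c * z + d) * cj (c * w + d)) := by
  have hw' : cj (c * w + d) ≠ 0 := (map_ne_zero _).mpr hw
  rw [← h.key, h.df, h.df, map_div₀]
  generalize c * z + d = q at *
  generalize cj (c * w + d) = q' at *
  field_simp

lemma cont (h : Mob a b c d l φ) {z : ℂ} (hz : ‖z‖ ≤ 1) : ContinuousAt φ z := by
  have : φ = fun z => (a * z + b) / (c * z + d) := funext h.df
  rw [this]
  have := h.den z (by simpa using hz)
  fun_prop (disch := assumption)
end Mob

lemma one_sub_ne_s12 {u v : ℂ} (hu : ‖u‖ < 1) (hv : ‖v‖ ≤ 1) : 1 - v * cj u ≠ 0 := by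
  intro h
  have h1 : v * cj u = 1 := (sub_eq_zero.mp h).symm
  have h2 : ‖v‖ * ‖u‖ = 1 := by simpa using congrArg norm h1
  nlinarith [norm_nonneg u, norm_nonneg v]

lemma eval_k (S : DiskKernelSpace 1) {z w : ℂ} (hw : ‖w‖ < 1) (hz : ‖z‖ < 1) :
    S.eval (S.kernel w) z = (1 - z * cj w)⁻¹ := by
  rw [S.eval_kernel w (by simpa using hw) z (by simpa using hz)]
  simp [Complex.cpow_neg]

lemma inner_k (S : DiskKernelSpace 1) (f : S.H) {w : ℂ} (hw : ‖w‖ < 1) :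
    ⟪S.kernel w, f⟫ = S.eval f w := S.reproducing f w (by simpa using hw)

lemma comp_k (S : DiskKernelSpace 1) {φ : ℂ → ℂ} {C : S.H →L[ℂ] S.H}
    (hC : S.IsCompositionOperator φ C) (f : S.H) {z : ℂ} (hz : ‖z‖ < 1) :
    S.eval (C f) z = S.eval f (φ z) := hC f z (by simpa using hz)

def al (c d : ℂ) (l : ℝ) (p : ℂ) : ℂ := -(cj (c * p + d) * (c / cj p)) / l
def be (c d : ℂ) (l : ℝ) (p : ℂ) : ℂ := (cj (c * p + d) * (c / cj p + d)) / l

lemma comp_kernel (S : DiskKernelSpace 1) {a b c d : ℂ} {l : ℝ} {φ : ℂ → ℂ}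
    (h : Mob a b c d l φ) {C : S.H →L[ℂ] S.H}
    (hC : S.IsCompositionOperator φ C) {p : ℂ} (hp : ‖p‖ < 1) (hp0 : p ≠ 0) :
    C (S.kernel (φ p)) = al c d l p • S.kernel 0 + be c d l p • S.kernel p := by
  apply S.eval_injective
  intro z hz
  have hz : ‖z‖ < 1 := by simpa using hz
  rw [comp_k S hC _ hz, S.eval_add, S.eval_smul, S.eval_smul, eval_k S (h.ball _ hp) (h.ball _ hz),
    eval_k S (by simp) hz, eval_k S hp hz]
  have hzd := h.den z (by simpa using hz.le)
  have hpd := h.den p (by simpa using hp.le)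
  rw [h.kernel_eq hzd hpd]
  have hl : (l : ℂ) ≠ 0 := by exact_mod_cast h.pos.ne'
  have hp0' : cj p ≠ 0 := by simpa using hp0
  have hpd' : cj (c * p + d) ≠ 0 := (map_ne_zero _).mpr hpd
  have h1 := one_sub_ne_s12 hp hz.le
  unfold al be
  generalize cj (c * p + d) = q at *
  simp only [map_zero, mul_zero, sub_zero, inv_one]
  field_simp
  ring

lemma F_eq (S : DiskKernelSpace 1) {a₁ b₁ c₁ d₁ a₂ b₂ c₂ d₂ : ℂ} {l₁ l₂ : ℝ} {φ ψ : ℂ → ℂ}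
  (hφ : Mob a₁ b₁ c₁ d₁ l₁ φ) (hψ : Mob a₂ b₂ c₂ d₂ l₂ ψ)
  {Cφ Cψ : S.H →L[ℂ] S.H}
  (hCφ : S.IsCompositionOperator φ Cφ) (hCψ : S.IsCompositionOperator ψ Cψ)
    {v p : ℂ} (hv : ‖v‖ < 1) (hp : ‖p‖ < 1) (hp0 : p ≠ 0) :
    ⟪S.kernel v, ((ContinuousLinearMap.adjoint Cψ).comp Cφ -
        Cφ.comp (ContinuousLinearMap.adjoint Cψ)) (S.kernel (φ p))⟫ =
      al c₁ d₁ l₁ p * cj ((1 - ψ 0 * cj v)⁻¹) + be c₁ d₁ l₁ p * cj ((1 - ψ p * cj v)⁻¹)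
        - cj ((1 - ψ (φ p) * cj (φ v))⁻¹) := by
  have h0 : ‖(0 : ℂ)‖ < 1 := by simp
  have e1 : ∀ u, ‖u‖ < 1 → ∀ w, ‖w‖ < 1 →
      ⟪Cψ (S.kernel w), S.kernel u⟫ = cj ((1 - ψ u * cj w)⁻¹) := by
    intro u hu w hw
    rw [← inner_conj_symm, inner_k S _ hu, comp_k S hCψ _ hu, eval_k S hw (hψ.ball _ hu)]
  simp only [_root_.sub_apply, ContinuousLinearMap.comp_apply, inner_sub_right]
  rw [ContinuousLinearMap.adjoint_inner_right, comp_kernel S hφ hCφ hp hp0, inner_add_right,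
    inner_smul_right, inner_smul_right, e1 0 h0 v hv, e1 p hp v hv]
  rw [inner_k S _ hv, comp_k S hCφ _ hv, ← inner_k S _ (hφ.ball _ hv),
    ContinuousLinearMap.adjoint_inner_right, e1 _ (hφ.ball _ hp) _ (hφ.ball _ hv)]

lemma norm_k (S : DiskKernelSpace 1) {a b c d : ℂ} {l : ℝ} {φ : ℂ → ℂ}
    (h : Mob a b c d l φ) {p : ℂ} (hp : ‖p‖ < 1) :
    Real.sqrt (1 - ‖p‖ ^ 2) * ‖S.kernel (φ p)‖ ≤ Real.sqrt ((‖c‖ + ‖d‖) ^ 2 / l) := by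
  have hpd := h.den p (by simpa using hp.le)
  have hs : 0 < 1 - ‖p‖ ^ 2 := by nlinarith [norm_nonneg p]
  have hl := h.pos
  have e : ‖S.kernel (φ p)‖ ^ 2 = ‖c * p + d‖ ^ 2 / (l * (1 - ‖p‖ ^ 2)) := by
    have h1 : ⟪S.kernel (φ p), S.kernel (φ p)⟫ = ((‖S.kernel (φ p)‖ ^ 2 : ℝ) : ℂ) := by
      rw [inner_self_eq_norm_sq_to_K]; push_cast; rfl
    rw [inner_k S _ (h.ball _ hp), eval_k S (h.ball _ hp) (h.ball _ hp), h.kernel_eq hpd hpd,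
      cj_mul_self, cj_mul_self, inv_div] at h1
    have h2 : ((‖c * p + d‖ ^ 2 / (l * (1 - ‖p‖ ^ 2)) : ℝ) : ℂ) =
      ((‖S.kernel (φ p)‖ ^ 2 : ℝ) : ℂ) := by rw [← h1]; push_cast; rfl
    exact (Complex.ofReal_injective h2).symm
  apply Real.le_sqrt_of_sq_le
  rw [mul_pow, Real.sq_sqrt hs.le, e]
  have : (1 - ‖p‖ ^ 2) * (‖c * p + d‖ ^ 2 / (l * (1 - ‖p‖ ^ 2))) = ‖c * p + d‖ ^ 2 / l := by
    field_simp
  rw [this]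
  have h3 : ‖c * p + d‖ ≤ ‖c‖ + ‖d‖ := by
    refine (norm_add_le _ _).trans ?_
    rw [norm_mul]
    nlinarith [norm_nonneg c]
  gcongr

lemma al_tendsto {ζ : ℂ} {p : ℕ → ℂ} (hζ : ‖ζ‖ = 1)
    (hpl : Tendsto p atTop (𝓝 ζ)) (c d : ℂ) (l : ℝ) : Tendsto (fun n => al c d l (p n)) atTop (𝓝 (al c d l ζ)) := by
  have hz : cj ζ ≠ 0 := by
    have : ζ ≠ 0 := by rintro rfl; simp at hζ
    simpa using this
  have hc : Tendsto (fun n => cj (p n)) atTop (𝓝 (cj ζ)) :=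
    (Complex.continuous_conj.tendsto _).comp hpl
  have hd : Tendsto (fun n => cj (c * p n + d)) atTop (𝓝 (cj (c * ζ + d))) :=
    (Complex.continuous_conj.tendsto _).comp ((hpl.const_mul c).add_const d)
  exact ((hd.mul (tendsto_const_nhds.div hc hz)).neg).div_const _

lemma be_tendsto {ζ : ℂ} {p : ℕ → ℂ} (hζ : ‖ζ‖ = 1)
    (hpl : Tendsto p atTop (𝓝 ζ)) (c d : ℂ) (l : ℝ) : Tendsto (fun n => be c d l (p n)) atTop (𝓝 (be c d l ζ)) := by
  have hz : cj ζ ≠ 0 := by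
    have : ζ ≠ 0 := by rintro rfl; simp at hζ
    simpa using this
  have hc : Tendsto (fun n => cj (p n)) atTop (𝓝 (cj ζ)) :=
    (Complex.continuous_conj.tendsto _).comp hpl
  have hd : Tendsto (fun n => cj (c * p n + d)) atTop (𝓝 (cj (c * ζ + d))) :=
    (Complex.continuous_conj.tendsto _).comp ((hpl.const_mul c).add_const d)
  exact (hd.mul ((tendsto_const_nhds.div hc hz).add_const d)).div_const _

lemma s_tendsto {ζ : ℂ} {p : ℕ → ℂ} (hζ : ‖ζ‖ = 1)
    (hpl : Tendsto p atTop (𝓝 ζ)) : Tendsto (fun n => 1 - ‖p n‖ ^ 2) atTop (𝓝 0) := by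
  have := (hpl.norm.pow 2).const_sub 1
  simpa [hζ] using this

lemma be_val {c d ζ : ℂ} {l : ℝ} (hζ : ‖ζ‖ = 1) :
    be c d l ζ = ((‖c * ζ + d‖ ^ 2 / l : ℝ) : ℂ) := by
  have h0 : ζ ≠ 0 := by rintro rfl; simp at hζ
  have h1 : ζ * cj ζ = 1 := by rw [cj_mul_self, hζ]; simp
  have h2 : c / cj ζ = c * ζ := by
    rw [div_eq_iff (by simpa using h0), mul_assoc, h1, mul_one]
  unfold be
  rw [h2, mul_comm, cj_mul_self]
  push_cast; rfl

lemma ker_tendsto {x y : ℕ → ℂ} {X Y : ℂ} (hx : Tendsto x atTop (𝓝 X)) (hy : Tendsto y atTop (𝓝 Y))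
    (h : 1 - X * cj Y ≠ 0) :
    Tendsto (fun n => cj ((1 - x n * cj (y n))⁻¹)) atTop (𝓝 (cj ((1 - X * cj Y)⁻¹))) := by
  have hy' : Tendsto (fun n => cj (y n)) atTop (𝓝 (cj Y)) :=
    (Complex.continuous_conj.tendsto _).comp hy
  exact (Complex.continuous_conj.tendsto _).comp (((hx.mul hy').const_sub 1).inv₀ h)

lemma core_lim (S : DiskKernelSpace 1) {a₁ b₁ c₁ d₁ a₂ b₂ c₂ d₂ : ℂ} {l₁ l₂ : ℝ} {φ ψ : ℂ → ℂ}
    (hφ : Mob a₁ b₁ c₁ d₁ l₁ φ) (hψ : Mob a₂ b₂ c₂ d₂ l₂ ψ)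
    {Cφ Cψ : S.H →L[ℂ] S.H}
    (hCφ : S.IsCompositionOperator φ Cφ) (hCψ : S.IsCompositionOperator ψ Cψ)
    (hcpt : IsCompactOperator
      ⇑((ContinuousLinearMap.adjoint Cψ).comp Cφ -
        Cφ.comp (ContinuousLinearMap.adjoint Cψ)))
    {ζ : ℂ} {p : ℕ → ℂ} (hζ : ‖ζ‖ = 1) (hpl : Tendsto p atTop (𝓝 ζ))
    (hp : ∀ n, ‖p n‖ < 1) (hp0 : ∀ n, p n ≠ 0) :
    ∃ θ : ℕ → ℕ, StrictMono θ ∧ Tendsto (fun n => ((1 - ‖p (θ n)‖ ^ 2 : ℝ) : ℂ) *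
      cj ((1 - ψ (φ (p (θ n))) * cj (φ (ψ (p (θ n)))))⁻¹)) atTop
      (𝓝 ((‖c₁ * ζ + d₁‖ ^ 2 / l₁ * (‖c₂ * ζ + d₂‖ ^ 2 / l₂) : ℝ) : ℂ)) := by
  have hF := fun {v p} => F_eq S hφ hψ hCφ hCψ (v := v) (p := p)
  set T := ((ContinuousLinearMap.adjoint Cψ).comp Cφ -
        Cφ.comp (ContinuousLinearMap.adjoint Cψ)) with hT
  have hs : ∀ n, 0 < 1 - ‖p n‖ ^ 2 := fun n => by nlinarith [norm_nonneg (p n), hp n]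
  let σ : ℕ → ℝ := fun n => Real.sqrt (1 - ‖p n‖ ^ 2)
  have hσ0 : Tendsto σ atTop (𝓝 0) := by
    have := (Real.continuous_sqrt.tendsto 0).comp (s_tendsto hζ hpl)
    rw [Real.sqrt_zero] at this
    exact this
  have hσ0' : Tendsto (fun n => (σ n : ℂ)) atTop (𝓝 0) := by
    have := (Complex.continuous_ofReal.tendsto 0).comp hσ0
    rw [Complex.ofReal_zero] at this
    exact this
  let G : ℕ → S.H := fun n => (σ n : ℂ) • S.kernel (φ (p n))
  let Hh : ℕ → S.H := fun n => (σ n : ℂ) • S.kernel (ψ (p n))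
  have hσn : ∀ n, ‖(σ n : ℂ)‖ = σ n := fun n => by
    simp [σ, abs_of_nonneg]
  have hG : ∀ n, ‖G n‖ ≤ Real.sqrt ((‖c₁‖ + ‖d₁‖) ^ 2 / l₁) := fun n => by
    simp only [G, norm_smul, hσn]; exact norm_k S hφ (hp n)
  have hH : ∀ n, ‖Hh n‖ ≤ Real.sqrt ((‖c₂‖ + ‖d₂‖) ^ 2 / l₂) := fun n => by
    simp only [Hh, norm_smul, hσn]; exact norm_k S hψ (hp n)
  obtain ⟨K, hK, hKs⟩ := hcpt.image_closedBall_subset_compact (f := T.toLinearMap)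
    (Real.sqrt ((‖c₁‖ + ‖d₁‖) ^ 2 / l₁))
  have hTG : ∀ n, T (G n) ∈ K := fun n => hKs ⟨G n, by simpa using hG n, rfl⟩
  obtain ⟨y, -, θ, hθ, hy⟩ := hK.tendsto_subseq hTG
  have hφl : Tendsto (fun n => φ (p n)) atTop (𝓝 (φ ζ)) := (hφ.cont hζ.le).tendsto.comp hpl
  have hψl : Tendsto (fun n => ψ (p n)) atTop (𝓝 (ψ ζ)) := (hψ.cont hζ.le).tendsto.comp hpl
  have hψφl : Tendsto (fun n => ψ (φ (p n))) atTop (𝓝 (ψ (φ ζ))) :=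
    (hψ.cont (hφ.sph _ hζ).le).tendsto.comp hφl
  have hy0 : y = 0 := by
    have hev : ∀ u, ‖u‖ < 1 → S.eval y u = 0 := by
      intro u hu
      have h1 : Tendsto (fun n => ⟪S.kernel u, T (G n)⟫) atTop (𝓝 0) := by
        have h2 : (fun n => ⟪S.kernel u, T (G n)⟫) = fun n => (σ n : ℂ) *
          (al c₁ d₁ l₁ (p n) * cj ((1 - ψ 0 * cj u)⁻¹) + be c₁ d₁ l₁ (p n) *
            cj ((1 - ψ (p n) * cj u)⁻¹) - cj ((1 - ψ (φ (p n)) * cj (φ u))⁻¹)) := by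
          funext n
          simp only [G, map_smul, inner_smul_right]
          rw [hF hu (hp n) (hp0 n)]
        rw [h2]
        have h3 := hσ0'.mul ((((al_tendsto hζ hpl c₁ d₁ l₁).mul_const (cj ((1 - ψ 0 * cj u)⁻¹))).add
          ((be_tendsto hζ hpl c₁ d₁ l₁).mul
            (ker_tendsto hψl tendsto_const_nhds (one_sub_ne_s12 hu (hψ.sph _ hζ).le)))).sub
          (ker_tendsto hψφl tendsto_const_nhds
            (one_sub_ne_s12 (hφ.ball _ hu) (hψ.sph _ (hφ.sph _ hζ)).le)))
        simpa using h3
      have h2 : Tendsto (fun n => ⟪S.kernel u, T (G (θ n))⟫) atTop (𝓝 ⟪S.kernel u, y⟫) :=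
        tendsto_const_nhds.inner hy
      rw [← inner_k S y hu]
      exact tendsto_nhds_unique h2 (h1.comp hθ.tendsto_atTop)
    apply S.eval_injective
    intro z hz
    have hz : ‖z‖ < 1 := by simpa using hz
    rw [hev z hz, ← inner_k S 0 hz, inner_zero_right]
  have hlim : Tendsto (fun n => ⟪Hh (θ n), T (G (θ n))⟫) atTop (𝓝 0) := by
    rw [hy0] at hy
    have hy' : Tendsto (fun n => Real.sqrt ((‖c₂‖ + ‖d₂‖) ^ 2 / l₂) * ‖T (G (θ n))‖)
        atTop (𝓝 0) := by
      simpa using hy.norm.const_mul (Real.sqrt ((‖c₂‖ + ‖d₂‖) ^ 2 / l₂))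
    refine squeeze_zero_norm (fun n => ?_) hy'
    exact (norm_inner_le_norm _ _).trans (by gcongr; exact hH _)
  refine ⟨θ, hθ, ?_⟩
  have hσσ : ∀ n, (σ n : ℂ) * σ n = ((1 - ‖p n‖ ^ 2 : ℝ) : ℂ) := fun n => by
    rw [← Complex.ofReal_mul, Real.mul_self_sqrt (hs n).le]
  have hs0 : Tendsto (fun n => ((1 - ‖p n‖ ^ 2 : ℝ) : ℂ)) atTop (𝓝 0) := by
    have := (Complex.continuous_ofReal.tendsto 0).comp (s_tendsto hζ hpl)
    rw [Complex.ofReal_zero] at this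
    exact this
  have heq : ∀ n, ((1 - ‖p n‖ ^ 2 : ℝ) : ℂ) * cj ((1 - ψ (φ (p n)) * cj (φ (ψ (p n))))⁻¹) =
      ((1 - ‖p n‖ ^ 2 : ℝ) : ℂ) * (al c₁ d₁ l₁ (p n) * cj ((1 - ψ 0 * cj (ψ (p n)))⁻¹)) +
      be c₁ d₁ l₁ (p n) * ((‖c₂ * p n + d₂‖ ^ 2 / l₂ : ℝ) : ℂ) - ⟪Hh n, T (G n)⟫ := by
    intro n
    have hpd := hψ.den (p n) (by simpa using (hp n).le)
    have hs' : ((1 - ‖p n‖ ^ 2 : ℝ) : ℂ) ≠ 0 := by exact_mod_cast (hs n).ne'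
    have e1 : ((‖c₂ * p n + d₂‖ ^ 2 / l₂ : ℝ) : ℂ) =
        ((1 - ‖p n‖ ^ 2 : ℝ) : ℂ) * cj ((1 - ψ (p n) * cj (ψ (p n)))⁻¹) := by
      have hl : (l₂ : ℂ) ≠ 0 := by exact_mod_cast hψ.pos.ne'
      have : (1 - p n * cj (p n)) = ((1 - ‖p n‖ ^ 2 : ℝ) : ℂ) := by
        rw [cj_mul_self]; push_cast; rfl
      rw [hψ.kernel_eq hpd hpd, cj_mul_self (c₂ * p n + d₂), this, inv_div, map_div₀, map_mul,
        Complex.conj_ofReal, Complex.conj_ofReal, Complex.conj_ofReal, Complex.ofReal_div]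
      field_simp
    rw [e1]
    simp only [Hh, G, map_smul, inner_smul_right, inner_smul_left, Complex.conj_ofReal]
    rw [hF (hψ.ball _ (hp n)) (hp n) (hp0 n), ← hσσ]
    ring
  simp only [heq]
  have hψ0 : 1 - ψ 0 * cj (ψ ζ) ≠ 0 := by
    have := one_sub_ne_s12 (hψ.ball 0 (by simp)) (hψ.sph _ hζ).le
    intro h
    apply this
    have := congrArg cj h
    simpa [mul_comm] using this
  have t1 := hs0.mul ((al_tendsto hζ hpl c₁ d₁ l₁).mul
    (ker_tendsto (tendsto_const_nhds (x := ψ 0)) hψl hψ0))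
  have t2 : Tendsto (fun n => ((‖c₂ * p n + d₂‖ ^ 2 / l₂ : ℝ) : ℂ)) atTop
      (𝓝 ((‖c₂ * ζ + d₂‖ ^ 2 / l₂ : ℝ) : ℂ)) :=
    (Complex.continuous_ofReal.tendsto _).comp
      (((((hpl.const_mul c₂).add_const d₂).norm).pow 2).div_const l₂)
  have t3 := ((t1.add ((be_tendsto hζ hpl c₁ d₁ l₁).mul t2)).comp hθ.tendsto_atTop).sub hlim
  rw [be_val hζ, zero_mul, zero_add, sub_zero, ← Complex.ofReal_mul] at t3
  exact t3

lemma exists_seq_s12 (ζ : ℂ) (hζ : ‖ζ‖ = 1) : ∃ p : ℕ → ℂ, Tendsto p atTop (𝓝 ζ) ∧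
    (∀ n, ‖p n‖ < 1) ∧ ∀ n, p n ≠ 0 := by
  have h0 : ζ ≠ 0 := by rintro rfl; simp at hζ
  have hr : ∀ n : ℕ, (0 : ℝ) < ((n : ℝ) + 1) / ((n : ℝ) + 1 + 1) := fun n => by positivity
  refine ⟨fun n => (((n : ℝ) + 1) / ((n : ℝ) + 1 + 1) : ℝ) * ζ, ?_, ?_, ?_⟩
  · have h1 : Tendsto (fun n : ℕ => ((n : ℝ) + 1) / ((n : ℝ) + 1 + 1)) atTop (𝓝 1) := by
      have := (tendsto_natCast_div_add_atTop (1 : ℝ)).comp (tendsto_add_atTop_nat 1)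
      refine this.congr fun n => ?_
      simp
    have h2 := ((Complex.continuous_ofReal.tendsto _).comp h1).mul_const ζ
    simpa using h2
  · intro n
    rw [norm_mul, hζ, mul_one, Complex.norm_real, Real.norm_of_nonneg (hr n).le,
      div_lt_one (by positivity)]
    linarith
  · intro n
    exact mul_ne_zero (by exact_mod_cast (hr n).ne') h0

/-- Commutation on the circle. -/
lemma comm_circle (S : DiskKernelSpace 1) {a₁ b₁ c₁ d₁ a₂ b₂ c₂ d₂ : ℂ} {l₁ l₂ : ℝ} {φ ψ : ℂ → ℂ}
    (hφ : Mob a₁ b₁ c₁ d₁ l₁ φ) (hψ : Mob a₂ b₂ c₂ d₂ l₂ ψ)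
    {Cφ Cψ : S.H →L[ℂ] S.H}
    (hCφ : S.IsCompositionOperator φ Cφ) (hCψ : S.IsCompositionOperator ψ Cψ)
    (hcpt : IsCompactOperator
      ⇑((ContinuousLinearMap.adjoint Cψ).comp Cφ -
        Cφ.comp (ContinuousLinearMap.adjoint Cψ)))
    {ζ : ℂ} (hζ : ‖ζ‖ = 1) : φ (ψ ζ) = ψ (φ ζ) := by
  obtain ⟨p, hpl, hp, hp0⟩ := exists_seq_s12 ζ hζ
  obtain ⟨θ, hθ, hlim⟩ := core_lim S hφ hψ hCφ hCψ hcpt hζ hpl hp hp0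
  by_contra hne
  have hn1 : ‖φ (ψ ζ)‖ = 1 := hφ.sph _ (hψ.sph _ hζ)
  have hne' : 1 - ψ (φ ζ) * cj (φ (ψ ζ)) ≠ 0 := by
    intro h
    apply hne
    have h1 : φ (ψ ζ) * cj (φ (ψ ζ)) = 1 := by rw [cj_mul_self, hn1]; simp
    have h2 : cj (φ (ψ ζ)) ≠ 0 := by
      intro h0; rw [h0, mul_zero] at h1; exact zero_ne_one h1
    apply mul_right_cancel₀ h2
    rw [h1]; linear_combination h
  have hφl : Tendsto (fun n => φ (p n)) atTop (𝓝 (φ ζ)) := (hφ.cont hζ.le).tendsto.comp hpl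
  have hψl : Tendsto (fun n => ψ (p n)) atTop (𝓝 (ψ ζ)) := (hψ.cont hζ.le).tendsto.comp hpl
  have hψφl : Tendsto (fun n => ψ (φ (p n))) atTop (𝓝 (ψ (φ ζ))) :=
    (hψ.cont (hφ.sph _ hζ).le).tendsto.comp hφl
  have hφψl : Tendsto (fun n => φ (ψ (p n))) atTop (𝓝 (φ (ψ ζ))) :=
    (hφ.cont (hψ.sph _ hζ).le).tendsto.comp hψl
  have hs0 : Tendsto (fun n => ((1 - ‖p n‖ ^ 2 : ℝ) : ℂ)) atTop (𝓝 0) := by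
    have := (Complex.continuous_ofReal.tendsto 0).comp (s_tendsto hζ hpl)
    rw [Complex.ofReal_zero] at this
    exact this
  have h1 := (hs0.mul (ker_tendsto hψφl hφψl hne')).comp hθ.tendsto_atTop
  have h2 := tendsto_nhds_unique hlim h1
  rw [zero_mul] at h2
  have h3 := Complex.ofReal_eq_zero.mp h2
  have e1 : 0 < ‖c₁ * ζ + d₁‖ := norm_pos_iff.mpr (hφ.den ζ (by simp [hζ]))
  have e2 : 0 < ‖c₂ * ζ + d₂‖ := norm_pos_iff.mpr (hψ.den ζ (by simp [hζ]))
  have := hφ.pos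
  have := hψ.pos
  have : 0 < ‖c₁ * ζ + d₁‖ ^ 2 / l₁ * (‖c₂ * ζ + d₂‖ ^ 2 / l₂) := by positivity
  exact this.ne' h3

lemma modulus_eq (S : DiskKernelSpace 1) {a₁ b₁ c₁ d₁ a₂ b₂ c₂ d₂ : ℂ} {l₁ l₂ : ℝ} {φ ψ : ℂ → ℂ}
    (hφ : Mob a₁ b₁ c₁ d₁ l₁ φ) (hψ : Mob a₂ b₂ c₂ d₂ l₂ ψ)
    {Cφ Cψ : S.H →L[ℂ] S.H}
    (hCφ : S.IsCompositionOperator φ Cφ) (hCψ : S.IsCompositionOperator ψ Cψ)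
    (hcpt : IsCompactOperator
      ⇑((ContinuousLinearMap.adjoint Cψ).comp Cφ -
        Cφ.comp (ContinuousLinearMap.adjoint Cψ)))
    (hcomm : ∀ z, ‖z‖ < 1 → φ (ψ z) = ψ (φ z))
    {ζ : ℂ} (hζ : ‖ζ‖ = 1) : ‖c₂ * φ ζ + d₂‖ = ‖c₂ * ζ + d₂‖ := by
  obtain ⟨p, hpl, hp, hp0⟩ := exists_seq_s12 ζ hζ
  obtain ⟨θ, hθ, hlim⟩ := core_lim S hφ hψ hCφ hCψ hcpt hζ hpl hp hp0
  have hφl : Tendsto (fun n => φ (p n)) atTop (𝓝 (φ ζ)) := (hφ.cont hζ.le).tendsto.comp hpl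
  have heq : ∀ n, ((1 - ‖p n‖ ^ 2 : ℝ) : ℂ) * cj ((1 - ψ (φ (p n)) * cj (φ (ψ (p n))))⁻¹) =
      ((‖c₁ * p n + d₁‖ ^ 2 / l₁ * (‖c₂ * φ (p n) + d₂‖ ^ 2 / l₂) : ℝ) : ℂ) := by
    intro n
    have hs : 0 < 1 - ‖p n‖ ^ 2 := by nlinarith [norm_nonneg (p n), hp n]
    have hpd := hφ.den (p n) (by simpa using (hp n).le)
    have hpd2 := hψ.den (φ (p n)) (by simpa using (hφ.ball _ (hp n)).le)
    have e1 : 1 - p n * cj (p n) = ((1 - ‖p n‖ ^ 2 : ℝ) : ℂ) := by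
      rw [cj_mul_self]; push_cast; rfl
    rw [hcomm _ (hp n), hψ.kernel_eq hpd2 hpd2, hφ.kernel_eq hpd hpd, e1, cj_mul_self, cj_mul_self,
      ← Complex.ofReal_mul, ← Complex.ofReal_div, ← Complex.ofReal_mul, ← Complex.ofReal_div,
      ← Complex.ofReal_inv, Complex.conj_ofReal, ← Complex.ofReal_mul]
    congr 1
    have := hφ.pos
    have := hψ.pos
    have := norm_pos_iff.mpr hpd
    have := norm_pos_iff.mpr hpd2
    field_simp
  simp only [heq] at hlim
  have t : Tendsto (fun n => ((‖c₁ * p n + d₁‖ ^ 2 / l₁ * (‖c₂ * φ (p n) + d₂‖ ^ 2 / l₂) : ℝ) : ℂ))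
      atTop (𝓝 ((‖c₁ * ζ + d₁‖ ^ 2 / l₁ * (‖c₂ * φ ζ + d₂‖ ^ 2 / l₂) : ℝ) : ℂ)) :=
    (Complex.continuous_ofReal.tendsto _).comp
      ((((((hpl.const_mul c₁).add_const d₁).norm).pow 2).div_const l₁).mul
       (((((hφl.const_mul c₂).add_const d₂).norm).pow 2).div_const l₂))
  have h := Complex.ofReal_injective (tendsto_nhds_unique (t.comp hθ.tendsto_atTop) hlim)
  have e1 : 0 < ‖c₁ * ζ + d₁‖ := norm_pos_iff.mpr (hφ.den ζ (by simp [hζ]))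
  have h1 := hφ.pos
  have h2 := hψ.pos
  have h3 := mul_left_cancel₀ (by positivity) h
  have h4 := (div_left_inj' h2.ne').mp h3
  exact (pow_left_inj₀ (norm_nonneg _) (norm_nonneg _) two_ne_zero).mp h4

lemma comm_disk {a₁ b₁ c₁ d₁ a₂ b₂ c₂ d₂ : ℂ} {l₁ l₂ : ℝ} {φ ψ : ℂ → ℂ}
    (hφ : Mob a₁ b₁ c₁ d₁ l₁ φ) (hψ : Mob a₂ b₂ c₂ d₂ l₂ ψ)
    (hc : ∀ ζ : ℂ, ‖ζ‖ = 1 → φ (ψ ζ) = ψ (φ ζ)) {z : ℂ} (hz : ‖z‖ < 1) :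
    φ (ψ z) = ψ (φ z) := by
  have equ : ∀ z, ‖z‖ ≤ 1 → ‖φ z‖ ≤ 1 → ‖ψ z‖ ≤ 1 → (φ (ψ z) = ψ (φ z) ↔
      (a₁ * (a₂ * z + b₂) + b₁ * (c₂ * z + d₂)) * (c₂ * (a₁ * z + b₁) + d₂ * (c₁ * z + d₁)) =
      (a₂ * (a₁ * z + b₁) + b₂ * (c₁ * z + d₁)) * (c₁ * (a₂ * z + b₂) + d₁ * (c₂ * z + d₂))) := by
    intro z hz h1 h2
    have e1 := hφ.den z (by simpa using hz)
    have e2 := hψ.den z (by simpa using hz)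
    have e3 := hφ.den _ (by simpa using h2)
    have e4 := hψ.den _ (by simpa using h1)
    have f3 : c₁ * (a₂ * z + b₂) + d₁ * (c₂ * z + d₂) ≠ 0 := by
      have : c₁ * (a₂ * z + b₂) + d₁ * (c₂ * z + d₂) = (c₁ * ψ z + d₁) * (c₂ * z + d₂) := by
        rw [hψ.df]; generalize c₂ * z + d₂ = q at *; field_simp
      rw [this]; exact mul_ne_zero e3 e2
    have f4 : c₂ * (a₁ * z + b₁) + d₂ * (c₁ * z + d₁) ≠ 0 := by
      have : c₂ * (a₁ * z + b₁) + d₂ * (c₁ * z + d₁) = (c₂ * φ z + d₂) * (c₁ * z + d₁) := by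
        rw [hφ.df]; generalize c₁ * z + d₁ = q at *; field_simp
      rw [this]; exact mul_ne_zero e4 e1
    have g1 : φ (ψ z) = (a₁ * (a₂ * z + b₂) + b₁ * (c₂ * z + d₂)) /
        (c₁ * (a₂ * z + b₂) + d₁ * (c₂ * z + d₂)) := by
      rw [hφ.df, div_eq_div_iff e3 f3, hψ.df]; generalize c₂ * z + d₂ = q at *; field_simp
    have g2 : ψ (φ z) = (a₂ * (a₁ * z + b₁) + b₂ * (c₁ * z + d₁)) /
        (c₂ * (a₁ * z + b₁) + d₂ * (c₁ * z + d₁)) := by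
      rw [hψ.df, div_eq_div_iff e4 f4, hφ.df]; generalize c₁ * z + d₁ = q at *; field_simp
    rw [g1, g2, div_eq_div_iff f3 f4]
  have hq : ∀ ζ : ℂ, ‖ζ‖ = 1 → _ := fun ζ hζ =>
    (equ ζ hζ.le (hφ.sph _ hζ).le (hψ.sph _ hζ).le).mp (hc ζ hζ)
  rw [equ z hz.le (hφ.ball _ hz).le (hψ.ball _ hz).le]
  have q1 := hq 1 (by simp)
  have q2 := hq (-1) (by simp)
  have q3 := hq Complex.I (by simp)
  obtain ⟨A, B, C, hABC⟩ : ∃ A B C : ℂ, ∀ z : ℂ,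
      (a₁ * (a₂ * z + b₂) + b₁ * (c₂ * z + d₂)) * (c₂ * (a₁ * z + b₁) + d₂ * (c₁ * z + d₁)) -
      (a₂ * (a₁ * z + b₁) + b₂ * (c₁ * z + d₁)) * (c₁ * (a₂ * z + b₂) + d₁ * (c₂ * z + d₂)) =
      A + B * z + C * z ^ 2 := by
    refine ⟨(a₁ * b₂ + b₁ * d₂) * (c₂ * b₁ + d₂ * d₁) - (a₂ * b₁ + b₂ * d₁) * (c₁ * b₂ + d₁ * d₂),
      (a₁ * a₂ + b₁ * c₂) * (c₂ * b₁ + d₂ * d₁) + (a₁ * b₂ + b₁ * d₂) * (c₂ * a₁ + d₂ * c₁)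
      - (a₂ * a₁ + b₂ * c₁) * (c₁ * b₂ + d₁ * d₂) - (a₂ * b₁ + b₂ * d₁) * (c₁ * a₂ + d₁ * c₂),
      (a₁ * a₂ + b₁ * c₂) * (c₂ * a₁ + d₂ * c₁) - (a₂ * a₁ + b₂ * c₁) * (c₁ * a₂ + d₁ * c₂), ?_⟩
    intro z; ring
  rw [← sub_eq_zero, hABC] at q1 q2 q3 ⊢
  have hB : B = 0 := by linear_combination (q1 - q2) / 2
  have hAC : A + C = 0 := by linear_combination (q1 + q2) / 2
  rw [hB, Complex.I_sq] at q3
  have hA : A = 0 := by linear_combination (q3 + hAC) / 2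
  have hC : C = 0 := by linear_combination hAC - hA
  simp [hA, hB, hC]

lemma inv_sph {a b c d : ℂ} {l : ℝ} {φ : ℂ → ℂ} (h : Mob a b c d l φ)
    (hdet : a * d - b * c ≠ 0) {φinv : ℂ → ℂ}
    (hφinvdef : ∀ z, φinv z = (d * z - b) / (-c * z + a)) {ω : ℂ} (hω : ‖ω‖ = 1)
    (hden : -c * ω + a ≠ 0) (hinv : φ (φinv ω) = ω) : ‖φinv ω‖ = 1 := by
  have h1 : c * φinv ω + d ≠ 0 := by
    have : c * φinv ω + d = (a * d - b * c) / (-c * ω + a) := by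
      rw [hφinvdef, eq_div_iff hden, add_mul, mul_assoc, div_mul_cancel₀ _ hden]; ring
    rw [this]; exact div_ne_zero hdet hden
  have h2 := h.kernel_eq h1 h1
  rw [hinv, cj_mul_self, hω, cj_mul_self, cj_mul_self] at h2
  have hl : (l : ℂ) ≠ 0 := by exact_mod_cast h.pos.ne'
  have h3 : ((‖c * φinv ω + d‖ ^ 2 : ℝ) : ℂ) ≠ 0 := by
    have := norm_pos_iff.mpr h1
    exact_mod_cast (by positivity : ‖c * φinv ω + d‖ ^ 2 ≠ 0)
  have h4 := (eq_div_iff h3).mp h2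
  have h5 : (1 : ℂ) - ((‖φinv ω‖ ^ 2 : ℝ) : ℂ) = 0 := by
    apply (mul_eq_zero.mp (h4.symm.trans (by simp))).resolve_left hl
  have h6 : ‖φinv ω‖ ^ 2 = 1 := by
    have := (sub_eq_zero.mp h5).symm
    exact_mod_cast this
  exact (pow_eq_one_iff_of_nonneg (norm_nonneg _) two_ne_zero).mp h6

lemma deriv_mob (a b c d : ℂ) {z : ℂ} (hz : c * z + d ≠ 0) :
    deriv (fun z => (a * z + b) / (c * z + d)) z = (a * d - b * c) / (c * z + d) ^ 2 := by
  have h1 : HasDerivAt (fun z => a * z + b) a z := by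
    simpa using ((hasDerivAt_id z).const_mul a).add_const b
  have h2 : HasDerivAt (fun z => c * z + d) c z := by
    simpa using ((hasDerivAt_id z).const_mul c).add_const d
  rw [(h1.fun_div h2 hz).deriv]
  congr 1; ring

/-- Let `φ, ψ` be automorphisms of the unit disk `D` (linear fractional
maps with inverses `φinv`, `ψinv`), neither the identity, and suppose the commutator
`[C_ψ*, C_φ]` is compact on `H²(D)`.  Then for every `ω ∈ ∂D`, with `ζ₁ = φ⁻¹(ω)` and
`ζ₂ = ψ⁻¹(ω)`, one has `φ⁻¹(ζ₂) = ψ⁻¹(ζ₁)` (hence `φ ∘ ψ = ψ ∘ φ`) and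
`|(ψ⁻¹)'(ζ₁)|·|ψ'(ζ₂)| = 1`. -/
theorem hardy_disk_commutator_compact_consequences
    (S : DiskKernelSpace 1)
    (a₁ b₁ c₁ d₁ a₂ b₂ c₂ d₂ : ℂ)
    (hdet₁ : a₁ * d₁ - b₁ * c₁ ≠ 0) (hdet₂ : a₂ * d₂ - b₂ * c₂ ≠ 0)
    (φ φinv ψ ψinv : ℂ → ℂ)
    (hφdef : ∀ z, φ z = (a₁ * z + b₁) / (c₁ * z + d₁))
    (hφinvdef : ∀ z, φinv z = (d₁ * z - b₁) / (-c₁ * z + a₁))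
    (hψdef : ∀ z, ψ z = (a₂ * z + b₂) / (c₂ * z + d₂))
    (hψinvdef : ∀ z, ψinv z = (d₂ * z - b₂) / (-c₂ * z + a₂))
    (hφden : ∀ z ∈ Metric.closedBall (0 : ℂ) 1, c₁ * z + d₁ ≠ 0 ∧ -c₁ * z + a₁ ≠ 0)
    (hψden : ∀ z ∈ Metric.closedBall (0 : ℂ) 1, c₂ * z + d₂ ≠ 0 ∧ -c₂ * z + a₂ ≠ 0)
    (hφbij : Set.BijOn φ Disk Disk) (hψbij : Set.BijOn ψ Disk Disk)
    (hφsph : Set.MapsTo φ (Metric.sphere (0 : ℂ) 1) (Metric.sphere (0 : ℂ) 1))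
    (hψsph : Set.MapsTo ψ (Metric.sphere (0 : ℂ) 1) (Metric.sphere (0 : ℂ) 1))
    (hφinv : ∀ z ∈ Metric.closedBall (0 : ℂ) 1, φinv (φ z) = z ∧ φ (φinv z) = z)
    (hψinv : ∀ z ∈ Metric.closedBall (0 : ℂ) 1, ψinv (ψ z) = z ∧ ψ (ψinv z) = z)
    (hφne : ¬ ∀ z ∈ Disk, φ z = z) (hψne : ¬ ∀ z ∈ Disk, ψ z = z)
    (Cφ Cψ : S.H →L[ℂ] S.H)
    (hCφ : S.IsCompositionOperator φ Cφ) (hCψ : S.IsCompositionOperator ψ Cψ)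
    (hcpt : IsCompactOperator
      ⇑((ContinuousLinearMap.adjoint Cψ).comp Cφ -
        Cφ.comp (ContinuousLinearMap.adjoint Cψ))) :
    (∀ ω : ℂ, ‖ω‖ = 1 →
      φinv (ψinv ω) = ψinv (φinv ω) ∧
      ‖deriv ψinv (φinv ω)‖ * ‖deriv ψ (ψinv ω)‖ = 1) ∧
    ∀ z ∈ Disk, φ (ψ z) = ψ (φ z) := by
  obtain ⟨l₁, hφ⟩ := mob_of hφdef (fun z hz => (hφden z hz).1)
    (fun z hz => by simpa using hφbij.mapsTo (show z ∈ Disk by simpa using hz))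
    (fun z hz => by simpa using hφsph (show z ∈ Metric.sphere (0 : ℂ) 1 by simpa using hz))
  obtain ⟨l₂, hψ⟩ := mob_of hψdef (fun z hz => (hψden z hz).1)
    (fun z hz => by simpa using hψbij.mapsTo (show z ∈ Disk by simpa using hz))
    (fun z hz => by simpa using hψsph (show z ∈ Metric.sphere (0 : ℂ) 1 by simpa using hz))
  have hcirc : ∀ ζ : ℂ, ‖ζ‖ = 1 → φ (ψ ζ) = ψ (φ ζ) := fun ζ hζ =>
    comm_circle S hφ hψ hCφ hCψ hcpt hζ
  have hdisk : ∀ z : ℂ, ‖z‖ < 1 → φ (ψ z) = ψ (φ z) := fun z hz => comm_disk hφ hψ hcirc hz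
  have cb : ∀ z : ℂ, ‖z‖ = 1 → z ∈ Metric.closedBall (0 : ℂ) 1 := fun z hz => by simp [hz]
  refine ⟨fun ω hω => ?_, fun z hz => hdisk z (by simpa using hz)⟩
  have n2 : ‖ψinv ω‖ = 1 :=
    inv_sph hψ hdet₂ hψinvdef hω (hψden ω (cb ω hω)).2 (hψinv ω (cb ω hω)).2
  have n3 : ‖φinv (ψinv ω)‖ = 1 :=
    inv_sph hφ hdet₁ hφinvdef n2 (hφden _ (cb _ n2)).2 (hφinv _ (cb _ n2)).2
  obtain ⟨ζ, hζdef⟩ : ∃ ζ, ζ = φinv (ψinv ω) := ⟨_, rfl⟩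
  rw [← hζdef] at n3 ⊢
  have e1 : φ ζ = ψinv ω := by rw [hζdef]; exact (hφinv _ (cb _ n2)).2
  have e2 : φ (ψ ζ) = ω := by rw [hcirc ζ n3, e1]; exact (hψinv _ (cb _ hω)).2
  have e3 : φinv ω = ψ ζ := by
    rw [← e2]; exact (hφinv _ (cb _ (hψ.sph _ n3))).1
  refine ⟨?_, ?_⟩
  · rw [e3]; exact ((hψinv _ (cb _ n3)).1).symm
  · have hm := modulus_eq S hφ hψ hCφ hCψ hcpt hdisk n3
    rw [e3, ← e1]
    have f1 : ψinv = fun z => (d₂ * z + -b₂) / (-c₂ * z + a₂) := by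
      funext z; rw [hψinvdef, sub_eq_add_neg]
    have f2 : ψ = fun z => (a₂ * z + b₂) / (c₂ * z + d₂) := funext hψdef
    have g1 := hψ.den ζ (cb _ n3)
    have g2 := hψ.den (φ ζ) (cb _ (hφ.sph _ n3))
    have g3 := (hψden (ψ ζ) (cb _ (hψ.sph _ n3))).2
    have g4 : -c₂ * ψ ζ + a₂ = (a₂ * d₂ - b₂ * c₂) / (c₂ * ζ + d₂) := by
      rw [hψdef]; field_simp; ring
    have k1 : deriv ψinv (ψ ζ) = (a₂ * d₂ - b₂ * c₂) / (-c₂ * ψ ζ + a₂) ^ 2 := by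
      rw [f1, deriv_mob _ _ _ _ g3]; congr 1; ring
    have k2 : deriv ψ (φ ζ) = (a₂ * d₂ - b₂ * c₂) / (c₂ * φ ζ + d₂) ^ 2 := by
      conv_lhs => rw [f2]
      exact deriv_mob _ _ _ _ g2
    rw [k1, k2, g4]
    simp only [norm_div, norm_pow, hm]
    have p1 := norm_pos_iff.mpr g1
    have p2 := norm_pos_iff.mpr hdet₂
    field_simp
end
end

section
/- Let φ be an automorphism of the unit ball B_N, let a = φ^{-1}(0), and let f be a bounded measurable function on ∂B_N. Then on H^2(B_N) one has the operator identity C_φ T_f = T_{1/K_a} T_{f∘φ} T_{K_a} C_φ, where K_a(z) = (1−⟨z,a⟩)^{−N} is the Hardy space reproducing kernel at a (so K_a and 1/K_a are holomorphic on \overline{B_N} and bounded there). -/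
open Filter MeasureTheory Metric Set
open scoped ComplexInnerProductSpace Topology

noncomputable section

/-- The normalized volume measure `v` on the unit ball of `ℂ^N`. -/
def ballMeasure (N : ℕ) : Measure (EuclideanSpace ℂ (Fin N)) :=
  (volume (Ball N))⁻¹ • volume.restrict (Ball N)

/-- The normalized surface measure `σ` on the unit sphere `∂B_N`, realized as a measure on
`ℂ^N` (supported on the sphere): it is the push-forward of the normalized volume measure of
the ball under the radial projection `z ↦ z/‖z‖`. -/
def sphereMeasure (N : ℕ) : Measure (EuclideanSpace ℂ (Fin N)) :=
  Measure.map (fun z => ‖z‖⁻¹ • z) (ballMeasure N)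

/-- The weighted measure `dv_s(z) = (Γ(N+s+1)/(N! Γ(s+1))) (1-|z|²)^s dv(z)` defining the
weighted Bergman space `A²_s(B_N)`. -/
def bergmanMeasure (N : ℕ) (s : ℝ) : Measure (EuclideanSpace ℂ (Fin N)) :=
  (ballMeasure N).withDensity fun z =>
    ENNReal.ofReal (Real.Gamma (N + s + 1) / (Nat.factorial N * Real.Gamma (s + 1))
      * (1 - ‖z‖ ^ 2) ^ s)

/-- An abstract presentation of the Hardy space `H²(B_N)` (for `t = N`, `μ` the normalized
surface measure on the sphere) or of the weighted Bergman space `A²_s(B_N)` (for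
`t = N + s + 1`, `μ` the weighted volume measure `dv_s`): a reproducing-kernel Hilbert space
of holomorphic functions on `B_N` with kernel `K_w(z) = (1 - ⟨z,w⟩)^{-t}`, whose inner
product is computed by the (dilated) integral pairing against `μ`. -/
structure BallFunctionSpace (N : ℕ) (t : ℝ) (μ : Measure (EuclideanSpace ℂ (Fin N))) where
  (H : Type)
  [grp : NormedAddCommGroup H]
  [ips : InnerProductSpace ℂ H]
  [cpl : CompleteSpace H]
  eval : H → EuclideanSpace ℂ (Fin N) → ℂ
  eval_add : ∀ f g : H, ∀ z, eval (f + g) z = eval f z + eval g z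
  eval_smul : ∀ (c : ℂ) (f : H) (z : EuclideanSpace ℂ (Fin N)), eval (c • f) z = c * eval f z
  holo : ∀ f : H, DifferentiableOn ℂ (eval f) (Ball N)
  eval_injective : ∀ f g : H, (∀ z ∈ Ball N, eval f z = eval g z) → f = g
  kernel : EuclideanSpace ℂ (Fin N) → H
  eval_kernel : ∀ w ∈ Ball N, ∀ z ∈ Ball N, eval (kernel w) z = (1 - ⟪w, z⟫) ^ (-(t : ℂ))
  reproducing : ∀ (f : H), ∀ w ∈ Ball N, ⟪kernel w, f⟫ = eval f w
  inner_eq : ∀ f g : H,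
    Tendsto (fun r : ℝ => ∫ z, (starRingEnd ℂ) (eval f (r • z)) * eval g (r • z) ∂μ)
      (𝓝[<] (1 : ℝ)) (𝓝 ⟪f, g⟫)

attribute [instance] BallFunctionSpace.grp BallFunctionSpace.ips BallFunctionSpace.cpl

/-- `T` is the composition operator `C_φ : f ↦ f ∘ φ` on `S`. -/
def BallFunctionSpace.IsCompositionOperator {N : ℕ} {t : ℝ}
    {μ : Measure (EuclideanSpace ℂ (Fin N))} (S : BallFunctionSpace N t μ)
    (φ : EuclideanSpace ℂ (Fin N) → EuclideanSpace ℂ (Fin N)) (T : S.H →L[ℂ] S.H) : Prop :=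
  ∀ f : S.H, ∀ z ∈ Ball N, S.eval (T f) z = S.eval f (φ z)

/-- `T` is the Toeplitz operator `T_b : u ↦ P(b·u)` with symbol `b` on `S`;  equivalently,
`⟪v, T u⟫ = lim_{r→1⁻} ∫ conj(v(rz)) b(z) u(rz) dμ(z)` for all `u, v ∈ S`. -/
def BallFunctionSpace.IsToeplitzOperator {N : ℕ} {t : ℝ}
    {μ : Measure (EuclideanSpace ℂ (Fin N))} (S : BallFunctionSpace N t μ)
    (b : EuclideanSpace ℂ (Fin N) → ℂ) (T : S.H →L[ℂ] S.H) : Prop :=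
  ∀ u v : S.H,
    Tendsto (fun r : ℝ => ∫ z, (starRingEnd ℂ) (S.eval v (r • z)) * b z * S.eval u (r • z) ∂μ)
      (𝓝[<] (1 : ℝ)) (𝓝 ⟪v, T u⟫)

section geometry

set_option linter.unusedSectionVars false

variable {E : Type*} [NormedAddCommGroup E] [InnerProductSpace ℂ E]

/-- For `z, w` in the closed ball, one of them in the open ball, `1 - ⟪w,z⟫ ≠ 0`. -/
lemma one_sub_inner_ne_zero {w z : E} (hw : ‖w‖ < 1) (hz : ‖z‖ ≤ 1) : 1 - ⟪w, z⟫ ≠ 0 := by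
  intro h
  have h1 : ⟪w, z⟫ = 1 := (sub_eq_zero.mp h).symm
  have h2 : ‖⟪w, z⟫‖ ≤ ‖w‖ * ‖z‖ := norm_inner_le_norm w z
  rw [h1, norm_one] at h2
  nlinarith [norm_nonneg w, norm_nonneg z]

/-- The number `√(1-|a|²)`. -/
def moebS (a : E) : ℝ := Real.sqrt (1 - ‖a‖ ^ 2)

/-- The numerator of the Möbius involution. -/
def moebNum (a z : E) : E := (1 - ⟪a, z⟫ / (1 + (moebS a : ℂ))) • a - (moebS a : ℂ) • z

/-- The Möbius involution of the ball exchanging `0` and `a`. -/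
def moeb (a z : E) : E := (1 - ⟪a, z⟫)⁻¹ • moebNum a z

lemma moebS_pos {a : E} (ha : ‖a‖ < 1) : 0 < moebS a := by
  apply Real.sqrt_pos.mpr
  nlinarith [norm_nonneg a]

lemma moebS_sq {a : E} (ha : ‖a‖ < 1) : (moebS a : ℂ) ^ 2 = 1 - (‖a‖ : ℂ) ^ 2 := by
  have : moebS a ^ 2 = 1 - ‖a‖ ^ 2 := Real.sq_sqrt (by nlinarith [norm_nonneg a])
  exact_mod_cast this

lemma moebS_add_ne {a : E} (ha : ‖a‖ < 1) : (1 + (moebS a : ℂ)) ≠ 0 := by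
  have : (1 + moebS a : ℝ) ≠ 0 := by have := moebS_pos ha; positivity
  exact_mod_cast this

lemma inner_moebNum {a : E} (ha : ‖a‖ < 1) (z : E) :
    ⟪a, moebNum a z⟫ = (‖a‖ : ℂ) ^ 2 - ⟪a, z⟫ := by
  have h := moebS_sq ha
  have h1 := moebS_add_ne ha
  have h2 : (‖a‖ : ℂ) ^ 2 = (1 - moebS a) * (1 + moebS a) := by linear_combination h
  unfold moebNum
  rw [inner_sub_right, inner_smul_right, inner_smul_right, inner_self_eq_norm_sq_to_K]
  simp only [Complex.coe_algebraMap]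
  rw [h2]
  field_simp
  ring

lemma one_sub_inner_moeb {a : E} (ha : ‖a‖ < 1) {z : E} (hz : ‖z‖ ≤ 1) :
    1 - ⟪a, moeb a z⟫ = (moebS a : ℂ) ^ 2 / (1 - ⟪a, z⟫) := by
  have h0 := one_sub_inner_ne_zero ha hz
  have h := moebS_sq ha
  unfold moeb
  rw [inner_smul_right, inner_moebNum ha, h]
  field_simp
  ring

lemma moeb_moeb {a : E} (ha : ‖a‖ < 1) {z : E} (hz : ‖z‖ ≤ 1) : moeb a (moeb a z) = z := by
  have h0 := one_sub_inner_ne_zero ha hz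
  have h := moebS_sq ha
  have h1 := moebS_add_ne ha
  have hs : (moebS a : ℂ) ≠ 0 := by exact_mod_cast (moebS_pos ha).ne'
  have h2 : (‖a‖ : ℂ) ^ 2 = (1 - moebS a) * (1 + moebS a) := by linear_combination h
  have h3 := one_sub_inner_moeb ha hz
  have h4 : ⟪a, moeb a z⟫ = 1 - (moebS a : ℂ) ^ 2 / (1 - ⟪a, z⟫) := by
    rw [← h3]; ring
  rw [moeb, h3]
  unfold moebNum
  rw [h4]
  rw [moeb, moebNum]
  match_scalars
  · field_simp
    ring
  · field_simp

lemma inner_moebNum_moebNum {a : E} (ha : ‖a‖ < 1) (w z : E) :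
    ⟪moebNum a w, moebNum a z⟫ =
      (1 - ⟪w, a⟫) * (1 - ⟪a, z⟫) - (moebS a : ℂ) ^ 2 * (1 - ⟪w, z⟫) := by
  have h := moebS_sq ha
  have h1 := moebS_add_ne ha
  have h2 : (‖a‖ : ℂ) ^ 2 = (1 - moebS a) * (1 + moebS a) := by linear_combination h
  unfold moebNum
  simp only [inner_sub_right, inner_smul_right, inner_sub_left, inner_smul_left,
    inner_self_eq_norm_sq_to_K, Complex.coe_algebraMap, h2, map_sub, map_div₀, map_one, map_add,
    Complex.conj_ofReal, inner_conj_symm]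
  field_simp
  ring

lemma one_sub_inner_moeb_moeb {a : E} (ha : ‖a‖ < 1) {w z : E} (hw : ‖w‖ ≤ 1) (hz : ‖z‖ ≤ 1) :
    1 - ⟪moeb a w, moeb a z⟫ =
      (moebS a : ℂ) ^ 2 * (1 - ⟪w, z⟫) / ((1 - ⟪w, a⟫) * (1 - ⟪a, z⟫)) := by
  have h0 := one_sub_inner_ne_zero ha hz
  have h0' : 1 - ⟪w, a⟫ ≠ 0 := by
    have := one_sub_inner_ne_zero ha hw
    intro h
    apply this
    have := congrArg (starRingEnd ℂ) h
    simpa using this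
  unfold moeb
  rw [inner_smul_right, inner_smul_left, inner_moebNum_moebNum ha]
  simp only [map_inv₀, map_sub, map_one, inner_conj_symm]
  field_simp
  ring

lemma norm_moeb_lt {a : E} (ha : ‖a‖ < 1) {z : E} (hz : ‖z‖ < 1) : ‖moeb a z‖ < 1 := by
  have h := one_sub_inner_moeb_moeb ha hz.le hz.le
  have h0 := one_sub_inner_ne_zero ha hz.le
  have e : (1 - ⟪z, a⟫) * (1 - ⟪a, z⟫) = ((‖1 - ⟪a, z⟫‖ ^ 2 : ℝ) : ℂ) := by
    have e1 : 1 - ⟪z, a⟫ = (starRingEnd ℂ) (1 - ⟪a, z⟫) := by simp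
    rw [e1, Complex.conj_mul']
    simp
  rw [e, inner_self_eq_norm_sq_to_K, inner_self_eq_norm_sq_to_K] at h
  simp only [Complex.coe_algebraMap] at h
  have h' : 1 - ‖moeb a z‖ ^ 2 = moebS a ^ 2 * (1 - ‖z‖ ^ 2) / ‖1 - ⟪a, z⟫‖ ^ 2 := by
    exact_mod_cast h
  have p : 0 < moebS a ^ 2 * (1 - ‖z‖ ^ 2) / ‖1 - ⟪a, z⟫‖ ^ 2 := by
    have := moebS_pos ha
    have : 0 < 1 - ‖z‖ ^ 2 := by nlinarith [norm_nonneg z]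
    have := norm_pos_iff.mpr h0
    positivity
  nlinarith [norm_nonneg (moeb a z)]

lemma differentiableOn_moeb {a : E} (ha : ‖a‖ < 1) : DifferentiableOn ℂ (moeb a) (ball 0 1) := by
  intro z hz
  have h0 := one_sub_inner_ne_zero ha (mem_ball_zero_iff.mp hz).le
  have hd : Differentiable ℂ (fun z : E => ⟪a, z⟫) := (innerSL ℂ a).differentiable
  have hn : DifferentiableAt ℂ (fun z => moebNum a z) z := by
    unfold moebNum
    fun_prop
  have : DifferentiableAt ℂ (fun z => (1 - ⟪a, z⟫)⁻¹ • moebNum a z) z := by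
    apply DifferentiableAt.smul _ hn
    have : DifferentiableAt ℂ (fun z => 1 - ⟪a, z⟫) z := by fun_prop
    exact this.fun_inv h0
  exact this.differentiableWithinAt

lemma moeb_zero (a : E) : moeb a 0 = a := by simp [moeb, moebNum]

lemma moeb_self {a : E} (ha : ‖a‖ < 1) : moeb a a = 0 := by
  conv_lhs => rw [← moeb_zero a]
  rw [moeb_zero]
  have := moeb_moeb ha (z := 0) (by simp)
  rwa [moeb_zero] at this

/-- Cartan: automorphisms of the ball fixing the origin preserve inner products. -/
lemma inner_of_fix_zero [CompleteSpace E] {Φ Ψ : E → E}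
    (hΦ : DifferentiableOn ℂ Φ (ball 0 1)) (hΨ : DifferentiableOn ℂ Ψ (ball 0 1))
    (mΦ : MapsTo Φ (ball 0 1) (ball 0 1)) (mΨ : MapsTo Ψ (ball 0 1) (ball 0 1))
    (h0 : Φ 0 = 0) (h0' : Ψ 0 = 0) (hl : ∀ z ∈ ball (0 : E) 1, Ψ (Φ z) = z)
    {w z : E} (hw : w ∈ ball (0 : E) 1) (hz : z ∈ ball (0 : E) 1) : ⟪Φ w, Φ z⟫ = ⟪w, z⟫ := by
  have : UniformConvexSpace E :=
    @InnerProductSpace.toUniformConvexSpace E _ InnerProductSpace.complexToReal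
  have nrm : ∀ z ∈ ball (0 : E) 1, ‖Φ z‖ = ‖z‖ := by
    intro z hz
    apply le_antisymm
    · exact Complex.norm_le_norm_of_mapsTo_ball hΦ (mΦ.mono_right ball_subset_closedBall) h0
        (mem_ball_zero_iff.mp hz)
    · have := Complex.norm_le_norm_of_mapsTo_ball hΨ (mΨ.mono_right ball_subset_closedBall) h0'
        (mem_ball_zero_iff.mp (mΦ hz))
      rwa [hl z hz] at this
  let L := fderiv ℂ Φ 0
  have hL0 : HasFDerivAt Φ L 0 :=
    (hΦ.differentiableAt (ball_mem_nhds 0 one_pos)).hasFDerivAt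
  have unit : ∀ e : E, ‖e‖ = 1 → ∀ c : ℂ, ‖c‖ < 1 → Φ (c • e) = c • L e := by
    intro e he c hc
    have maps : MapsTo (fun c : ℂ => c • e) (ball 0 1) (ball 0 1) := by
      intro c hc
      simpa [norm_smul, he] using hc
    have d1 : DifferentiableOn ℂ (fun c : ℂ => Φ (c • e)) (ball 0 1) :=
      hΦ.comp (by fun_prop) maps
    have m1 : MapsTo (fun c : ℂ => Φ (c • e)) (ball 0 1)
        (closedBall ((fun c : ℂ => Φ (c • e)) 0) 1) := by
      intro c hc
      simp only [zero_smul, h0]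
      exact ball_subset_closedBall (mΦ (maps hc))
    have hhalf : (1 / 2 : ℂ) ∈ ball (0 : ℂ) 1 := by simp; norm_num
    have key := Complex.affine_of_mapsTo_ball_of_norm_dslope_eq_div d1 m1 hhalf (by
      rw [dslope_of_ne _ (by norm_num), slope_def_module]
      simp only [zero_smul, h0, sub_zero]
      rw [norm_smul, nrm _ (maps hhalf), norm_smul, he]
      norm_num)
    set C := dslope (fun c : ℂ => Φ (c • e)) 0 (1 / 2)
    have key' : ∀ c ∈ ball (0 : ℂ) 1, Φ (c • e) = c • C := by
      intro c hc
      have := key hc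
      simpa [h0] using this
    have dd : HasDerivAt (fun c : ℂ => Φ (c • e)) (L e) 0 := by
      have h1 : HasDerivAt (fun c : ℂ => c • e) ((1 : ℂ) • e) 0 := (hasDerivAt_id 0).smul_const e
      have h2 : HasFDerivAt Φ L ((fun c : ℂ => c • e) 0) := by simpa using hL0
      simpa [Function.comp_def] using h2.comp_hasDerivAt (0 : ℂ) h1
    have dd' : HasDerivAt (fun c : ℂ => Φ (c • e)) C 0 := by
      have h1 : HasDerivAt (fun c : ℂ => c • C) ((1 : ℂ) • C) 0 := (hasDerivAt_id 0).smul_const C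
      rw [one_smul] at h1
      apply h1.congr_of_eventuallyEq
      filter_upwards [ball_mem_nhds (0 : ℂ) one_pos] with c hc using key' c hc
    rw [dd.unique dd']
    exact key' c (by simpa using hc)
  have lin : ∀ z ∈ ball (0 : E) 1, Φ z = L z := by
    intro z hz
    by_cases hz0 : z = 0
    · simp [hz0, h0]
    have hn : (‖z‖ : ℂ) ≠ 0 := by simpa using hz0
    have := unit ((‖z‖ : ℂ)⁻¹ • z) (by rw [norm_smul]; simp [hz0]) (‖z‖ : ℂ) (by simpa using hz)
    rw [map_smul, smul_smul, smul_smul, mul_inv_cancel₀ hn, one_smul, one_smul] at this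
    exact this
  have iso : ∀ z, ‖L z‖ = ‖z‖ := by
    intro z
    have hp : 0 < (‖z‖ + 1) := by positivity
    have hb : ((‖z‖ + 1 : ℝ) : ℂ)⁻¹ • z ∈ ball (0 : E) 1 := by
      rw [mem_ball_zero_iff, norm_smul, norm_inv, Complex.norm_real, Real.norm_of_nonneg hp.le,
        inv_mul_lt_iff₀ hp]
      linarith
    have h1 := nrm _ hb
    rw [lin _ hb, map_smul, norm_smul, norm_smul] at h1
    refine mul_left_cancel₀ ?_ h1
    rw [norm_inv, Complex.norm_real, Real.norm_of_nonneg hp.le]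
    positivity
  rw [lin w hw, lin z hz]
  exact (LinearMap.norm_map_iff_inner_map_map L).mp iso w z

/-- The fundamental identity for automorphisms, on the open ball. -/
lemma automorphism_identity [CompleteSpace E] {φ ψ : E → E} {a : E}
    (hφ : DifferentiableOn ℂ φ (ball 0 1)) (hψ : DifferentiableOn ℂ ψ (ball 0 1))
    (mφ : MapsTo φ (ball 0 1) (ball 0 1)) (mψ : MapsTo ψ (ball 0 1) (ball 0 1))
    (hl : ∀ z ∈ ball (0 : E) 1, ψ (φ z) = z) (ha : ‖a‖ < 1) (hφa : φ a = 0)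
    {w z : E} (hw : ‖w‖ < 1) (hz : ‖z‖ < 1) :
    (1 - ⟪φ w, φ z⟫) * ((1 - ⟪w, a⟫) * (1 - ⟪a, z⟫)) =
      (moebS a : ℂ) ^ 2 * (1 - ⟪w, z⟫) := by
  have mm : MapsTo (moeb a) (ball (0 : E) 1) (ball 0 1) := fun z hz => by
    rw [mem_ball_zero_iff] at *
    exact norm_moeb_lt ha hz
  have hab : a ∈ ball (0 : E) 1 := by simpa using ha
  have hψ0 : ψ 0 = a := by rw [← hφa]; exact hl a hab
  have key := inner_of_fix_zero (Φ := φ ∘ moeb a) (Ψ := moeb a ∘ ψ)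
    (hφ.comp (differentiableOn_moeb ha) mm) ((differentiableOn_moeb ha).comp hψ mψ)
    (mφ.comp mm) (mm.comp mψ) (by simp [moeb_zero, hφa]) (by simp [hψ0, moeb_self ha])
    (by
      intro z hz
      simp only [Function.comp]
      rw [hl _ (mm hz), moeb_moeb ha (mem_ball_zero_iff.mp hz).le])
    (mm (by simpa using hw : w ∈ ball (0 : E) 1)) (mm (by simpa using hz : z ∈ ball (0 : E) 1))
  simp only [Function.comp, moeb_moeb ha hz.le, moeb_moeb ha hw.le] at key
  rw [key, one_sub_inner_moeb_moeb ha hw.le hz.le]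
  have h0 := one_sub_inner_ne_zero ha hz.le
  have h0' : 1 - ⟪w, a⟫ ≠ 0 := one_sub_inner_ne_zero hw ha.le
  field_simp

end geometry

section moments

variable {X : Type*} [MeasurableSpace X]

lemma hasSum_integral_powers (ν : Measure X) [IsFiniteMeasure ν] {x h : X → ℂ}
    (hx : AEStronglyMeasurable x ν) (hh : AEStronglyMeasurable h ν) {R M : ℝ}
    (hR : ∀ᵐ z ∂ν, ‖x z‖ ≤ R) (hM : ∀ᵐ z ∂ν, ‖h z‖ ≤ M) (hR0 : 0 ≤ R)
    (c : ℕ → ℂ) (hc : Summable fun m => ‖c m‖ * R ^ m) :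
    HasSum (fun m => c m * ∫ z, x z ^ m * h z ∂ν) (∫ z, (∑' m, c m * x z ^ m) * h z ∂ν) := by
  have bd : ∀ m, ∀ᵐ z ∂ν, ‖c m * x z ^ m * h z‖ ≤ ‖c m‖ * R ^ m * M := by
    intro m
    filter_upwards [hR, hM] with z h1 h2
    rw [norm_mul, norm_mul, norm_pow]
    gcongr
  have meas : ∀ m, AEStronglyMeasurable (fun z => c m * x z ^ m * h z) ν := by
    intro m
    exact ((hx.pow m).const_mul (c m)).mul hh
  have int : ∀ m, Integrable (fun z => c m * x z ^ m * h z) ν := fun m =>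
    Integrable.of_bound (meas m) _ (bd m)
  have main := hasSum_integral_of_summable_integral_norm int (by
    have hs : Summable (fun m => (‖c m‖ * R ^ m) * (M * ν.real univ)) := hc.mul_right _
    refine Summable.of_nonneg_of_le (fun m => integral_nonneg fun z => norm_nonneg _) (fun m => ?_) hs
    calc ∫ z, ‖c m * x z ^ m * h z‖ ∂ν ≤ ∫ z, ‖c m‖ * R ^ m * M ∂ν :=
          integral_mono_ae (int m).norm (integrable_const _) (bd m)
      _ = _ := by rw [integral_const, smul_eq_mul]; ring)
  have e1 : (fun m => c m * ∫ z, x z ^ m * h z ∂ν) = fun m => ∫ z, c m * x z ^ m * h z ∂ν := by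
    funext m
    rw [← integral_const_mul]
    simp only [mul_assoc]
  have e2 : (fun z => (∑' m, c m * x z ^ m) * h z) = fun z => ∑' m, c m * x z ^ m * h z := by
    funext z
    rw [tsum_mul_right]
  rw [e1, e2]
  exact main

lemma integral_exp_eq {ν₁ ν₂ : Measure X} [IsFiniteMeasure ν₁] [IsFiniteMeasure ν₂] {x h : X → ℂ}
    (hx₁ : AEStronglyMeasurable x ν₁) (hh₁ : AEStronglyMeasurable h ν₁)
    (hx₂ : AEStronglyMeasurable x ν₂) (hh₂ : AEStronglyMeasurable h ν₂) {R M : ℝ}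
    (hR₁ : ∀ᵐ z ∂ν₁, ‖x z‖ ≤ R) (hM₁ : ∀ᵐ z ∂ν₁, ‖h z‖ ≤ M)
    (hR₂ : ∀ᵐ z ∂ν₂, ‖x z‖ ≤ R) (hM₂ : ∀ᵐ z ∂ν₂, ‖h z‖ ≤ M) (hR0 : 0 ≤ R) (hM0 : 0 ≤ M)
    (k : ℂ) (H : ∀ m : ℕ, ∫ z, x z ^ m * h z ∂ν₁ = ∫ z, x z ^ m * h z ∂ν₂) :
    ∫ z, Complex.exp (k * x z) * h z ∂ν₁ = ∫ z, Complex.exp (k * x z) * h z ∂ν₂ := by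
  have hc : Summable fun m : ℕ => ‖k ^ m / (m.factorial : ℂ)‖ * R ^ m := by
    have := Real.summable_pow_div_factorial (‖k‖ * R)
    refine this.congr fun m => ?_
    rw [norm_div, norm_pow, Complex.norm_natCast, mul_pow]
    ring
  have e : ∀ z, Complex.exp (k * x z) = ∑' m : ℕ, k ^ m / (m.factorial : ℂ) * x z ^ m := by
    intro z
    rw [Complex.exp_eq_exp_ℂ, NormedSpace.exp_eq_tsum_div]
    refine tsum_congr fun m => ?_
    rw [mul_pow]; ring
  simp only [e]
  have h1 := hasSum_integral_powers ν₁ hx₁ hh₁ hR₁ hM₁ hR0 _ hc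
  have h2 := hasSum_integral_powers ν₂ hx₂ hh₂ hR₂ hM₂ hR0 _ hc
  simp only [H] at h1
  exact h1.unique h2

lemma moments_eq {ν₁ ν₂ : Measure X} [IsFiniteMeasure ν₁] [IsFiniteMeasure ν₂] {x h : X → ℂ}
    (hx₁ : AEStronglyMeasurable x ν₁) (hh₁ : AEStronglyMeasurable h ν₁)
    (hx₂ : AEStronglyMeasurable x ν₂) (hh₂ : AEStronglyMeasurable h ν₂) {R M : ℝ}
    (hR₁ : ∀ᵐ z ∂ν₁, ‖x z‖ ≤ R) (hM₁ : ∀ᵐ z ∂ν₁, ‖h z‖ ≤ M)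
    (hR₂ : ∀ᵐ z ∂ν₂, ‖x z‖ ≤ R) (hM₂ : ∀ᵐ z ∂ν₂, ‖h z‖ ≤ M) (hR0 : 0 ≤ R) (hM0 : 0 ≤ M)
    (k : ℕ) (H : ∀ s : ℂ, ‖s‖ * (R + 1) < 1 → ∫ z, ((1 - s * x z) ^ (k + 1))⁻¹ * h z ∂ν₁ =
      ∫ z, ((1 - s * x z) ^ (k + 1))⁻¹ * h z ∂ν₂) (m : ℕ) :
    ∫ z, x z ^ m * h z ∂ν₁ = ∫ z, x z ^ m * h z ∂ν₂ := by
  have key : ∀ s : ℂ, ‖s‖ * (R + 1) < 1 → HasSum (fun m : ℕ => s ^ m •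
      (((m + k).choose k : ℂ) * ((∫ z, x z ^ m * h z ∂ν₁) - ∫ z, x z ^ m * h z ∂ν₂))) 0 := by
    intro s hs
    have hsR : ‖s‖ * R < 1 := by nlinarith [norm_nonneg s]
    have hc : Summable fun m : ℕ => ‖((m + k).choose k : ℂ) * s ^ m‖ * R ^ m := by
      have := (hasSum_choose_mul_geometric_of_norm_lt_one k (r := ‖s‖ * R) (by
        rwa [Real.norm_of_nonneg (by positivity)])).summable
      refine this.congr fun m => ?_
      rw [norm_mul, norm_pow, Complex.norm_natCast, mul_pow]
      ring
    have e : ∀ z, ‖x z‖ ≤ R → ((1 - s * x z) ^ (k + 1))⁻¹ =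
        ∑' m : ℕ, ((m + k).choose k : ℂ) * s ^ m * x z ^ m := by
      intro z hz
      have hlt : ‖s * x z‖ < 1 := by
        rw [norm_mul]
        exact lt_of_le_of_lt (by gcongr) hsR
      rw [← one_div, ← (hasSum_choose_mul_geometric_of_norm_lt_one k hlt).tsum_eq]
      refine tsum_congr fun m => ?_
      rw [mul_pow]; ring
    have h1 := hasSum_integral_powers ν₁ hx₁ hh₁ hR₁ hM₁ hR0 _ hc
    have h2 := hasSum_integral_powers ν₂ hx₂ hh₂ hR₂ hM₂ hR0 _ hc
    have e1 : ∫ z, ((1 - s * x z) ^ (k + 1))⁻¹ * h z ∂ν₁ = _ :=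
      integral_congr_ae (hR₁.mono fun z hz => by
        show _ = (∑' m : ℕ, ((m + k).choose k : ℂ) * s ^ m * x z ^ m) * h z
        rw [← e z hz])
    have e2 : ∫ z, ((1 - s * x z) ^ (k + 1))⁻¹ * h z ∂ν₂ = _ :=
      integral_congr_ae (hR₂.mono fun z hz => by
        show _ = (∑' m : ℕ, ((m + k).choose k : ℂ) * s ^ m * x z ^ m) * h z
        rw [← e z hz])
    have h3 := h1.sub h2
    rw [← e1, ← e2, H s hs, sub_self] at h3
    have e3 := fun m : ℕ => show s ^ m • (((m + k).choose k : ℂ) *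
        ((∫ z, x z ^ m * h z ∂ν₁) - ∫ z, x z ^ m * h z ∂ν₂)) =
        ((m + k).choose k : ℂ) * s ^ m * (∫ z, x z ^ m * h z ∂ν₁) -
        ((m + k).choose k : ℂ) * s ^ m * (∫ z, x z ^ m * h z ∂ν₂) by rw [smul_eq_mul]; ring
    rw [funext e3]
    exact h3
  set d : ℕ → ℂ := fun m =>
    (((m + k).choose k : ℂ) * ((∫ z, x z ^ m * h z ∂ν₁) - ∫ z, x z ^ m * h z ∂ν₂)) with hd
  have ps : HasFPowerSeriesAt (fun _ : ℂ => (0 : ℂ)) (FormalMultilinearSeries.ofScalars ℂ d) 0 := by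
    rw [hasFPowerSeriesAt_iff]
    have : ∀ᶠ s : ℂ in 𝓝 0, ‖s‖ * (R + 1) < 1 := by
      have hcont : Continuous fun s : ℂ => ‖s‖ * (R + 1) := by fun_prop
      have := hcont.tendsto 0
      simp only [norm_zero, zero_mul] at this
      exact this.eventually (gt_mem_nhds one_pos)
    filter_upwards [this] with s hs
    have e : ∀ n, (FormalMultilinearSeries.ofScalars ℂ d).coeff n = d n := fun n =>
      FormalMultilinearSeries.coeff_ofScalars
    have e' : (fun n => s ^ n • (FormalMultilinearSeries.ofScalars ℂ d).coeff n) =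
        fun n => s ^ n • d n := by
      funext n
      rw [e]
    have := key s hs
    change HasSum (fun n => s ^ n • d n) 0 at this
    rw [← e'] at this
    exact this
  have hz := ps.eq_zero
  have hdm : d m = 0 := by
    rw [← FormalMultilinearSeries.coeff_ofScalars (𝕜 := ℂ) (p := d) (n := m), hz]
    rfl
  have hch : ((m + k).choose k : ℂ) ≠ 0 := by
    exact_mod_cast (Nat.choose_pos (Nat.le_add_left k m)).ne'
  simp only [hd] at hdm
  exact sub_eq_zero.mp ((mul_eq_zero.mp hdm).resolve_left hch)

lemma norm_inv_pow_le {y : ℂ} {r : ℝ} (hy : ‖y‖ ≤ r) (hr : r < 1) (k : ℕ) :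
    ‖((1 - y) ^ k)⁻¹‖ ≤ ((1 - r) ^ k)⁻¹ := by
  rw [norm_inv, norm_pow]
  have h1 : 1 - r ≤ ‖1 - y‖ := by
    have := norm_sub_norm_le (1 : ℂ) y
    rw [norm_one] at this
    linarith
  have : 0 < 1 - r := by linarith
  gcongr

end moments

lemma real_inner_eq {N : ℕ} (z t : EuclideanSpace ℂ (Fin N)) : inner ℝ z t = (⟪t, z⟫).re := by
  simp only [PiLp.inner_apply, Complex.re_sum]
  congr 1
  ext i
  simp [Complex.inner, mul_comm]

lemma measure_ext_kernels {N k : ℕ} {ν₁ ν₂ : Measure (EuclideanSpace ℂ (Fin N))}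
    [IsFiniteMeasure ν₁] [IsFiniteMeasure ν₂]
    (h₁ : ∀ᵐ z ∂ν₁, ‖z‖ ≤ 1) (h₂ : ∀ᵐ z ∂ν₂, ‖z‖ ≤ 1)
    (H : ∀ u v : EuclideanSpace ℂ (Fin N), ‖u‖ < 1 → ‖v‖ < 1 →
      ∫ z, ((1 - ⟪u, z⟫) ^ (k + 1))⁻¹ * (starRingEnd ℂ) ((1 - ⟪v, z⟫) ^ (k + 1))⁻¹ ∂ν₁ =
      ∫ z, ((1 - ⟪u, z⟫) ^ (k + 1))⁻¹ * (starRingEnd ℂ) ((1 - ⟪v, z⟫) ^ (k + 1))⁻¹ ∂ν₂) :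
    ν₁ = ν₂ := by
  apply Measure.ext_of_charFun
  ext t
  rw [charFun_apply, charFun_apply]
  set x : EuclideanSpace ℂ (Fin N) → ℂ := fun z => ⟪t, z⟫ with hx
  set y : EuclideanSpace ℂ (Fin N) → ℂ := fun z => (starRingEnd ℂ) ⟪t, z⟫ with hy
  set R := ‖t‖ with hR
  have R0 : 0 ≤ R := norm_nonneg _
  have cx : Continuous x := by fun_prop
  have cy : Continuous y := Complex.continuous_conj.comp cx
  have bx : ∀ z : EuclideanSpace ℂ (Fin N), ‖z‖ ≤ 1 → ‖x z‖ ≤ R := fun z hz =>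
    (norm_inner_le_norm t z).trans (mul_le_of_le_one_right R0 hz)
  have bdy : ∀ z : EuclideanSpace ℂ (Fin N), ‖z‖ ≤ 1 → ‖y z‖ ≤ R := fun z hz => by
    simp only [hy, RCLike.norm_conj]
    exact bx z hz
  have mom1 : ∀ (m : ℕ) (s' : ℂ), ‖s'‖ * (R + 1) < 1 →
      ∫ z, x z ^ m * ((1 - s' * y z) ^ (k + 1))⁻¹ ∂ν₁ =
      ∫ z, x z ^ m * ((1 - s' * y z) ^ (k + 1))⁻¹ ∂ν₂ := by
    intro m s' hs'
    have hsR : ‖s'‖ * R < 1 := by nlinarith [norm_nonneg s']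
    have bh : ∀ z : EuclideanSpace ℂ (Fin N), ‖z‖ ≤ 1 →
        ‖((1 - s' * y z) ^ (k + 1))⁻¹‖ ≤ ((1 - ‖s'‖ * R) ^ (k + 1))⁻¹ := by
      intro z hz
      apply norm_inv_pow_le _ hsR
      rw [norm_mul]
      gcongr
      exact bdy z hz
    have mh : Measurable fun z => ((1 - s' * y z) ^ (k + 1))⁻¹ :=
      (((cy.measurable.const_mul s').const_sub 1).pow_const _).inv
    have p0 : 0 < 1 - ‖s'‖ * R := by linarith
    refine moments_eq cx.aestronglyMeasurable mh.aestronglyMeasurable cx.aestronglyMeasurable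
      mh.aestronglyMeasurable (h₁.mono bx) (h₁.mono bh) (h₂.mono bx) (h₂.mono bh) R0
      (by positivity) k ?_ m
    intro s hs
    have := H ((starRingEnd ℂ) s • t) (s' • t)
      (by rw [norm_smul, RCLike.norm_conj]; nlinarith [norm_nonneg s])
      (by rw [norm_smul]; exact hsR)
    simpa [inner_smul_left, hx, hy, mul_comm] using this
  have mom2 : ∀ m n : ℕ, ∫ z, y z ^ n * x z ^ m ∂ν₁ = ∫ z, y z ^ n * x z ^ m ∂ν₂ := by
    intro m n
    have bh : ∀ z : EuclideanSpace ℂ (Fin N), ‖z‖ ≤ 1 → ‖x z ^ m‖ ≤ R ^ m := fun z hz => by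
      rw [norm_pow]
      gcongr
      exact bx z hz
    refine moments_eq (h := fun z => x z ^ m) cy.aestronglyMeasurable (cx.pow m).aestronglyMeasurable
      cy.aestronglyMeasurable (cx.pow m).aestronglyMeasurable (h₁.mono bdy) (h₁.mono bh)
      (h₂.mono bdy) (h₂.mono bh) R0 (by positivity) k ?_ n
    intro s hs
    have := mom1 m s hs
    simpa only [mul_comm] using this
  have exp1 : ∀ m : ℕ, ∫ z, x z ^ m * Complex.exp (Complex.I / 2 * y z) ∂ν₁ =
      ∫ z, x z ^ m * Complex.exp (Complex.I / 2 * y z) ∂ν₂ := by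
    intro m
    have bh : ∀ z : EuclideanSpace ℂ (Fin N), ‖z‖ ≤ 1 → ‖x z ^ m‖ ≤ R ^ m := fun z hz => by
      rw [norm_pow]
      gcongr
      exact bx z hz
    simp only [mul_comm (x _ ^ m)]
    exact integral_exp_eq cy.aestronglyMeasurable (cx.pow m).aestronglyMeasurable
      cy.aestronglyMeasurable (cx.pow m).aestronglyMeasurable (h₁.mono bdy) (h₁.mono bh)
      (h₂.mono bdy) (h₂.mono bh) R0 (by positivity) _ (mom2 m)
  have ce : Continuous fun z => Complex.exp (Complex.I / 2 * y z) := by fun_prop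
  have be : ∀ z : EuclideanSpace ℂ (Fin N), ‖z‖ ≤ 1 →
      ‖Complex.exp (Complex.I / 2 * y z)‖ ≤ Real.exp R := by
    intro z hz
    refine (Complex.norm_exp_le_exp_norm _).trans (Real.exp_le_exp.mpr ?_)
    rw [norm_mul]
    have := bdy z hz
    simp
    nlinarith [norm_nonneg (y z)]
  have exp2 := integral_exp_eq cx.aestronglyMeasurable ce.aestronglyMeasurable
      cx.aestronglyMeasurable ce.aestronglyMeasurable (h₁.mono bx) (h₁.mono be)
      (h₂.mono bx) (h₂.mono be) R0 (by positivity) (Complex.I / 2) exp1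
  convert exp2 using 3 with z z
  all_goals
    rw [← Complex.exp_add, real_inner_eq, Complex.re_eq_add_conj]
    congr 1
    simp only [hx, hy]
    ring

section sphere

lemma measurable_radial (N : ℕ) :
    Measurable (fun z : EuclideanSpace ℂ (Fin N) => ‖z‖⁻¹ • z) :=
  (measurable_norm.inv).smul measurable_id

instance sphereMeasure_finite (N : ℕ) : IsFiniteMeasure (sphereMeasure N) := by
  have : IsFiniteMeasure (ballMeasure N) := by
    unfold ballMeasure
    have h0 : (volume (Ball N))⁻¹ ≠ ⊤ := by
      rw [ENNReal.inv_ne_top]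
      exact (measure_ball_pos volume _ one_pos).ne'
    have : IsFiniteMeasure (volume.restrict (Ball N)) := ⟨by
      rw [Measure.restrict_apply_univ]
      exact measure_ball_lt_top⟩
    exact Measure.smul_finite _ h0
  unfold sphereMeasure
  infer_instance

lemma sphereMeasure_ae (k : ℕ) : ∀ᵐ z ∂(sphereMeasure (k + 1)), ‖z‖ = 1 := by
  unfold sphereMeasure
  have hms : MeasurableSet {z : EuclideanSpace ℂ (Fin (k + 1)) | ‖z‖ = 1} :=
    measurable_norm (measurableSet_singleton 1)
  rw [ae_map_iff (measurable_radial _).aemeasurable hms]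
  unfold ballMeasure
  apply Measure.ae_smul_measure
  apply ae_restrict_of_ae
  have : ∀ᵐ z : EuclideanSpace ℂ (Fin (k + 1)), z ≠ 0 := by
    rw [ae_iff]
    simp
  filter_upwards [this] with z hz
  rw [norm_smul, norm_inv, norm_norm]
  exact inv_mul_cancel₀ (norm_ne_zero_iff.mpr hz)

lemma sphere_restrict (k : ℕ) : (sphereMeasure (k + 1)).restrict (closedBall 0 1) =
    sphereMeasure (k + 1) :=
  Measure.restrict_eq_self_of_ae_mem ((sphereMeasure_ae k).mono fun z hz => by
    rw [mem_closedBall_zero_iff]; exact hz.le)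

lemma aesm_of_continuousOn {k : ℕ} {g : EuclideanSpace ℂ (Fin (k + 1)) → ℂ}
    (hg : ContinuousOn g (closedBall 0 1)) : AEStronglyMeasurable g (sphereMeasure (k + 1)) := by
  rw [← sphere_restrict]
  exact hg.aestronglyMeasurable isClosed_closedBall.measurableSet

lemma aem_of_continuousOn {k : ℕ}
    {g : EuclideanSpace ℂ (Fin (k + 1)) → EuclideanSpace ℂ (Fin (k + 1))}
    (hg : ContinuousOn g (closedBall 0 1)) : AEMeasurable g (sphereMeasure (k + 1)) := by
  rw [← sphere_restrict]
  exact hg.aemeasurable isClosed_closedBall.measurableSet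

lemma bounded_of_continuousOn {k : ℕ} {g : EuclideanSpace ℂ (Fin (k + 1)) → ℂ}
    (hg : ContinuousOn g (closedBall 0 1)) :
    ∃ M, ∀ z : EuclideanSpace ℂ (Fin (k + 1)), ‖z‖ ≤ 1 → ‖g z‖ ≤ M := by
  obtain ⟨M, hM⟩ := (isCompact_closedBall _ _).exists_bound_of_continuousOn hg
  exact ⟨M, fun z hz => hM z (by simpa using hz)⟩

lemma tendsto_dilate {k : ℕ} {b g : EuclideanSpace ℂ (Fin (k + 1)) → ℂ} {M : ℝ}
    (hb : AEStronglyMeasurable b (sphereMeasure (k + 1)))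
    (hM : ∀ᵐ z ∂(sphereMeasure (k + 1)), ‖b z‖ ≤ M) (hg : ContinuousOn g (closedBall 0 1)) :
    Tendsto (fun r : ℝ => ∫ z, b z * g (r • z) ∂(sphereMeasure (k + 1))) (𝓝[<] 1)
      (𝓝 (∫ z, b z * g z ∂(sphereMeasure (k + 1)))) := by
  obtain ⟨C, hC⟩ := bounded_of_continuousOn hg
  have hr : ∀ᶠ r : ℝ in 𝓝[<] 1, 0 < r ∧ r < 1 :=
    Ioo_mem_nhdsLT (show (0 : ℝ) < 1 by norm_num)
  have hin : ∀ r : ℝ, 0 < r ∧ r < 1 → ∀ z : EuclideanSpace ℂ (Fin (k + 1)), ‖z‖ ≤ 1 →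
      ‖r • z‖ ≤ 1 := by
    intro r hr z hz
    rw [norm_smul, Real.norm_of_nonneg hr.1.le]
    nlinarith [norm_nonneg z, hr.1, hr.2]
  refine tendsto_integral_filter_of_dominated_convergence (fun _ => M * C) ?_ ?_
    (integrable_const _) ?_
  · filter_upwards [hr] with r hr
    refine hb.mul (aesm_of_continuousOn ?_)
    refine hg.comp (by fun_prop) ?_
    intro z hz
    rw [mem_closedBall_zero_iff] at *
    exact hin r hr z hz
  · filter_upwards [hr] with r hr
    filter_upwards [hM, sphereMeasure_ae k] with z hz hz1
    rw [norm_mul]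
    have := hC _ (hin r hr z hz1.le)
    have := norm_nonneg (b z)
    gcongr
    linarith
  · filter_upwards [sphereMeasure_ae k] with z hz1
    refine Tendsto.const_mul _ ?_
    have hcz : ContinuousWithinAt g (closedBall 0 1) ((1 : ℝ) • z) :=
      hg _ (by simpa using hz1.le)
    have h1 : Tendsto (fun r : ℝ => r • z) (𝓝[<] 1) (𝓝[closedBall 0 1] ((1 : ℝ) • z)) := by
      rw [tendsto_nhdsWithin_iff]
      constructor
      · have : Continuous fun r : ℝ => r • z := by fun_prop
        exact (this.tendsto 1).mono_left nhdsWithin_le_nhds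
      · filter_upwards [hr] with r hr
        rw [mem_closedBall_zero_iff]
        exact hin r hr z hz1.le
    have := hcz.tendsto.comp h1
    simpa [Function.comp_def] using this

end sphere

section spaces

variable {k : ℕ} (S : BallFunctionSpace (k + 1) (k + 1 : ℕ) (sphereMeasure (k + 1)))

/-- The Szegő kernel. -/
def szego {k : ℕ} (w z : EuclideanSpace ℂ (Fin (k + 1))) : ℂ := ((1 - ⟪w, z⟫) ^ (k + 1))⁻¹

lemma eval_kernel_szego {w z : EuclideanSpace ℂ (Fin (k + 1))} (hw : w ∈ Ball (k + 1))
    (hz : z ∈ Ball (k + 1)) : S.eval (S.kernel w) z = szego w z := by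
  rw [S.eval_kernel w hw z hz, Complex.cpow_neg, szego]
  congr 1
  rw [Complex.ofReal_natCast, Complex.cpow_natCast]

lemma continuousOn_szego {w : EuclideanSpace ℂ (Fin (k + 1))} (hw : w ∈ Ball (k + 1)) :
    ContinuousOn (szego w) (closedBall 0 1) := by
  unfold szego
  refine ContinuousOn.inv₀ (by fun_prop) ?_
  intro z hz
  exact pow_ne_zero _ (one_sub_inner_ne_zero (by simpa using hw) (by simpa using hz))

variable {S}

lemma toeplitz_pairing {b : EuclideanSpace ℂ (Fin (k + 1)) → ℂ} {T : S.H →L[ℂ] S.H}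
    (hT : S.IsToeplitzOperator b T) {M : ℝ}
    (hb : AEStronglyMeasurable b (sphereMeasure (k + 1)))
    (hM : ∀ᵐ z ∂(sphereMeasure (k + 1)), ‖b z‖ ≤ M) {u v : S.H}
    {U V : EuclideanSpace ℂ (Fin (k + 1)) → ℂ}
    (hU : ContinuousOn U (closedBall 0 1)) (hV : ContinuousOn V (closedBall 0 1))
    (hu : ∀ z ∈ Ball (k + 1), S.eval u z = U z) (hv : ∀ z ∈ Ball (k + 1), S.eval v z = V z) :
    ⟪v, T u⟫ = ∫ z, (starRingEnd ℂ) (V z) * b z * U z ∂(sphereMeasure (k + 1)) := by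
  have h1 := tendsto_dilate hb hM
    (g := fun z => (starRingEnd ℂ) (V z) * U z)
    ((Complex.continuous_conj.comp_continuousOn hV).mul hU)
  have h2 := hT u v
  have hr : ∀ᶠ r : ℝ in 𝓝[<] 1, 0 < r ∧ r < 1 :=
    Ioo_mem_nhdsLT (show (0 : ℝ) < 1 by norm_num)
  have h3 : Tendsto (fun r : ℝ => ∫ z, (starRingEnd ℂ) (S.eval v (r • z)) * b z *
      S.eval u (r • z) ∂(sphereMeasure (k + 1))) (𝓝[<] (1 : ℝ))
      (𝓝 (∫ z, b z * ((starRingEnd ℂ) (V z) * U z) ∂(sphereMeasure (k + 1)))) := by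
    refine h1.congr' ?_
    filter_upwards [hr] with r hr
    refine integral_congr_ae ?_
    filter_upwards [sphereMeasure_ae k] with z hz
    have hin : r • z ∈ Ball (k + 1) := by
      rw [mem_ball_zero_iff, norm_smul, Real.norm_of_nonneg hr.1.le, hz, mul_one]
      exact hr.2
    rw [hu _ hin, hv _ hin]
    ring
  rw [tendsto_nhds_unique h2 h3]
  congr 1
  ext z
  ring

lemma inner_pairing {u v : S.H} {U V : EuclideanSpace ℂ (Fin (k + 1)) → ℂ}
    (hU : ContinuousOn U (closedBall 0 1)) (hV : ContinuousOn V (closedBall 0 1))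
    (hu : ∀ z ∈ Ball (k + 1), S.eval u z = U z) (hv : ∀ z ∈ Ball (k + 1), S.eval v z = V z) :
    ⟪v, u⟫ = ∫ z, (starRingEnd ℂ) (V z) * U z ∂(sphereMeasure (k + 1)) := by
  have hT : S.IsToeplitzOperator (fun _ => 1) (ContinuousLinearMap.id ℂ S.H) := by
    intro u v
    simpa using S.inner_eq v u
  have := toeplitz_pairing hT (M := 1) aestronglyMeasurable_const (by simp) hU hV hu hv
  simpa using this

end spaces

section general

variable {N : ℕ} {t : ℝ} {μ : Measure (EuclideanSpace ℂ (Fin N))} {S : BallFunctionSpace N t μ}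

lemma ext_kernel {g h : S.H} (H : ∀ w ∈ Ball N, ⟪S.kernel w, g⟫ = ⟪S.kernel w, h⟫) : g = h := by
  apply S.eval_injective
  intro z hz
  rw [← S.reproducing g z hz, ← S.reproducing h z hz, H z hz]

lemma op_ext_kernel {A B : S.H →L[ℂ] S.H} (H : ∀ w ∈ Ball N, ∀ u ∈ Ball N,
    ⟪S.kernel w, A (S.kernel u)⟫ = ⟪S.kernel w, B (S.kernel u)⟫) : A = B := by
  ext g
  apply ext_kernel
  intro w hw
  rw [← ContinuousLinearMap.adjoint_inner_left, ← ContinuousLinearMap.adjoint_inner_left]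
  congr 1
  apply ext_kernel
  intro u hu
  rw [ContinuousLinearMap.adjoint_inner_right, ContinuousLinearMap.adjoint_inner_right,
    ← inner_conj_symm, H w hw u hu, inner_conj_symm]

end general

section main

variable {k : ℕ}

/-- The Poisson–Szegő density. -/
def poissonDensity (a z : EuclideanSpace ℂ (Fin (k + 1))) : NNReal :=
  Real.toNNReal ((moebS a ^ 2 / ‖1 - ⟪a, z⟫‖ ^ 2) ^ (k + 1))

lemma measurable_poissonDensity (a : EuclideanSpace ℂ (Fin (k + 1))) :
    Measurable (poissonDensity a) := by
  unfold poissonDensity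
  have h1 : Measurable fun z : EuclideanSpace ℂ (Fin (k + 1)) => ‖1 - ⟪a, z⟫‖ ^ 2 := by
    have : Continuous fun z : EuclideanSpace ℂ (Fin (k + 1)) => ‖1 - ⟪a, z⟫‖ ^ 2 := by fun_prop
    exact this.measurable
  exact ((h1.const_div _).pow_const _).real_toNNReal

lemma coe_poissonDensity (a z : EuclideanSpace ℂ (Fin (k + 1))) :
    ((poissonDensity a z : ℝ) : ℂ) = (moebS a : ℂ) ^ (2 * (k + 1)) /
      ((1 - ⟪a, z⟫) ^ (k + 1) * (starRingEnd ℂ) ((1 - ⟪a, z⟫) ^ (k + 1))) := by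
  unfold poissonDensity
  rw [Real.coe_toNNReal _ (by positivity), map_pow, ← mul_pow, Complex.mul_conj']
  push_cast
  rw [div_pow, pow_mul]

lemma poissonDensity_bounded {a : EuclideanSpace ℂ (Fin (k + 1))} (ha : ‖a‖ < 1) :
    ∃ M : NNReal, ∀ z : EuclideanSpace ℂ (Fin (k + 1)), ‖z‖ ≤ 1 → poissonDensity a z ≤ M := by
  refine ⟨Real.toNNReal ((moebS a ^ 2 / (1 - ‖a‖) ^ 2) ^ (k + 1)), fun z hz => ?_⟩
  unfold poissonDensity
  apply Real.toNNReal_le_toNNReal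
  have h1 : 1 - ‖a‖ ≤ ‖1 - ⟪a, z⟫‖ := by
    have h2 := norm_sub_norm_le (1 : ℂ) ⟪a, z⟫
    have h3 := norm_inner_le_norm (𝕜 := ℂ) a z
    rw [norm_one] at h2
    nlinarith [norm_nonneg a, norm_nonneg z]
  have : 0 < 1 - ‖a‖ := by linarith
  gcongr

variable {φ : EuclideanSpace ℂ (Fin (k + 1)) → EuclideanSpace ℂ (Fin (k + 1))}
  {a : EuclideanSpace ℂ (Fin (k + 1))}

/-- The fundamental identity up to the boundary. -/
lemma automorphism_identity_closed (hφ : IsBallAutomorphism (k + 1) φ)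
    (hφc : ContinuousOn φ (closedBall 0 1)) (ha : ‖a‖ < 1) (hφa : φ a = 0)
    {w z : EuclideanSpace ℂ (Fin (k + 1))} (hw : ‖w‖ < 1) (hz : ‖z‖ ≤ 1) :
    (1 - ⟪φ w, φ z⟫) * ((1 - ⟪w, a⟫) * (1 - ⟪a, z⟫)) = (moebS a : ℂ) ^ 2 * (1 - ⟪w, z⟫) := by
  obtain ⟨dφ, mφ, ψ, dψ, mψ, hl, -⟩ := hφ
  have hcl : closure (ball (0 : EuclideanSpace ℂ (Fin (k + 1))) 1) = closedBall 0 1 :=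
    closure_ball 0 one_ne_zero
  have eq : EqOn (fun z => (1 - ⟪φ w, φ z⟫) * ((1 - ⟪w, a⟫) * (1 - ⟪a, z⟫)))
      (fun z => (moebS a : ℂ) ^ 2 * (1 - ⟪w, z⟫)) (ball 0 1) := fun z hz =>
    automorphism_identity dφ dψ mφ mψ hl ha hφa hw (by simpa using hz)
  have eq' : EqOn (fun z => (1 - ⟪φ w, φ z⟫) * ((1 - ⟪w, a⟫) * (1 - ⟪a, z⟫)))
      (fun z => (moebS a : ℂ) ^ 2 * (1 - ⟪w, z⟫)) (closedBall 0 1) := by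
    refine eq.of_subset_closure ?_ ?_ ball_subset_closedBall hcl.ge
    · have : ContinuousOn (fun z => ⟪φ w, φ z⟫) (closedBall 0 1) :=
        continuousOn_const.inner hφc
      refine (continuousOn_const.sub this).mul ?_
      fun_prop
    · fun_prop
  exact eq' (by simpa using hz)

/-- The multiplicative constant in the transformation of the kernel. -/
def kerConst (a w : EuclideanSpace ℂ (Fin (k + 1))) : ℂ :=
  ((1 - ⟪w, a⟫) / (moebS a : ℂ) ^ 2) ^ (k + 1)

lemma kerConst_ne {w : EuclideanSpace ℂ (Fin (k + 1))} (ha : ‖a‖ < 1) (hw : ‖w‖ < 1) :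
    kerConst a w ≠ 0 := by
  have hs : (moebS a : ℂ) ≠ 0 := by exact_mod_cast (moebS_pos ha).ne'
  exact pow_ne_zero _ (div_ne_zero (one_sub_inner_ne_zero hw ha.le) (pow_ne_zero _ hs))

lemma conj_kerConst {w : EuclideanSpace ℂ (Fin (k + 1))} (ha : ‖a‖ < 1) :
    (starRingEnd ℂ) (kerConst a w) * (moebS a : ℂ) ^ (2 * (k + 1)) = (1 - ⟪a, w⟫) ^ (k + 1) := by
  have hs : (moebS a : ℂ) ≠ 0 := by exact_mod_cast (moebS_pos ha).ne'
  unfold kerConst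
  rw [pow_mul, map_pow, ← mul_pow]
  congr 1
  simp only [map_div₀, map_sub, map_one, map_pow, Complex.conj_ofReal, inner_conj_symm]
  field_simp

lemma szego_comp (hφ : IsBallAutomorphism (k + 1) φ)
    (hφc : ContinuousOn φ (closedBall 0 1)) (ha : ‖a‖ < 1) (hφa : φ a = 0)
    {w z : EuclideanSpace ℂ (Fin (k + 1))} (hw : ‖w‖ < 1) (hz : ‖z‖ ≤ 1) :
    szego (φ w) (φ z) = kerConst a w * ((1 - ⟪a, z⟫) ^ (k + 1) * szego w z) := by
  have h := automorphism_identity_closed hφ hφc ha hφa hw hz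
  have hs : (moebS a : ℂ) ≠ 0 := by exact_mod_cast (moebS_pos ha).ne'
  have h1 := one_sub_inner_ne_zero hw ha.le
  have h2 := one_sub_inner_ne_zero ha hz
  have h3 := one_sub_inner_ne_zero hw hz
  have h4 : 1 - ⟪φ w, φ z⟫ = (moebS a : ℂ) ^ 2 * (1 - ⟪w, z⟫) / ((1 - ⟪w, a⟫) * (1 - ⟪a, z⟫)) := by
    rw [eq_div_iff (mul_ne_zero h1 h2), h]
  unfold szego kerConst
  rw [h4, ← inv_pow, ← inv_pow, ← mul_pow, ← mul_pow]
  congr 1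
  field_simp

/-- Change of variables on the sphere. -/
lemma change_of_variables
    (S : BallFunctionSpace (k + 1) (k + 1 : ℕ) (sphereMeasure (k + 1)))
    (hφ : IsBallAutomorphism (k + 1) φ)
    (hφc : ContinuousOn φ (closedBall 0 1)) (hφs : MapsTo φ (sphere 0 1) (sphere 0 1))
    (ha : ‖a‖ < 1) (hφa : φ a = 0) :
    ((sphereMeasure (k + 1)).withDensity (fun z => (poissonDensity a z : ENNReal))).map φ =
      sphereMeasure (k + 1) := by
  set σ := sphereMeasure (k + 1) with hσ
  set ρ := σ.withDensity (fun z => (poissonDensity a z : ENNReal)) with hρ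
  have hac : ρ ≪ σ := withDensity_absolutelyContinuous _ _
  have hφm : AEMeasurable φ ρ := (aem_of_continuousOn hφc).mono_ac hac
  have fin : IsFiniteMeasure ρ := by
    obtain ⟨M, hM⟩ := poissonDensity_bounded ha
    apply isFiniteMeasure_withDensity
    refine ne_of_lt (lt_of_le_of_lt (b := ∫⁻ z, (M : ENNReal) ∂σ) (lintegral_mono_ae ?_) ?_)
    · filter_upwards [sphereMeasure_ae k] with z hz
      exact_mod_cast hM z hz.le
    · rw [lintegral_const]
      exact ENNReal.mul_lt_top ENNReal.coe_lt_top (measure_lt_top _ _)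
  have finmap : IsFiniteMeasure (ρ.map φ) := inferInstance
  have hν : ∀ᵐ z ∂(ρ.map φ), ‖z‖ ≤ 1 := by
    have hms : MeasurableSet {z : EuclideanSpace ℂ (Fin (k + 1)) | ‖z‖ ≤ 1} :=
      measurable_norm measurableSet_Iic
    rw [ae_map_iff hφm hms]
    apply hac.ae_le
    filter_upwards [sphereMeasure_ae k] with z hz
    have := hφs (by simpa using hz : z ∈ sphere (0 : EuclideanSpace ℂ (Fin (k + 1))) 1)
    rw [mem_sphere_zero_iff_norm] at this
    exact this.le
  refine measure_ext_kernels (k := k) hν ((sphereMeasure_ae k).mono fun z hz => hz.le) ?_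
  intro u v hu hv
  obtain ⟨-, mφ, ψ, -, mψ, -, hr⟩ := id hφ
  have hub : u ∈ Ball (k + 1) := by simpa using hu
  have hvb : v ∈ Ball (k + 1) := by simpa using hv
  obtain ⟨u', hu', rfl⟩ : ∃ u' ∈ Ball (k + 1), φ u' = u := ⟨ψ u, mψ hub, hr u hub⟩
  obtain ⟨v', hv', rfl⟩ : ∃ v' ∈ Ball (k + 1), φ v' = v := ⟨ψ v, mψ hvb, hr v hvb⟩
  have nu' : ‖u'‖ < 1 := by simpa using hu'
  have nv' : ‖v'‖ < 1 := by simpa using hv'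
  have pair : ∀ p q : EuclideanSpace ℂ (Fin (k + 1)), p ∈ Ball (k + 1) → q ∈ Ball (k + 1) →
      ∫ z, szego p z * (starRingEnd ℂ) (szego q z) ∂σ = szego p q := by
    intro p q hp hq
    rw [← eval_kernel_szego S hp hq, ← S.reproducing _ q hq,
      inner_pairing (continuousOn_szego hp) (continuousOn_szego hq)
        (fun z hz => eval_kernel_szego S hp hz) (fun z hz => eval_kernel_szego S hq hz)]
    simp only [mul_comm, hσ]
  change ∫ z, szego (φ u') z * (starRingEnd ℂ) (szego (φ v') z) ∂(ρ.map φ) =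
    ∫ z, szego (φ u') z * (starRingEnd ℂ) (szego (φ v') z) ∂σ
  rw [pair _ _ hub hvb]
  have sm : ∀ p : EuclideanSpace ℂ (Fin (k + 1)), Measurable (szego p) := by
    intro p
    unfold szego
    have : Continuous fun z : EuclideanSpace ℂ (Fin (k + 1)) => (1 - ⟪p, z⟫) ^ (k + 1) := by
      fun_prop
    exact this.measurable.inv
  have mm : Measurable fun z => szego (φ u') z * (starRingEnd ℂ) (szego (φ v') z) :=
    (sm _).mul (Complex.continuous_conj.measurable.comp (sm _))
  rw [integral_map hφm mm.aestronglyMeasurable, hρ,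
    integral_withDensity_eq_integral_smul (measurable_poissonDensity a)]
  have e : ∫ z, poissonDensity a z • (szego (φ u') (φ z) * (starRingEnd ℂ) (szego (φ v') (φ z))) ∂σ
      = ∫ z, (kerConst a u' * (1 - ⟪a, v'⟫) ^ (k + 1)) *
        (szego u' z * (starRingEnd ℂ) (szego v' z)) ∂σ := by
    refine integral_congr_ae ?_
    filter_upwards [sphereMeasure_ae k] with z hz
    rw [szego_comp hφ hφc ha hφa nu' hz.le, szego_comp hφ hφc ha hφa nv' hz.le,
      NNReal.smul_def, Complex.real_smul, coe_poissonDensity, ← conj_kerConst (w := v') ha, map_mul, map_mul]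
    have h2 : (1 - ⟪a, z⟫) ^ (k + 1) ≠ 0 := pow_ne_zero _ (one_sub_inner_ne_zero ha hz.le)
    have h3 : (starRingEnd ℂ) ((1 - ⟪a, z⟫) ^ (k + 1)) ≠ 0 := by
      rwa [Ne, map_eq_zero]
    generalize (1 - ⟪a, z⟫) ^ (k + 1) = D at h2 h3 ⊢
    generalize (starRingEnd ℂ) D = D' at h3 ⊢
    field_simp
  rw [e, integral_const_mul, pair _ _ hu' hv', szego_comp hφ hφc ha hφa nu' nv'.le]
  ring

lemma integral_change
    (S : BallFunctionSpace (k + 1) (k + 1 : ℕ) (sphereMeasure (k + 1)))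
    (hφ : IsBallAutomorphism (k + 1) φ)
    (hφc : ContinuousOn φ (closedBall 0 1)) (hφs : MapsTo φ (sphere 0 1) (sphere 0 1))
    (ha : ‖a‖ < 1) (hφa : φ a = 0) {F : EuclideanSpace ℂ (Fin (k + 1)) → ℂ}
    (hF : AEStronglyMeasurable F (sphereMeasure (k + 1))) :
    ∫ z, F z ∂(sphereMeasure (k + 1)) =
      ∫ z, (poissonDensity a z : ℂ) * F (φ z) ∂(sphereMeasure (k + 1)) := by
  have h := change_of_variables S hφ hφc hφs ha hφa
  conv_lhs => rw [← h]
  have hφm := (aem_of_continuousOn hφc).mono_ac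
    (withDensity_absolutelyContinuous (sphereMeasure (k + 1))
      (fun z => (poissonDensity a z : ENNReal)))
  rw [integral_map hφm (by rwa [h]),
    integral_withDensity_eq_integral_smul (measurable_poissonDensity a)]
  rfl

theorem main_succ
    (S : BallFunctionSpace (k + 1) (k + 1 : ℕ) (sphereMeasure (k + 1)))
    (hφ : IsBallAutomorphism (k + 1) φ)
    (hφc : ContinuousOn φ (Metric.closedBall 0 1))
    (hφs : Set.MapsTo φ (Metric.sphere 0 1) (Metric.sphere 0 1))
    (ha : a ∈ Ball (k + 1)) (hφa : φ a = 0)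
    (f : EuclideanSpace ℂ (Fin (k + 1)) → ℂ)
    (hf : Measurable f)
    (hfb : ∃ M : ℝ, ∀ z ∈ Metric.sphere (0 : EuclideanSpace ℂ (Fin (k + 1))) 1, ‖f z‖ ≤ M)
    (Cφ : S.H →L[ℂ] S.H) (hCφ : S.IsCompositionOperator φ Cφ)
    (Tf Tfφ TK TKinv : S.H →L[ℂ] S.H)
    (hTf : S.IsToeplitzOperator f Tf)
    (hTfφ : S.IsToeplitzOperator (f ∘ φ) Tfφ)
    (hTK : S.IsToeplitzOperator (fun z => ((1 - ⟪a, z⟫) ^ (k + 1))⁻¹) TK)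
    (hTKinv : S.IsToeplitzOperator (fun z => (1 - ⟪a, z⟫) ^ (k + 1)) TKinv) :
    Cφ.comp Tf = TKinv.comp (Tfφ.comp (TK.comp Cφ)) := by
  have na : ‖a‖ < 1 := by simpa using ha
  obtain ⟨-, mφ, ψ, -, mψ, -, hr⟩ := id hφ
  obtain ⟨M, hM⟩ := hfb
  have fb : ∀ᵐ z ∂(sphereMeasure (k + 1)), ‖f z‖ ≤ M :=
    (sphereMeasure_ae k).mono fun z hz => hM z (by simpa using hz)
  have fφb : ∀ᵐ z ∂(sphereMeasure (k + 1)), ‖(f ∘ φ) z‖ ≤ M :=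
    (sphereMeasure_ae k).mono fun z hz => hM _ (hφs (by simpa using hz))
  have fm : AEStronglyMeasurable f (sphereMeasure (k + 1)) := hf.aestronglyMeasurable
  have fφm : AEStronglyMeasurable (f ∘ φ) (sphereMeasure (k + 1)) :=
    (hf.comp_aemeasurable (aem_of_continuousOn hφc)).aestronglyMeasurable
  have cD : ContinuousOn (fun z => (1 - ⟪a, z⟫) ^ (k + 1))
      (closedBall (0 : EuclideanSpace ℂ (Fin (k + 1))) 1) := by fun_prop
  have cK : ContinuousOn (fun z => ((1 - ⟪a, z⟫) ^ (k + 1))⁻¹)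
      (closedBall (0 : EuclideanSpace ℂ (Fin (k + 1))) 1) := continuousOn_szego ha
  obtain ⟨MD, hMD⟩ := bounded_of_continuousOn cD
  obtain ⟨MK, hMK⟩ := bounded_of_continuousOn cK
  -- the function `Cφ K_{φ u}`
  have evg : ∀ u ∈ Ball (k + 1), ∀ z ∈ Ball (k + 1), S.eval (Cφ (S.kernel (φ u))) z =
      kerConst a u * ((1 - ⟪a, z⟫) ^ (k + 1) * szego u z) := by
    intro u hu z hz
    rw [hCφ _ z hz, eval_kernel_szego S (mφ hu) (mφ hz)]
    exact szego_comp hφ hφc na hφa (by simpa using hu) (mem_ball_zero_iff.mp hz).le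
  have cg : ∀ u ∈ Ball (k + 1), ContinuousOn
      (fun z => kerConst a u * ((1 - ⟪a, z⟫) ^ (k + 1) * szego u z)) (closedBall 0 1) :=
    fun u hu => continuousOn_const.mul (cD.mul (continuousOn_szego hu))
  have TKg : ∀ u ∈ Ball (k + 1), TK (Cφ (S.kernel (φ u))) = kerConst a u • S.kernel u := by
    intro u hu
    apply ext_kernel
    intro w hw
    rw [toeplitz_pairing hTK (aesm_of_continuousOn cK)
      ((sphereMeasure_ae k).mono fun z hz => hMK z hz.le) (cg u hu) (continuousOn_szego hw)
      (evg u hu) (fun z hz => eval_kernel_szego S hw hz), inner_smul_right,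
      inner_pairing (continuousOn_szego hu) (continuousOn_szego hw)
      (fun z hz => eval_kernel_szego S hu hz) (fun z hz => eval_kernel_szego S hw hz),
      ← integral_const_mul]
    refine integral_congr_ae ?_
    filter_upwards [sphereMeasure_ae k] with z hz
    have h2 : (1 - ⟪a, z⟫) ^ (k + 1) ≠ 0 := pow_ne_zero _ (one_sub_inner_ne_zero na hz.le)
    field_simp
  have TKi : ∀ w ∈ Ball (k + 1), ∀ u ∈ Ball (k + 1), ⟪S.kernel w, TKinv (S.kernel u)⟫ =
      (1 - ⟪a, w⟫) ^ (k + 1) * szego u w := by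
    intro w hw u hu
    have hne := kerConst_ne (k := k) na (by simpa using hu : ‖u‖ < 1)
    have h1 := S.reproducing (Cφ (S.kernel (φ u))) w hw
    rw [evg u hu w hw, inner_pairing (cg u hu) (continuousOn_szego hw) (evg u hu)
      (fun z hz => eval_kernel_szego S hw hz)] at h1
    rw [toeplitz_pairing hTKinv (aesm_of_continuousOn cD)
      ((sphereMeasure_ae k).mono fun z hz => hMD z hz.le) (continuousOn_szego hu)
      (continuousOn_szego hw) (fun z hz => eval_kernel_szego S hu hz)
      (fun z hz => eval_kernel_szego S hw hz)]
    apply mul_left_cancel₀ hne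
    rw [← h1, ← integral_const_mul]
    congr 1
    ext z
    ring
  have TKadj : ∀ w ∈ Ball (k + 1), ∀ g : S.H, ⟪S.kernel w, TKinv g⟫ =
      (1 - ⟪a, w⟫) ^ (k + 1) * ⟪S.kernel w, g⟫ := by
    intro w hw g
    have : ContinuousLinearMap.adjoint TKinv (S.kernel w) =
        (starRingEnd ℂ) ((1 - ⟪a, w⟫) ^ (k + 1)) • S.kernel w := by
      apply ext_kernel
      intro u hu
      rw [ContinuousLinearMap.adjoint_inner_right, ← inner_conj_symm, TKi w hw u hu,
        inner_smul_right, map_mul, ← inner_conj_symm (S.kernel u), S.reproducing _ w hw,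
        eval_kernel_szego S hu hw]
    rw [← ContinuousLinearMap.adjoint_inner_left, this, inner_smul_left, Complex.conj_conj]
  apply op_ext_kernel
  intro w hw u hu
  obtain ⟨u', hu', rfl⟩ : ∃ u' ∈ Ball (k + 1), φ u' = u := ⟨ψ u, mψ hu, hr u hu⟩
  simp only [ContinuousLinearMap.comp_apply]
  rw [TKg u' hu', map_smul, TKadj w hw, inner_smul_right]
  rw [S.reproducing _ w hw, hCφ _ w hw, ← S.reproducing _ _ (mφ hw)]
  rw [toeplitz_pairing hTf fm fb (continuousOn_szego hu) (continuousOn_szego (mφ hw))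
    (fun z hz => eval_kernel_szego S hu hz) (fun z hz => eval_kernel_szego S (mφ hw) hz)]
  rw [toeplitz_pairing hTfφ fφm fφb (continuousOn_szego hu') (continuousOn_szego hw)
    (fun z hz => eval_kernel_szego S hu' hz) (fun z hz => eval_kernel_szego S hw hz)]
  rw [integral_change S hφ hφc hφs na hφa
    (F := fun z => (starRingEnd ℂ) (szego (φ w) z) * f z * szego (φ u') z) (((aesm_of_continuousOn
    (Complex.continuous_conj.comp_continuousOn (continuousOn_szego (mφ hw)))).mul fm).mul
    (aesm_of_continuousOn (continuousOn_szego hu)))]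
  rw [← integral_const_mul, ← integral_const_mul]
  refine integral_congr_ae ?_
  filter_upwards [sphereMeasure_ae k] with z hz
  have e1 := szego_comp hφ hφc na hφa (by simpa using hu' : ‖u'‖ < 1) hz.le
  have e2 := szego_comp hφ hφc na hφa (by simpa using hw : ‖w‖ < 1) hz.le
  simp only [Function.comp]
  have e3 : ((poissonDensity a z : NNReal) : ℂ) = ((poissonDensity a z : ℝ) : ℂ) := rfl
  rw [e1, e2, e3, coe_poissonDensity, ← conj_kerConst (w := w) na, map_mul, map_mul]
  have h2 : (1 - ⟪a, z⟫) ^ (k + 1) ≠ 0 := pow_ne_zero _ (one_sub_inner_ne_zero na hz.le)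
  have h3 : (starRingEnd ℂ) ((1 - ⟪a, z⟫) ^ (k + 1)) ≠ 0 := by
    rwa [Ne, map_eq_zero]
  generalize (1 - ⟪a, z⟫) ^ (k + 1) = D at h2 h3 ⊢
  generalize (starRingEnd ℂ) D = D' at h3 ⊢
  field_simp

end main

/-- Let `φ` be an automorphism of `B_N`, `a = φ⁻¹(0)`, and `f` a bounded
measurable function on `∂B_N`.  On the Hardy space `H²(B_N)` one has the operator identity
`C_φ T_f = T_{1/K_a} T_{f∘φ} T_{K_a} C_φ`, where `K_a(z) = (1 - ⟨z,a⟩)^{-N}` is the Hardy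
reproducing kernel at `a`. -/
theorem composition_toeplitz_conjugation_hardy
    (N : ℕ) (S : BallFunctionSpace N N (sphereMeasure N))
    (φ : EuclideanSpace ℂ (Fin N) → EuclideanSpace ℂ (Fin N))
    (hφ : IsBallAutomorphism N φ)
    (hφc : ContinuousOn φ (Metric.closedBall 0 1))
    (hφs : Set.MapsTo φ (Metric.sphere 0 1) (Metric.sphere 0 1))
    (a : EuclideanSpace ℂ (Fin N)) (ha : a ∈ Ball N) (hφa : φ a = 0)
    (f : EuclideanSpace ℂ (Fin N) → ℂ)
    (hf : Measurable f) (hfb : ∃ M : ℝ, ∀ z ∈ Metric.sphere (0 : EuclideanSpace ℂ (Fin N)) 1, ‖f z‖ ≤ M)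
    (Cφ : S.H →L[ℂ] S.H) (hCφ : S.IsCompositionOperator φ Cφ)
    (Tf Tfφ TK TKinv : S.H →L[ℂ] S.H)
    (hTf : S.IsToeplitzOperator f Tf)
    (hTfφ : S.IsToeplitzOperator (f ∘ φ) Tfφ)
    (hTK : S.IsToeplitzOperator (fun z => (1 - ⟪a, z⟫) ^ (-(N : ℂ))) TK)
    (hTKinv : S.IsToeplitzOperator (fun z => (1 - ⟪a, z⟫) ^ (N : ℂ)) TKinv) :
    Cφ.comp Tf = TKinv.comp (Tfφ.comp (TK.comp Cφ)) := by
  rcases N with _ | k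
  · have hsub : ∀ x y : EuclideanSpace ℂ (Fin 0), x = y := fun x y => Subsingleton.elim x y
    have idop : ∀ T : S.H →L[ℂ] S.H, S.IsToeplitzOperator (fun _ => 1) T → ∀ g, T g = g := by
      intro T hT g
      apply ext_inner_left ℂ
      intro v
      have h1 := hT g v
      simp only [mul_one] at h1
      exact tendsto_nhds_unique h1 (S.inner_eq v g)
    have hK1 := idop TK (by simpa using hTK)
    have hK2 := idop TKinv (by simpa using hTKinv)
    have hC : ∀ g, Cφ g = g := by
      intro g
      apply S.eval_injective
      intro z hz
      rw [hCφ g z hz, hsub (φ z) z]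
    have hfφ : f ∘ φ = f := funext fun z => by rw [Function.comp, hsub (φ z) z]
    rw [hfφ] at hTfφ
    ext g
    simp only [ContinuousLinearMap.comp_apply, hK1, hK2, hC]
    apply ext_inner_left ℂ
    intro v
    exact tendsto_nhds_unique (hTf g v) (hTfφ g v)
  · refine main_succ S hφ hφc hφs ha hφa f hf hfb Cφ hCφ Tf Tfφ TK TKinv hTf hTfφ ?_ ?_
    · simpa only [Complex.cpow_neg, Complex.cpow_natCast] using hTK
    · simpa only [Complex.cpow_natCast] using hTKinv
end
end
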